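/- Riemann Hypothesis for ξ^{G₂/P_long}: if s is a complex number not lying in the exceptional set S₁ = {−1, 0, 1/3, 1/2, 2/3, 1, 2} and ξ^{G₂/P_long}(s) = 0, then Re(s) = 1/2. -/

import Mathlib

open Complex

noncomputable def xiG2Plong (s : ℂ) : ℂ :=
  completedRiemannZeta 2 * completedRiemannZeta (s + 1) * completedRiemannZeta (2 * s) *
      completedRiemannZeta (3 * s) / (s - 2)
  - completedRiemannZeta 2 * completedRiemannZeta (s - 1) * completedRiemannZeta (2 * s - 1) *
      completedRiemannZeta (3 * s - 2) / (s + 1)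
  - completedRiemannZeta (s + 1) * completedRiemannZeta (2 * s) * completedRiemannZeta (3 * s) /
      (2 * s - 2)
  + completedRiemannZeta (s - 1) * completedRiemannZeta (2 * s - 1) *
      completedRiemannZeta (3 * s - 2) / (2 * s)
  - completedRiemannZeta s * completedRiemannZeta (2 * s) * completedRiemannZeta (3 * s - 1) /
      (3 * s * (2 * s - 2))
  - completedRiemannZeta s * completedRiemannZeta (2 * s - 1) * completedRiemannZeta (3 * s - 2) /
      ((3 * s - 1) * (s - 2))
  - completedRiemannZeta s * completedRiemannZeta (2 * s - 1) * completedRiemannZeta (3 * s - 1) /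
      ((3 * s - 3) * (2 * s))
  - completedRiemannZeta s * completedRiemannZeta (2 * s) * completedRiemannZeta (3 * s) /
      ((3 * s - 2) * (s + 1))

def S1 : Set ℂ := {-1, 0, 1/3, 1/2, 2/3, 1, 2}

open Complex
namespace G2
open MeasureTheory Set Filter Topology

noncomputable def W (x : ℝ) : ℝ := HurwitzZeta.cosKernel 0 x - 1

lemma W_hasSum {x : ℝ} (hx : 0 < x) :
    HasSum (fun n : ℕ ↦ 2 * Real.exp (-Real.pi * (n + 1) ^ 2 * x)) (W x) := by
  have h := HurwitzZeta.hasSum_nat_cosKernel₀ 0 hx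
  simpa [W] using h

lemma W_bounds {x : ℝ} (hx : 1 ≤ x) :
    2 * Real.exp (-Real.pi * x) ≤ W x ∧ W x ≤ 2 * Real.exp (-Real.pi * x)
      + 4 * Real.exp (-(4 * Real.pi) * x) := by
  have h := W_hasSum (by linarith : (0:ℝ) < x)
  have h1 := (hasSum_nat_add_iff' 1).mpr h
  simp only [Finset.range_one, Finset.sum_singleton, Nat.cast_add, Nat.cast_one, Nat.cast_zero] at h1
  have e0 : (2:ℝ) * Real.exp (-Real.pi * (0 + 1) ^ 2 * x) = 2 * Real.exp (-Real.pi * x) := by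
    norm_num
  rw [e0] at h1
  have hpi := Real.pi_gt_three
  constructor
  · have := h1.nonneg (fun n => by positivity)
    linarith
  · have hq : Real.exp (-(5 * Real.pi * x)) ≤ 1 / 2 := by
      have : (2:ℝ) ≤ Real.exp (5 * Real.pi * x) := by
        have := Real.add_one_le_exp (5 * Real.pi * x)
        nlinarith
      rw [Real.exp_neg, one_div]
      exact inv_anti₀ (by norm_num) this
    have hg := (hasSum_geometric_of_lt_one (Real.exp_pos _).le
      (lt_of_le_of_lt hq (by norm_num))).mul_left (2 * Real.exp (-(4 * Real.pi) * x))
    have hle := hasSum_le (fun n => ?_) h1 hg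
    · have : (1 - Real.exp (-(5 * Real.pi * x)))⁻¹ ≤ 2 := by
        rw [inv_le_comm₀ (by linarith) (by norm_num)]; linarith
      have h4 := Real.exp_pos (-(4 * Real.pi) * x)
      nlinarith
    · rw [← Real.exp_nat_mul, mul_assoc (2:ℝ) (Real.exp _) (Real.exp _), ← Real.exp_add]
      gcongr
      have : (0:ℝ) ≤ (n:ℝ)^2 - n := by
        rcases Nat.eq_zero_or_pos n with h | h
        · simp [h]
        · have : (1:ℝ) ≤ n := by exact_mod_cast h
          nlinarith
      nlinarith [mul_nonneg (mul_nonneg Real.pi_pos.le (by linarith : (0:ℝ) ≤ x)) this]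

lemma W_nonneg {x : ℝ} (hx : 1 ≤ x) : 0 ≤ W x :=
  le_trans (by positivity) (W_bounds hx).1

lemma W_le {x : ℝ} (hx : 1 ≤ x) : W x ≤ 6 * Real.exp (-Real.pi * x) := by
  have h := (W_bounds hx).2
  have : Real.exp (-(4 * Real.pi) * x) ≤ Real.exp (-Real.pi * x) := by
    apply Real.exp_le_exp.mpr; nlinarith [Real.pi_pos]
  linarith

lemma W_cont : ContinuousOn W (Ioi 0) :=
  (HurwitzZeta.continuousOn_cosKernel 0).sub continuousOn_const

/-- basic integrability -/
lemma int_exp_rpow {b : ℝ} (hb : 0 < b) (c : ℝ) :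
    IntegrableOn (fun x : ℝ => Real.exp (-b * x) * x ^ c) (Ioi 1) := by
  apply integrable_of_isBigO_exp_neg (b := b / 2) (by linarith)
  · apply ContinuousOn.mul (by fun_prop)
    intro x hx
    exact (Real.continuousAt_rpow_const x c (Or.inl (by have := mem_Ici.mp hx; linarith))).continuousWithinAt
  · have := (isLittleO_rpow_exp_pos_mul_atTop c (by linarith : (0:ℝ) < b / 2)).isBigO
    have h2 := (Asymptotics.isBigO_refl (fun x : ℝ => Real.exp (-b * x)) atTop).mul this
    refine h2.congr_right ?_
    intro x
    rw [← Real.exp_add]; ring_nf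

lemma norm_cpow' {x : ℝ} (hx : 1 < x) (z : ℂ) : ‖(x : ℂ) ^ z‖ = x ^ z.re :=
  norm_cpow_eq_rpow_re_of_pos (by linarith) z

lemma cont_cpow (z : ℂ) : ContinuousOn (fun x : ℝ => (x : ℂ) ^ z) (Ioi 1) := by
  intro x hx
  have hx' : (1:ℝ) < x := hx
  exact (continuousAt_ofReal_cpow_const x z (Or.inr (by linarith))).continuousWithinAt

lemma int_exp_cpow {b : ℝ} (hb : 0 < b) (z : ℂ) :
    IntegrableOn (fun x : ℝ => (x : ℂ) ^ z * (Real.exp (-b * x) : ℂ)) (Ioi 1) := by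
  refine Integrable.mono' (int_exp_rpow hb z.re) ?_ ?_
  · apply ContinuousOn.aestronglyMeasurable _ measurableSet_Ioi
    exact (cont_cpow z).mul (by fun_prop)
  · filter_upwards [ae_restrict_mem measurableSet_Ioi] with x hx
    rw [norm_mul, norm_cpow' hx, norm_real, Real.norm_of_nonneg (Real.exp_pos _).le, mul_comm]

lemma int_W (z : ℂ) : IntegrableOn (fun x : ℝ => (x : ℂ) ^ z * (W x : ℂ)) (Ioi 1) := by
  refine Integrable.mono' ((int_exp_rpow Real.pi_pos z.re).const_mul 6) ?_ ?_
  · apply ContinuousOn.aestronglyMeasurable _ measurableSet_Ioi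
    refine (cont_cpow z).mul (continuous_ofReal.comp_continuousOn (W_cont.mono ?_))
    exact Ioi_subset_Ioi (by norm_num)
  · filter_upwards [ae_restrict_mem measurableSet_Ioi] with x hx
    have hx' : (1:ℝ) < x := hx
    rw [norm_mul, norm_cpow' hx, norm_real, Real.norm_of_nonneg (W_nonneg hx'.le)]
    have := W_le hx'.le
    have h2 : 0 ≤ x ^ z.re := Real.rpow_nonneg (by linarith) _
    nlinarith [mul_le_mul_of_nonneg_left this h2]

noncomputable def A (x : ℝ) : ℂ := (Ioi 1).indicator (fun x => (W x : ℂ)) x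

lemma mellin_A (z : ℂ) : mellin A z = ∫ x in Ioi (1:ℝ), (x : ℂ) ^ (z - 1) * (W x : ℂ) := by
  have : ∀ x : ℝ, (x : ℂ) ^ (z - 1) • A x
      = (Ioi (1:ℝ)).indicator (fun x : ℝ => (x : ℂ) ^ (z - 1) * (W x : ℂ)) x := by
    intro x
    by_cases hx : x ∈ Ioi (1:ℝ) <;> simp [A, hx]
  unfold mellin
  simp_rw [this]
  rw [setIntegral_indicator measurableSet_Ioi]
  congr 2
  ext x; simp

lemma mellinConv_A (z : ℂ) : MellinConvergent A z := by
  have : ∀ x : ℝ, (x : ℂ) ^ (z - 1) • A x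
      = (Ioi (1:ℝ)).indicator (fun x : ℝ => (x : ℂ) ^ (z - 1) * (W x : ℂ)) x := by
    intro x
    by_cases hx : x ∈ Ioi (1:ℝ) <;> simp [A, hx]
  unfold MellinConvergent
  simp_rw [this]
  rw [integrableOn_indicator_iff measurableSet_Ioi]
  exact (int_W (z - 1)).mono_set inter_subset_left

lemma f_modif_eq {x : ℝ} (hx : x ∈ Ioi (0:ℝ)) :
    (HurwitzZeta.hurwitzEvenFEPair 0).f_modif x = A x + ((x:ℂ)⁻¹) ^ ((1:ℂ)/2) • A x⁻¹ := by
  have hx0 : (0:ℝ) < x := hx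
  simp only [WeakFEPair.f_modif, HurwitzZeta.hurwitzEvenFEPair, Pi.add_apply, A,
    HurwitzZeta.evenKernel_eq_cosKernel_of_zero]
  congr 1
  · by_cases h : x ∈ Ioi (1:ℝ) <;> simp [h, W]
  · by_cases h : x ∈ Ioo (0:ℝ) 1
    · have h1 : x⁻¹ ∈ Ioi (1:ℝ) := by
        have := (one_lt_inv₀ hx0).mpr h.2
        exact this
      rw [indicator_of_mem h, indicator_of_mem h1]
      have fe := HurwitzZeta.evenKernel_functional_equation 0 x
      rw [HurwitzZeta.evenKernel_eq_cosKernel_of_zero] at fe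
      have e1 : ((x:ℂ)⁻¹) ^ ((1:ℂ)/2) = ((x ^ (-(1/2):ℝ) : ℝ) : ℂ) := by
        rw [ofReal_cpow hx0.le, ← ofReal_inv, show ((1:ℂ)/2) = ((1/2:ℝ):ℂ) by push_cast; ring,
          ← ofReal_cpow (by positivity), ← ofReal_cpow hx0.le, Real.inv_rpow hx0.le,
          Real.rpow_neg hx0.le]
      rw [e1]
      simp only [W, Function.comp, smul_eq_mul, one_mul, mul_one]
      rw [fe, Real.rpow_neg hx0.le]
      push_cast
      simp only [one_div]
      ring
    · have h1 : x⁻¹ ∉ Ioi (1:ℝ) := by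
        intro h2
        exact h ⟨hx0, (one_lt_inv₀ hx0).mp h2⟩
      rw [indicator_of_notMem h, indicator_of_notMem h1]; simp

lemma xi0_eq (s : ℂ) : completedRiemannZeta₀ s = (mellin A (s / 2) + mellin A ((1 - s) / 2)) / 2 := by
  unfold completedRiemannZeta₀ HurwitzZeta.completedHurwitzZetaEven₀ WeakFEPair.Λ₀
  congr 1
  set z := s / 2
  have hz : (1 - s) / 2 = -z + 1 / 2 := by simp only [z]; ring
  rw [hz]
  set B : ℝ → ℂ := fun x => (x : ℂ) ^ ((1:ℂ)/2) • A x
  have hB : mellin (fun t => B t⁻¹) z = mellin A (-z + 1/2) := by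
    rw [mellin_comp_inv, mellin_cpow_smul]
  have hBc : MellinConvergent (fun t => B t⁻¹) z := by
    have h1 : MellinConvergent B (-z) := MellinConvergent.cpow_smul.mpr (mellinConv_A _)
    have := (MellinConvergent.comp_rpow (f := B) (s := z) (a := -1) (by norm_num)).mpr
      (by rw [show z / ((-1:ℝ):ℂ) = -z by push_cast; ring]; exact h1)
    simpa [Real.rpow_neg_one] using this
  rw [← hB]
  unfold mellin
  rw [← integral_add (mellinConv_A z) hBc]
  apply setIntegral_congr_fun measurableSet_Ioi
  intro x hx
  simp only [f_modif_eq hx, B, ofReal_inv, smul_add]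

end G2
open Complex
namespace G2
open MeasureTheory Set Filter Topology

noncomputable def mr (p : ℝ) : ℝ := ∫ x in Ioi (1:ℝ), x ^ (p - 1) * W x

noncomputable def xr (p : ℝ) : ℝ := (mr (p / 2) + mr ((1 - p) / 2)) / 2

lemma int_Wr (p : ℝ) : IntegrableOn (fun x : ℝ => x ^ p * W x) (Ioi 1) := by
  have h := (int_W (p:ℂ)).norm
  refine h.congr ?_
  filter_upwards [ae_restrict_mem measurableSet_Ioi] with x hx
  have hx' : (1:ℝ) < x := hx
  rw [norm_mul, norm_cpow' hx, norm_real, Real.norm_of_nonneg (W_nonneg hx'.le)]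
  simp

lemma norm_mellin_A (z : ℂ) : ‖mellin A z‖ ≤ mr z.re := by
  rw [mellin_A]
  refine (norm_integral_le_integral_norm _).trans (le_of_eq ?_)
  apply setIntegral_congr_fun measurableSet_Ioi
  intro x hx
  have hx' : (1:ℝ) < x := hx
  simp only [norm_mul]
  rw [norm_cpow' hx, norm_real, Real.norm_of_nonneg (W_nonneg hx'.le)]
  simp

lemma mellin_A_real (p : ℝ) : mellin A (p:ℂ) = (mr p : ℂ) := by
  rw [mellin_A, mr, ← integral_complex_ofReal]
  apply setIntegral_congr_fun measurableSet_Ioi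
  intro x hx
  have hx' : (1:ℝ) < x := hx
  simp only [ofReal_mul]
  rw [ofReal_cpow (by linarith)]
  push_cast; rfl

lemma mellin_A_conj (z : ℂ) : mellin A (starRingEnd ℂ z) = starRingEnd ℂ (mellin A z) := by
  rw [mellin_A, mellin_A, ← integral_conj]
  apply setIntegral_congr_fun measurableSet_Ioi
  intro x hx
  have hx' : (1:ℝ) < x := hx
  simp only [map_mul, conj_ofReal]
  congr 1
  have harg : ((x:ℝ):ℂ).arg ≠ Real.pi := by
    rw [arg_ofReal_of_nonneg (by linarith)]; exact Real.pi_pos.ne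
  have := cpow_conj (x:ℂ) (z - 1) harg
  rw [conj_ofReal] at this
  rw [← this]; simp

lemma mr_nonneg (p : ℝ) : 0 ≤ mr p := by
  apply setIntegral_nonneg measurableSet_Ioi
  intro x hx
  have hx' : (1:ℝ) < x := hx
  exact mul_nonneg (Real.rpow_nonneg (by linarith) _) (W_nonneg hx'.le)

lemma xr_nonneg (p : ℝ) : 0 ≤ xr p := by
  unfold xr; have := mr_nonneg (p/2); have := mr_nonneg ((1-p)/2); linarith

lemma xi0_real (p : ℝ) : completedRiemannZeta₀ p = (xr p : ℂ) := by
  rw [xi0_eq, show ((p:ℂ)/2) = ((p/2:ℝ):ℂ) by push_cast; ring,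
    show ((1-p:ℂ)/2) = (((1-p)/2:ℝ):ℂ) by push_cast; ring, mellin_A_real, mellin_A_real, xr]
  push_cast; ring

lemma norm_xi0 (s : ℂ) : ‖completedRiemannZeta₀ s‖ ≤ xr s.re := by
  rw [xi0_eq, xr, norm_div]
  have h1 := norm_mellin_A (s/2)
  have h2 := norm_mellin_A ((1-s)/2)
  have e1 : (s/2).re = s.re/2 := by simp
  have e2 : ((1-s)/2).re = (1-s.re)/2 := by simp
  rw [e1] at h1; rw [e2] at h2
  have := norm_add_le (mellin A (s/2)) (mellin A ((1-s)/2))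
  rw [show ‖(2:ℂ)‖ = 2 by simp]
  linarith

lemma xi0_conj (s : ℂ) : completedRiemannZeta₀ (starRingEnd ℂ s) = starRingEnd ℂ (completedRiemannZeta₀ s) := by
  rw [xi0_eq, xi0_eq]
  simp only [map_div₀, map_add, ← mellin_A_conj, map_sub, map_one, map_ofNat]

lemma xr_eq_cosh (p : ℝ) : xr p = ∫ x in Ioi (1:ℝ),
    x ^ (-3/4:ℝ) * W x * Real.cosh ((p - 1/2) / 2 * Real.log x) := by
  rw [xr, mr, mr, ← integral_add (int_Wr _) (int_Wr _), ← integral_div]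
  apply setIntegral_congr_fun measurableSet_Ioi
  intro x hx
  have hx' : (1:ℝ) < x := hx
  have hx0 : (0:ℝ) < x := by linarith
  simp only
  rw [Real.cosh_eq]
  have e1 : x ^ (p/2 - 1) = x ^ (-3/4:ℝ) * Real.exp ((p - 1/2) / 2 * Real.log x) := by
    rw [Real.rpow_def_of_pos hx0, Real.rpow_def_of_pos hx0, ← Real.exp_add]; ring_nf
  have e2 : x ^ ((1-p)/2 - 1) = x ^ (-3/4:ℝ) * Real.exp (-((p - 1/2) / 2 * Real.log x)) := by
    rw [Real.rpow_def_of_pos hx0, Real.rpow_def_of_pos hx0, ← Real.exp_add]; ring_nf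
  rw [e1, e2]; ring

lemma int_cosh (p : ℝ) : IntegrableOn (fun x : ℝ =>
    x ^ (-3/4:ℝ) * W x * Real.cosh ((p - 1/2) / 2 * Real.log x)) (Ioi (1:ℝ)) := by
  have := ((int_Wr (p/2-1)).add (int_Wr ((1-p)/2-1))).div_const 2
  refine IntegrableOn.congr_fun this ?_ measurableSet_Ioi
  intro x hx
  have hx' : (1:ℝ) < x := hx
  have hx0 : (0:ℝ) < x := by linarith
  simp only [Pi.add_apply]
  rw [Real.cosh_eq]
  have e1 : x ^ (p/2 - 1) = x ^ (-3/4:ℝ) * Real.exp ((p - 1/2) / 2 * Real.log x) := by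
    rw [Real.rpow_def_of_pos hx0, Real.rpow_def_of_pos hx0, ← Real.exp_add]; ring_nf
  have e2 : x ^ ((1-p)/2 - 1) = x ^ (-3/4:ℝ) * Real.exp (-((p - 1/2) / 2 * Real.log x)) := by
    rw [Real.rpow_def_of_pos hx0, Real.rpow_def_of_pos hx0, ← Real.exp_add]; ring_nf
  rw [e1, e2]; ring

lemma xr_mono {p q : ℝ} (h : |p - 1/2| ≤ |q - 1/2|) : xr p ≤ xr q := by
  rw [xr_eq_cosh, xr_eq_cosh]
  apply setIntegral_mono_on (int_cosh p) (int_cosh q) measurableSet_Ioi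
  intro x hx
  have hx' : (1:ℝ) < x := hx
  have hx0 : (0:ℝ) < x := by linarith
  apply mul_le_mul_of_nonneg_left _ (mul_nonneg (Real.rpow_nonneg hx0.le _) (W_nonneg hx'.le))
  rw [Real.cosh_le_cosh, abs_mul, abs_mul, abs_div, abs_div]
  gcongr

noncomputable def X (s : ℂ) : ℂ := 1 + s * (s - 1) * completedRiemannZeta₀ s

lemma X_one_sub (s : ℂ) : X (1 - s) = X s := by
  unfold X; rw [completedRiemannZeta₀_one_sub]; ring

lemma X_conj (s : ℂ) : X (starRingEnd ℂ s) = starRingEnd ℂ (X s) := by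
  unfold X; rw [xi0_conj]; simp

lemma X_diff : Differentiable ℂ X := by
  have := differentiable_completedZeta₀
  unfold X
  fun_prop

lemma X_eq {s : ℂ} (h0 : s ≠ 0) (h1 : s ≠ 1) : X s = s * (s - 1) * completedRiemannZeta s := by
  rw [completedRiemannZeta_eq, X]
  have : 1 - s ≠ 0 := sub_ne_zero.mpr h1.symm
  field_simp
  ring

lemma X_norm_le (s : ℂ) : ‖X s‖ ≤ 1 + ‖s‖ * ‖s - 1‖ * xr s.re := by
  unfold X
  refine (norm_add_le _ _).trans ?_
  rw [norm_one, norm_mul, norm_mul]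
  have := norm_xi0 s
  gcongr

noncomputable def Xr (p : ℝ) : ℝ := 1 + p * (p - 1) * xr p

lemma X_real (p : ℝ) : X p = (Xr p : ℂ) := by
  rw [X, xi0_real, Xr]; push_cast; ring

lemma X_ne_zero {s : ℂ} (h : 1 ≤ s.re) : X s ≠ 0 := by
  by_cases h1 : s = 1
  · simp [h1, X]
  have h0 : s ≠ 0 := by rintro rfl; simp at h; linarith
  rw [X_eq h0 h1]
  have hz := riemannZeta_ne_zero_of_one_le_re h
  rw [riemannZeta_def_of_ne_zero h0] at hz
  have : completedRiemannZeta s ≠ 0 := fun h => hz (by simp [h])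
  exact mul_ne_zero (mul_ne_zero h0 (sub_ne_zero.mpr h1)) this

end G2
open Complex
namespace G2
open MeasureTheory Set Filter Topology

noncomputable def Z0 (x0 : ℝ) : ℝ := ∑' n, ‖LSeries.term 1 (x0:ℂ) n‖

lemma summ1 {x0 : ℝ} (h : 1 < x0) : Summable (fun n => ‖LSeries.term 1 (x0:ℂ) n‖) := by
  have : LSeriesSummable 1 (x0:ℂ) := LSeriesSummable_one_iff.mpr (by simpa using h)
  exact this.norm

lemma LS_le {f : ℕ → ℂ} (hf : ∀ n, ‖f n‖ ≤ 1) {x0 : ℝ} (h : 1 < x0) {v : ℂ} (hv : x0 ≤ v.re) :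
    ‖LSeries f v‖ ≤ Z0 x0 := by
  apply tsum_of_norm_bounded (summ1 h).hasSum
  intro n
  refine (LSeries.norm_term_le v (g := 1) (by simpa using hf n)).trans ?_
  exact LSeries.norm_term_le_of_re_le_re 1 (by simpa using hv) n

open ArithmeticFunction in
lemma zeta_bds {x0 : ℝ} (h : 1 < x0) {v : ℂ} (hv : x0 ≤ v.re) :
    ‖riemannZeta v‖ ≤ Z0 x0 ∧ 1 ≤ ‖riemannZeta v‖ * Z0 x0 := by
  have hv1 : 1 < v.re := lt_of_lt_of_le h hv
  have h1 := LSeries_zeta_eq_riemannZeta hv1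
  have h2 := LSeries_zeta_mul_Lseries_moebius hv1
  rw [h1] at h2
  constructor
  · rw [← h1]
    apply LS_le _ h hv
    intro n
    by_cases hn : n = 0 <;> simp [hn]
  · have h3 : ‖LSeries (fun n => ((ArithmeticFunction.moebius n : ℤ) : ℂ)) v‖ ≤ Z0 x0 := by
      apply LS_le _ h hv
      intro n
      have := @abs_moebius_le_one n
      rw [← Complex.ofReal_intCast, norm_real, Real.norm_eq_abs]
      exact_mod_cast this
    have h4 := congrArg norm h2
    rw [norm_mul, norm_one] at h4
    rw [← h4]
    gcongr

lemma Z0_pos {x0 : ℝ} (h : 1 < x0) : 0 < Z0 x0 := by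
  have := (zeta_bds h (v := x0) (by simp)).2
  by_contra h1
  have := mul_nonpos_of_nonneg_of_nonpos (norm_nonneg (riemannZeta x0)) (not_lt.mp h1)
  linarith

lemma Gamma_half (y : ℝ) : √Real.pi * Real.exp (-(Real.pi * |y| / 2)) ≤ ‖Gamma (1/2 + y * I)‖ := by
  set s : ℂ := 1/2 + y * I
  have h1 := Gamma_mul_Gamma_one_sub s
  have h2 : (1:ℂ) - s = starRingEnd ℂ s := by
    simp only [s, map_add, map_mul, conj_ofReal, conj_I, map_div₀, map_one, map_ofNat]; ring
  rw [h2, Gamma_conj, mul_conj] at h1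
  have h3 : sin (Real.pi * s) = (Real.cosh (Real.pi * y) : ℂ) := by
    rw [show (Real.pi:ℂ) * s = Real.pi / 2 - (-(Real.pi * y)) * I by simp only [s]; ring,
      sin_pi_div_two_sub, cos_mul_I, ofReal_cosh, cosh_neg]; push_cast; rfl
  rw [h3, ← ofReal_div] at h1
  have h4 : normSq (Gamma s) = Real.pi / Real.cosh (Real.pi * y) := by exact_mod_cast h1
  have h5 : Real.cosh (Real.pi * y) ≤ Real.exp (Real.pi * |y|) := by
    rw [← Real.cosh_abs, abs_mul, abs_of_pos Real.pi_pos, Real.cosh_eq]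
    have : Real.exp (-(Real.pi * |y|)) ≤ Real.exp (Real.pi * |y|) := by
      apply Real.exp_le_exp.mpr
      have : 0 ≤ Real.pi * |y| := by positivity
      linarith
    linarith
  rw [normSq_eq_norm_sq] at h4
  apply le_of_sq_le_sq _ (norm_nonneg _)
  rw [h4, mul_pow, Real.sq_sqrt Real.pi_pos.le, ← Real.exp_nat_mul]
  have h6 : ((2:ℕ):ℝ) * -(Real.pi * |y| / 2) = -(Real.pi * |y|) := by push_cast; ring
  rw [h6, Real.exp_neg, div_eq_mul_inv]
  gcongr

lemma beta_norm (y : ℝ) {a : ℝ} : ‖betaIntegral (1/2 + y * I) a‖ ≤ ‖betaIntegral (1/2) a‖ := by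
  set g : ℝ → ℝ := fun x => x ^ (-1/2:ℝ) * (1 - x) ^ (a - 1)
  have h1 : betaIntegral (1/2) a = ((∫ x in (0:ℝ)..1, g x : ℝ) : ℂ) := by
    rw [← intervalIntegral.integral_ofReal]
    unfold betaIntegral
    apply intervalIntegral.integral_congr
    intro x hx
    rw [uIcc_of_le zero_le_one] at hx
    simp only [g]
    rw [ofReal_mul, ofReal_cpow hx.1, ofReal_cpow (by linarith [hx.2])]
    push_cast
    norm_num
  have h2 : ‖betaIntegral (1/2 + y * I) a‖ ≤ ∫ x in (0:ℝ)..1, g x := by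
    unfold betaIntegral
    refine (intervalIntegral.norm_integral_le_integral_norm zero_le_one).trans (le_of_eq ?_)
    rw [intervalIntegral.integral_of_le zero_le_one, intervalIntegral.integral_of_le zero_le_one,
      integral_Ioc_eq_integral_Ioo, integral_Ioc_eq_integral_Ioo]
    apply setIntegral_congr_fun measurableSet_Ioo
    intro x hx
    have := hx.1; have := hx.2
    simp only [norm_mul, g]
    rw [norm_cpow_eq_rpow_re_of_pos hx.1, show (1 - (x:ℂ)) = ((1-x:ℝ):ℂ) by push_cast; ring,
      norm_cpow_eq_rpow_re_of_pos (by linarith)]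
    simp
    norm_num
  rw [h1, norm_real]
  exact h2.trans (le_abs_self _)

lemma Gamma_low {u : ℂ} (hu : 1/2 < u.re) :
    Real.Gamma u.re * Real.exp (-(Real.pi * |u.im| / 2)) ≤ ‖Gamma u‖ := by
  set a := u.re - 1/2 with ha
  have ha0 : 0 < a := by simp only [ha]; linarith
  have e1 : (1/2 + u.im * I : ℂ) + (a:ℂ) = u := by
    apply Complex.ext <;> simp [ha]
  have h1 := Gamma_mul_Gamma_eq_betaIntegral (s := 1/2 + u.im * I) (t := (a:ℂ)) (by simp) (by simpa)
  have h2 := Gamma_mul_Gamma_eq_betaIntegral (s := 1/2) (t := (a:ℂ)) (by simp) (by simpa)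
  rw [e1] at h1
  rw [show (1/2:ℂ) + (a:ℂ) = (u.re : ℂ) by simp [ha], Gamma_one_half_eq, Gamma_ofReal, Gamma_ofReal] at h2
  rw [Gamma_ofReal] at h1
  have h1' := congrArg norm h1
  have h2' := congrArg norm h2
  have ga : 0 < Real.Gamma a := Real.Gamma_pos_of_pos ha0
  have gu : 0 < Real.Gamma u.re := Real.Gamma_pos_of_pos (by linarith)
  rw [norm_mul, norm_mul, norm_real, Real.norm_of_nonneg ga.le] at h1'
  rw [norm_mul, norm_mul, norm_real, Real.norm_of_nonneg ga.le, norm_real, Real.norm_of_nonneg gu.le] at h2'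
  have e2 : ‖(Real.pi:ℂ) ^ (1/2:ℂ)‖ = √Real.pi := by
    rw [norm_cpow_eq_rpow_re_of_pos Real.pi_pos, Real.sqrt_eq_rpow]; simp
  rw [e2] at h2'
  have h3 := Gamma_half u.im
  have h4 := beta_norm u.im (a := a)
  have sp : 0 < √Real.pi := Real.sqrt_pos.mpr Real.pi_pos
  have h5 : √Real.pi * Real.Gamma a * (Real.Gamma u.re * Real.exp (-(Real.pi * |u.im| / 2))) ≤
      √Real.pi * Real.Gamma a * ‖Gamma u‖ := by
    calc _ = Real.Gamma u.re * Real.Gamma a * (√Real.pi * Real.exp (-(Real.pi * |u.im| / 2))) := by ring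
      _ ≤ Real.Gamma u.re * Real.Gamma a * ‖Gamma (1/2 + u.im * I)‖ := by gcongr
      _ = Real.Gamma u.re * (‖Gamma u‖ * ‖betaIntegral (1/2 + u.im * I) a‖) := by rw [← h1']; ring
      _ ≤ Real.Gamma u.re * (‖Gamma u‖ * ‖betaIntegral (1/2) a‖) := by gcongr
      _ = ‖Gamma u‖ * (Real.Gamma u.re * ‖betaIntegral (1/2) a‖) := by ring
      _ = _ := by rw [← h2']; ring
  exact le_of_mul_le_mul_left h5 (by positivity)

lemma norm_X {v : ℂ} (hv : 1 < v.re) :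
    ‖X v‖ = ‖v‖ * ‖v - 1‖ * (Real.pi ^ (-v.re / 2) * ‖Gamma (v/2)‖ * ‖riemannZeta v‖) := by
  have h0 : v ≠ 0 := by rintro rfl; simp at hv; linarith
  have h1 : v ≠ 1 := by rintro rfl; simp at hv
  have hG : Gammaℝ v ≠ 0 := Gammaℝ_ne_zero_of_re_pos (by linarith)
  have hz : completedRiemannZeta v = Gammaℝ v * riemannZeta v := by
    rw [riemannZeta_def_of_ne_zero h0]; field_simp
  rw [X_eq h0 h1, hz, Gammaℝ_def]
  simp only [norm_mul]
  rw [norm_cpow_eq_rpow_re_of_pos Real.pi_pos]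
  simp

lemma X_low {x0 : ℝ} (h : 1 < x0) {v : ℂ} (hv : x0 ≤ v.re) :
    (1 + ‖v‖ * ‖v - 1‖ * xr v.re) * Real.exp (-(Real.pi * |v.im| / 4)) ≤ Z0 x0 ^ 2 * ‖X v‖ := by
  have hv1 : 1 < v.re := lt_of_lt_of_le h hv
  have hx := norm_X (v := (v.re:ℂ)) (by simpa using hv1)
  have hG : Gamma ((v.re:ℂ)/2) = (Real.Gamma (v.re/2) : ℂ) := by
    rw [← Gamma_ofReal]; push_cast; rfl
  have gp : 0 < Real.Gamma (v.re/2) := Real.Gamma_pos_of_pos (by linarith)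
  have hr : Xr v.re = 1 + v.re * (v.re - 1) * xr v.re := rfl
  simp only [norm_real, hG, X_real, ofReal_re, Real.norm_of_nonneg gp.le] at hx
  rw [show ((v.re:ℂ) - 1) = ((v.re - 1:ℝ):ℂ) by push_cast; ring, norm_real,
    Real.norm_of_nonneg (by linarith : 0 ≤ v.re), Real.norm_of_nonneg (by linarith : 0 ≤ v.re - 1)] at hx
  have hxp : 0 ≤ Xr v.re := by
    rw [hr]; have := xr_nonneg v.re
    have : 0 ≤ v.re * (v.re - 1) * xr v.re := mul_nonneg (mul_nonneg (by linarith) (by linarith)) this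
    linarith
  rw [Real.norm_of_nonneg hxp, hr] at hx
  have hz1 := (zeta_bds h (v := (v.re:ℂ)) (by simpa using hv)).1
  have hz2 := (zeta_bds h hv).2
  have hg := Gamma_low (u := v/2) (by simp; linarith)
  have e1 : (v/2).re = v.re/2 := by simp
  have e2 : Real.pi * |(v/2).im| / 2 = Real.pi * |v.im| / 4 := by
    have : (v/2).im = v.im/2 := by simp
    rw [this, abs_div, abs_of_pos (by norm_num : (0:ℝ) < 2)]; ring
  rw [e1, e2] at hg
  set E := Real.exp (-(Real.pi * |v.im| / 4))
  have hE : 0 < E := Real.exp_pos _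
  set P := Real.pi ^ (-v.re / 2)
  have hP : 0 < P := Real.rpow_pos_of_pos Real.pi_pos _
  set Z := Z0 x0
  have hZ : 0 < Z := Z0_pos h
  have hprod : v.re * (v.re - 1) ≤ ‖v‖ * ‖v - 1‖ := by
    have a1 := re_le_norm v
    have a2 := re_le_norm (v - 1)
    simp at a2
    have : 0 ≤ v.re - 1 := by linarith
    nlinarith [norm_nonneg v]
  set c := v.re * (v.re - 1)
  have hc : 0 < c := mul_pos (by linarith) (by linarith)
  set N := ‖v‖ * ‖v - 1‖
  set x := xr v.re
  set Q := P * Real.Gamma (v.re/2)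
  have hQ : 0 < Q := by positivity
  -- 1 + c x ≤ c Q Z
  have k1 : 1 + c * x ≤ c * (Q * Z) := by
    rw [hx]; gcongr
  have k2 : 1 + N * x ≤ N * (Q * Z) := by
    have : 1 / c + x ≤ Q * Z := by
      have : c * (1 / c + x) ≤ c * (Q * Z) := by
        rw [mul_add, mul_one_div, div_self hc.ne']; exact k1
      exact le_of_mul_le_mul_left this hc
    have h3 : 1 ≤ N * (1 / c) := by rw [mul_one_div, le_div_iff₀ hc]; linarith
    nlinarith [mul_le_mul_of_nonneg_left this (le_trans hc.le hprod)]
  rw [norm_X hv1]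
  have hN : 0 ≤ N := le_trans hc.le hprod
  calc (1 + N * x) * E ≤ (N * (Q * Z)) * E := by gcongr
    _ = N * Z * P * (Real.Gamma (v.re/2) * E) * 1 := by simp only [Q]; ring
    _ ≤ N * Z * P * ‖Gamma (v/2)‖ * (‖riemannZeta v‖ * Z) := by gcongr
    _ = _ := by ring

end G2
open Complex
namespace G2
open MeasureTheory Set Filter Topology

lemma rough {c : ℝ} (hc : 1 < c) {w : ℂ} (hw : (1 - c)/2 ≤ w.re) :
    ‖X w‖ ≤ Z0 ((1+c)/2) ^ 2 * Real.exp (Real.pi * |w.im| / 4) * ‖X (w + c)‖ := by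
  have h1 := X_norm_le w
  have h2 := X_low (x0 := (1+c)/2) (by linarith) (v := w + c) (by simp; linarith)
  have e1 : (w + c).im = w.im := by simp
  have e2 : (w + c).re = w.re + c := by simp
  rw [e1, Real.exp_neg, e2] at h2
  have hm : xr w.re ≤ xr (w.re + c) := by
    apply xr_mono
    rw [abs_of_nonneg (by linarith : 0 ≤ w.re + c - 1/2), abs_le]
    constructor <;> linarith
  have n1 : ‖w - 1‖ ≤ ‖w + c‖ := by
    rw [← sq_le_sq₀ (norm_nonneg _) (norm_nonneg _), ← normSq_eq_norm_sq, ← normSq_eq_norm_sq,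
      normSq_apply, normSq_apply]
    simp; nlinarith
  have n2 : ‖w‖ ≤ ‖w + c - 1‖ := by
    rw [← sq_le_sq₀ (norm_nonneg _) (norm_nonneg _), ← normSq_eq_norm_sq, ← normSq_eq_norm_sq,
      normSq_apply, normSq_apply]
    simp; nlinarith
  have hE : 0 < Real.exp (Real.pi * |w.im| / 4) := Real.exp_pos _
  have h3 : ‖w‖ * ‖w - 1‖ * xr w.re ≤ ‖w + c‖ * ‖w + c - 1‖ * xr (w.re + c) := by
    have := xr_nonneg w.re
    calc _ = ‖w - 1‖ * ‖w‖ * xr w.re := by ring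
      _ ≤ _ := by gcongr
  have h4 : 1 + ‖w + c‖ * ‖w + c - 1‖ * xr (w.re + c) ≤
      Z0 ((1+c)/2) ^ 2 * ‖X (w + c)‖ * Real.exp (Real.pi * |w.im| / 4) := by
    rw [← div_eq_mul_inv, div_le_iff₀ hE] at h2
    exact h2
  linarith

lemma schur_c {c : ℝ} (hc : 1 < c) {w : ℂ} (hw : (1 - c)/2 ≤ w.re) : ‖X w‖ ≤ ‖X (w + c)‖ := by
  set f : ℂ → ℂ := fun z => X (((1 - c)/2 : ℝ) + z) / X (((1 + c)/2 : ℝ) + z) with hf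
  have hne : ∀ z : ℂ, 0 ≤ z.re → X (((1 + c)/2 : ℝ) + z) ≠ 0 := by
    intro z hz
    apply X_ne_zero; simp only [add_re, ofReal_re]; linarith
  have hbd : ∀ z : ℂ, 0 ≤ z.re → ‖f z‖ ≤ Z0 ((1+c)/2) ^ 2 * Real.exp (Real.pi * |z.im| / 4) := by
    intro z hz
    simp only [hf, norm_div]
    rw [div_le_iff₀ (norm_pos_iff.mpr (hne z hz))]
    have := rough hc (w := ((1 - c)/2 : ℝ) + z) (by simp only [add_re, ofReal_re]; linarith)
    have e : (((1 - c)/2 : ℝ) : ℂ) + z + c = ((1 + c)/2 : ℝ) + z := by push_cast; ring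
    rw [e] at this
    simpa using this
  have key : ∀ z : ℂ, 0 ≤ z.re → ‖f z‖ ≤ 1 := by
    intro z hz
    apply PhragmenLindelof.right_half_plane_of_bounded_on_real (f := f) (C := 1) _ _ _ _ hz
    · apply DifferentiableOn.diffContOnCl
      have : closure {z : ℂ | 0 < z.re} = {z | 0 ≤ z.re} := closure_setOfPred_lt_re 0
      rw [this]
      intro z hz
      have := X_diff
      apply DifferentiableAt.differentiableWithinAt
      apply DifferentiableAt.div
      · fun_prop
      · fun_prop
      · exact hne z hz
    · refine ⟨1, by norm_num, Real.pi / 4, ?_⟩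
      apply Asymptotics.IsBigO.of_bound (Z0 ((1+c)/2) ^ 2)
      apply eventually_inf_principal.mpr
      filter_upwards with z hz
      refine (hbd z (le_of_lt hz)).trans ?_
      rw [Real.norm_of_nonneg (Real.exp_pos _).le, Real.rpow_one]
      have := abs_im_le_norm z
      have hp := Real.pi_pos
      gcongr
      nlinarith
    · refine ⟨Z0 ((1+c)/2) ^ 2, ?_⟩
      rw [eventually_map]
      filter_upwards [eventually_ge_atTop 0] with x hx
      have := hbd x (by simpa using hx)
      simpa using this
    · intro y
      simp only [hf, norm_div]
      apply div_le_one_of_le₀ _ (norm_nonneg _)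
      apply le_of_eq
      rw [← X_one_sub, ← norm_conj, ← X_conj]
      congr 2
      simp only [map_sub, map_add, map_one, conj_ofReal, map_mul, conj_I]
      push_cast; ring
  have := key (w - ((1-c)/2:ℝ)) (by simp only [sub_re, ofReal_re]; linarith)
  simp only [hf, norm_div] at this
  have h2 := hne (w - ((1-c)/2:ℝ)) (by simp only [sub_re, ofReal_re]; linarith)
  rw [div_le_one₀ (norm_pos_iff.mpr h2)] at this
  rw [show (((1-c)/2:ℝ):ℂ) + (w - ((1-c)/2:ℝ)) = w by ring,
    show (((1+c)/2:ℝ):ℂ) + (w - ((1-c)/2:ℝ)) = w + c by push_cast; ring] at this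
  exact this

lemma schur1 {w : ℂ} (hw : 0 ≤ w.re) : ‖X w‖ ≤ ‖X (w + 1)‖ := by
  have hcont : Continuous (fun c : ℝ => ‖X (w + c)‖) := by
    have := X_diff.continuous
    fun_prop
  have ht : Tendsto (fun c : ℝ => ‖X (w + c)‖) (𝓝[>] 1) (𝓝 ‖X (w + (1:ℝ))‖) :=
    (hcont.tendsto 1).mono_left nhdsWithin_le_nhds
  have := ge_of_tendsto ht (b := ‖X w‖) (by
    filter_upwards [self_mem_nhdsWithin] with c hc
    have hc' : 1 < c := hc
    exact schur_c hc' (by linarith))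
  simpa using this

end G2
open Complex
namespace G2
open MeasureTheory Set Filter Topology

lemma SP_gen {h : ℂ → ℂ} (hd : ∀ z : ℂ, 0 < z.re → DifferentiableAt ℂ h z)
    (hb : ∀ z : ℂ, 0 < z.re → ‖h z‖ ≤ 1) {w0 w : ℂ} (hw0 : 0 < w0.re) (hw : 0 < w.re)
    (h1 : ‖h w0‖ < 1) :
    ‖h w - h w0‖ * ‖w + starRingEnd ℂ w0‖ ≤ ‖w - w0‖ * ‖1 - starRingEnd ℂ (h w0) * h w‖ := by
  set h0 := h w0
  set T : ℂ → ℂ := fun ζ => (w0 + starRingEnd ℂ w0 * ζ) / (1 - ζ)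
  have hne : ∀ ζ ∈ Metric.ball (0:ℂ) 1, (1:ℂ) - ζ ≠ 0 := by
    intro ζ hζ h
    rw [sub_eq_zero] at h
    rw [← h] at hζ
    simp at hζ
  have hT : ∀ ζ ∈ Metric.ball (0:ℂ) 1, 0 < (T ζ).re := by
    intro ζ hζ
    have hz := hne ζ hζ
    have hn : normSq ζ < 1 := by
      rw [normSq_eq_norm_sq]; simp at hζ; nlinarith [norm_nonneg ζ]
    rw [normSq_apply] at hn
    have hp : 0 < normSq (1 - ζ) := normSq_pos.mpr hz
    simp only [T]
    rw [div_re, ← add_div]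
    apply div_pos _ hp
    simp
    nlinarith
  have hden : ∀ z : ℂ, ‖z‖ ≤ 1 → 1 - starRingEnd ℂ h0 * z ≠ 0 := by
    intro z hz h
    rw [sub_eq_zero] at h
    have := congrArg norm h
    rw [norm_one, norm_mul, norm_conj] at this
    nlinarith [norm_nonneg z, norm_nonneg h0]
  set g : ℂ → ℂ := fun ζ => (h (T ζ) - h0) / (1 - starRingEnd ℂ h0 * h (T ζ))
  have hT0 : T 0 = w0 := by simp [T]
  have hg0 : g 0 = 0 := by simp [g, hT0, h0]
  have hgd : DifferentiableOn ℂ g (Metric.ball 0 1) := by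
    intro ζ hζ
    apply DifferentiableAt.differentiableWithinAt
    have hTd : DifferentiableAt ℂ T ζ := by
      apply DifferentiableAt.div (by fun_prop) (by fun_prop) (hne ζ hζ)
    have hh : DifferentiableAt ℂ (fun ζ => h (T ζ)) ζ := (hd _ (hT ζ hζ)).comp ζ hTd
    exact (hh.sub_const _).div ((hh.const_mul _).const_sub _) (hden _ (hb _ (hT ζ hζ)))
  have hgm : MapsTo g (Metric.ball 0 1) (Metric.closedBall 0 1) := by
    intro ζ hζ
    have hz := hb _ (hT ζ hζ)
    rw [mem_closedBall_zero_iff]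
    simp only [g, norm_div]
    apply div_le_one_of_le₀ _ (norm_nonneg _)
    set z := h (T ζ)
    rw [← sq_le_sq₀ (norm_nonneg _) (norm_nonneg _), ← normSq_eq_norm_sq, ← normSq_eq_norm_sq]
    have a1 : normSq z ≤ 1 := by rw [normSq_eq_norm_sq]; nlinarith [norm_nonneg z]
    have a2 : normSq h0 ≤ 1 := by rw [normSq_eq_norm_sq]; nlinarith [norm_nonneg h0]
    rw [normSq_apply] at a1 a2 ⊢
    rw [normSq_apply]
    simp
    nlinarith [mul_nonneg (sub_nonneg.mpr a1) (sub_nonneg.mpr a2)]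
  have hwne : w + starRingEnd ℂ w0 ≠ 0 := by
    intro h
    have := congrArg re h
    simp at this
    linarith
  set ζ : ℂ := (w - w0) / (w + starRingEnd ℂ w0)
  have hζ : ‖ζ‖ < 1 := by
    simp only [ζ, norm_div]
    rw [div_lt_one (norm_pos_iff.mpr hwne), ← sq_lt_sq₀ (norm_nonneg _) (norm_nonneg _),
      ← normSq_eq_norm_sq, ← normSq_eq_norm_sq, normSq_apply, normSq_apply]
    simp
    nlinarith
  have hTz : T ζ = w := by
    have hz := hne ζ (by simpa using hζ)
    have : w0 + starRingEnd ℂ w0 * ζ = w * (1 - ζ) := by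
      simp only [ζ]; field_simp; ring
    simp only [T]; rw [this]; field_simp
  have := norm_le_norm_of_mapsTo_ball hgd hgm hg0 hζ
  simp only [g, hTz, ζ, norm_div] at this
  rw [div_le_div_iff₀ (norm_pos_iff.mpr (hden _ (hb _ hw))) (norm_pos_iff.mpr hwne)] at this
  exact this

noncomputable def hh (w : ℂ) : ℂ := X w / X (w + 1)

lemma hh_le {w : ℂ} (hw : 0 ≤ w.re) : ‖hh w‖ ≤ 1 := by
  unfold hh; rw [norm_div]
  exact div_le_one_of_le₀ (schur1 hw) (norm_nonneg _)

lemma hh_diff {w : ℂ} (hw : 0 < w.re) : DifferentiableAt ℂ hh w := by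
  have := X_diff
  unfold hh
  apply DifferentiableAt.div (by fun_prop) (by fun_prop)
  apply X_ne_zero; simp; linarith

/-- values on the half line -/
noncomputable def hl (t : ℝ) : ℂ := hh (1/2 + t * I)

lemma SP {t t0 r m M : ℝ} (hr : |t - t0| ≤ r) (hm0 : 0 ≤ m) (hm : m ≤ ‖hl t0‖) (hM : ‖hl t0‖ ≤ M)
    (hM1 : M < 1) : ‖hl t - hl t0‖ * (1 - r * M) ≤ r * (1 - m ^ 2) := by
  have hr0 : 0 ≤ r := le_trans (abs_nonneg _) hr
  have key := SP_gen (h := hh) (fun z hz => hh_diff hz) (fun z hz => hh_le hz.le)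
    (w0 := 1/2 + t0 * I) (w := 1/2 + t * I) (by simp) (by simp) (lt_of_le_of_lt hM hM1)
  change ‖hl t - hl t0‖ * _ ≤ _ * ‖1 - starRingEnd ℂ (hl t0) * hl t‖ at key
  have e1 : ‖(1/2 + t * I : ℂ) - (1/2 + t0 * I)‖ = |t - t0| := by
    rw [show (1/2 + t * I : ℂ) - (1/2 + t0 * I) = ((t - t0 : ℝ):ℂ) * I by push_cast; ring, norm_mul,
      norm_I, mul_one, norm_real, Real.norm_eq_abs]
  have e2 : 1 ≤ ‖(1/2 + t * I : ℂ) + starRingEnd ℂ (1/2 + t0 * I : ℂ)‖ := by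
    refine le_trans ?_ (re_le_norm _)
    simp; norm_num
  have e3 : ‖1 - starRingEnd ℂ (hl t0) * hl t‖ ≤ (1 - m^2) + M * ‖hl t - hl t0‖ := by
    have : 1 - starRingEnd ℂ (hl t0) * hl t =
      ((1 - ‖hl t0‖^2 : ℝ) : ℂ) - starRingEnd ℂ (hl t0) * (hl t - hl t0) := by
      have := conj_mul' (hl t0)
      push_cast
      rw [← this]; ring
    rw [this]
    refine (norm_sub_le _ _).trans ?_
    rw [norm_real, norm_mul, norm_conj]
    have : ‖1 - ‖hl t0‖^2‖ ≤ 1 - m^2 := by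
      rw [Real.norm_of_nonneg (by nlinarith [norm_nonneg (hl t0)])]
      nlinarith
    gcongr
  rw [e1] at key
  have p1 := norm_nonneg (hl t - hl t0)
  have k2 : ‖hl t - hl t0‖ ≤ r * ((1 - m^2) + M * ‖hl t - hl t0‖) :=
    calc _ ≤ _ := le_mul_of_one_le_right p1 e2
      _ ≤ _ := key
      _ ≤ _ := by gcongr
  nlinarith

/-- positive-real-part principle on the half plane -/
lemma re_nonneg_of_line {k : ℂ → ℂ} (hd : DiffContOnCl ℂ k {z | 0 < z.re})
    {B : ℝ} (hB : ∀ z : ℂ, 0 ≤ z.re → ‖k z‖ ≤ B) (hl : ∀ y : ℝ, 0 ≤ (k (y * I)).re)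
    {z : ℂ} (hz : 0 ≤ z.re) : 0 ≤ (k z).re := by
  have hbd : ∀ z : ℂ, 0 ≤ z.re → ‖exp (-k z)‖ ≤ Real.exp B := by
    intro z hz
    rw [norm_exp]
    apply Real.exp_le_exp.mpr
    have := hB z hz
    have := abs_re_le_norm (k z)
    have := neg_abs_le (k z).re
    simp; linarith
  have : ‖exp (-k z)‖ ≤ 1 := by
    apply PhragmenLindelof.right_half_plane_of_bounded_on_real (f := fun z => exp (-k z)) (C := 1) _ _ _ _ hz
    · exact ⟨hd.1.neg.cexp, hd.2.neg.cexp⟩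
    · refine ⟨1, by norm_num, 0, ?_⟩
      apply Asymptotics.IsBigO.of_bound (Real.exp B)
      apply eventually_inf_principal.mpr
      filter_upwards with z hz
      simpa using hbd z (le_of_lt hz)
    · refine ⟨Real.exp B, ?_⟩
      rw [eventually_map]
      filter_upwards [eventually_ge_atTop 0] with x hx
      exact hbd x (by simpa using hx)
    · intro y
      rw [norm_exp]
      have := hl y
      rw [Real.exp_le_one_iff]
      simpa using this
  rw [norm_exp, Real.exp_le_one_iff] at this
  simpa using this

end G2
open Complex
namespace G2
open MeasureTheory Set Filter Topology

/-- integrand -/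
noncomputable def ph (p : ℝ) (w : ℂ) (k : ℕ) (x : ℝ) : ℂ :=
  (Real.exp (-p * (x - 1)) : ℂ) * (x : ℂ) ^ (w - 1) * (1 - (x : ℂ)⁻¹) ^ k

noncomputable def Gk (p : ℝ) (w : ℂ) (k : ℕ) : ℂ := ∫ x in Ioi (1:ℝ), ph p w k x

lemma ph_cont (p : ℝ) (w : ℂ) (k : ℕ) : ContinuousOn (ph p w k) (Ici 1) := by
  intro x hx
  have hx' : (1:ℝ) ≤ x := hx
  unfold ph
  apply ContinuousAt.continuousWithinAt
  have h1 := continuousAt_ofReal_cpow_const x (w-1) (Or.inr (by linarith))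
  have hx0 : (x:ℂ) ≠ 0 := by exact_mod_cast (by linarith : x ≠ 0)
  have h2 : ContinuousAt (fun x : ℝ => (x:ℂ)⁻¹) x :=
    ContinuousAt.inv₀ (by fun_prop) hx0
  have h3 : ContinuousAt (fun x : ℝ => (Real.exp (-p * (x - 1)) : ℂ)) x := by fun_prop
  exact (h3.mul h1).mul ((continuousAt_const.sub h2).pow k)

lemma ph_norm (p : ℝ) (w : ℂ) (k : ℕ) {x : ℝ} (hx : 1 ≤ x) :
    ‖ph p w k x‖ = Real.exp (-p * (x - 1)) * x ^ (w.re - 1) * (1 - x⁻¹) ^ k := by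
  unfold ph
  rw [norm_mul, norm_mul, norm_real, Real.norm_of_nonneg (Real.exp_pos _).le, norm_pow,
    norm_cpow_eq_rpow_re_of_pos (by linarith), show (1 - (x:ℂ)⁻¹) = ((1 - x⁻¹ : ℝ) : ℂ) by push_cast; ring,
    norm_real, Real.norm_of_nonneg]
  · simp
  · have := inv_le_one_of_one_le₀ hx; linarith

lemma y_bds {x : ℝ} (hx : 1 ≤ x) : 0 ≤ 1 - x⁻¹ ∧ 1 - x⁻¹ ≤ 1 := by
  have := inv_le_one_of_one_le₀ hx
  have : 0 < x⁻¹ := by positivity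
  constructor <;> linarith

lemma ph_norm_le (p : ℝ) (w : ℂ) (k : ℕ) {x : ℝ} (hx : 1 ≤ x) :
    ‖ph p w k x‖ ≤ Real.exp p * (Real.exp (-p * x) * x ^ (w.re - 1)) := by
  rw [ph_norm p w k hx]
  have h1 := pow_le_one₀ (n := k) (y_bds hx).1 (y_bds hx).2
  have h0 : 0 ≤ x ^ (w.re - 1) := Real.rpow_nonneg (by linarith) _
  have e : Real.exp (-p * (x - 1)) = Real.exp p * Real.exp (-p * x) := by
    rw [← Real.exp_add]; ring_nf
  rw [e, ← mul_assoc]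
  exact mul_le_of_le_one_right (by positivity) h1

lemma ph_int {p : ℝ} (hp : 0 < p) (w : ℂ) (k : ℕ) : IntegrableOn (ph p w k) (Ioi 1) := by
  refine Integrable.mono' ((int_exp_rpow hp (w.re - 1)).const_mul (Real.exp p)) ?_ ?_
  · exact ((ph_cont p w k).mono Ioi_subset_Ici_self).aestronglyMeasurable measurableSet_Ioi
  · filter_upwards [ae_restrict_mem measurableSet_Ioi] with x hx
    exact ph_norm_le p w k (le_of_lt hx)

lemma ph_tendsto {p : ℝ} (hp : 0 < p) (w : ℂ) (k : ℕ) : Tendsto (ph p w k) atTop (𝓝 0) := by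
  have h := (tendsto_rpow_mul_exp_neg_mul_atTop_nhds_zero (w.re - 1) p hp).const_mul (Real.exp p)
  rw [mul_zero] at h
  refine squeeze_zero_norm' ?_ h
  filter_upwards [eventually_ge_atTop 1] with x hx
  rw [mul_comm (x ^ _)]
  exact ph_norm_le p w k hx

lemma y_deriv {x : ℝ} (hx : 1 < x) : HasDerivAt (fun x : ℝ => 1 - (x:ℂ)⁻¹) (((x:ℂ)⁻¹)^2) x := by
  have hx0 : (x:ℂ) ≠ 0 := by exact_mod_cast (by linarith : x ≠ 0)
  have h := ((hasDerivAt_id x).ofReal_comp.inv hx0).const_sub 1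
  refine (h.congr_deriv ?_)
  simp
  field_simp

lemma ec_deriv (p : ℝ) (w : ℂ) {x : ℝ} (hx : 1 < x) :
    HasDerivAt (fun x : ℝ => (Real.exp (-p * (x - 1)) : ℂ) * (x : ℂ) ^ (w - 1))
      (((-p:ℂ) + (w - 1) * (x:ℂ)⁻¹) * ((Real.exp (-p * (x - 1)) : ℂ) * (x : ℂ) ^ (w - 1))) x := by
  have hx0 : (x:ℂ) ≠ 0 := by exact_mod_cast (by linarith : x ≠ 0)
  have h1 : HasDerivAt (fun x : ℝ => (Real.exp (-p * (x - 1)) : ℂ))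
      (((Real.exp (-p * (x-1)) * (-p) : ℝ)) : ℂ) x := by
    apply HasDerivAt.ofReal_comp
    have := ((hasDerivAt_id x).sub_const 1).const_mul (-p)
    simpa using this.exp
  have h2 : HasDerivAt (fun x : ℝ => (x:ℂ) ^ (w-1)) ((w-1) * (x:ℂ)^(w-1-1)) x := by
    have h3 : HasDerivAt (fun z : ℂ => z ^ (w-1)) ((w-1) * (x:ℂ)^(w-1-1) * 1) (x:ℂ) :=
      (hasDerivAt_id (x:ℂ)).cpow_const (Or.inl (by simpa using (by linarith : 0 < x)))
    simpa using h3.comp_ofReal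
  have := h1.mul h2
  refine this.congr_deriv ?_
  rw [cpow_sub (w-1) 1 hx0, cpow_one]
  push_cast
  field_simp

lemma rec0 {p : ℝ} (hp : 0 < p) (w : ℂ) : (1 - w) * Gk p w 1 = (p + 1 - w) * Gk p w 0 - 1 := by
  have hd : ∀ x ∈ Ioi (1:ℝ), HasDerivAt (ph p w 0) ((-(p + 1 - w)) * ph p w 0 x + (1 - w) * ph p w 1 x) x := by
    intro x hx
    have h := (ec_deriv p w hx)
    have e : ph p w 0 = (fun x : ℝ => (Real.exp (-p * (x - 1)) : ℂ) * (x : ℂ) ^ (w - 1)) := by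
      ext x; simp [ph]
    rw [e]
    refine h.congr_deriv ?_
    simp only [ph]; ring
  have := integral_Ioi_of_hasDerivAt_of_tendsto ((ph_cont p w 0) 1 (by simp)) hd
    (((ph_int hp w 0).const_mul _).add ((ph_int hp w 1).const_mul _)) (ph_tendsto hp w 0)
  rw [integral_add ((ph_int hp w 0).const_mul _) ((ph_int hp w 1).const_mul _), integral_const_mul,
    integral_const_mul] at this
  change -(p + 1 - w) * Gk p w 0 + (1 - w) * Gk p w 1 = _ at this
  have e1 : ph p w 0 1 = 1 := by simp [ph]
  rw [e1] at this
  linear_combination this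

lemma recS {p : ℝ} (hp : 0 < p) (w : ℂ) (k : ℕ) :
    (k + 2 - w) * Gk p w (k+2) = (p + 1 - w + 2 * (k + 1)) * Gk p w (k+1) - (k + 1) * Gk p w k := by
  have hd : ∀ x ∈ Ioi (1:ℝ), HasDerivAt (ph p w (k+1)) ((-(p + 1 - w + 2 * (k + 1))) * ph p w (k+1) x
      + ((k + 2 - w) * ph p w (k+2) x + (k+1) * ph p w k x)) x := by
    intro x hx
    have h := (ec_deriv p w hx).mul ((y_deriv hx).pow (k+1))
    have e : ph p w (k+1) = (fun x : ℝ => (Real.exp (-p * (x - 1)) : ℂ) * (x : ℂ) ^ (w - 1)) *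
       (fun x : ℝ => 1 - (x:ℂ)⁻¹) ^ (k+1) := by
      ext x; simp [ph]
    refine (h.congr_deriv ?_).congr_of_eventuallyEq (Eventually.of_forall fun y => congrFun e y)
    simp only [ph, Pi.pow_apply]
    push_cast
    ring
  have i1 := (ph_int hp w (k+1)).const_mul (-(p + 1 - w + 2 * (k + 1)))
  have i2 := (ph_int hp w (k+2)).const_mul (k + 2 - w)
  have i3 := (ph_int hp w k).const_mul (k + 1)
  have := integral_Ioi_of_hasDerivAt_of_tendsto ((ph_cont p w (k+1)) 1 (by simp)) hd
    (i1.add (i2.add i3)) (ph_tendsto hp w (k+1))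
  have i23 : IntegrableOn (fun x => (k + 2 - w) * ph p w (k+2) x + (k+1) * ph p w k x) (Ioi 1) := i2.add i3
  rw [integral_add i1 i23, integral_add i2 i3, integral_const_mul, integral_const_mul,
    integral_const_mul] at this
  change _ * Gk p w (k+1) + (_ * Gk p w (k+2) + _ * Gk p w k) = _ at this
  have e1 : ph p w (k+1) 1 = 0 := by simp [ph]
  rw [e1] at this
  linear_combination this

lemma Mj_int {p : ℝ} (hp : 0 < p) (j : ℕ) :
    IntegrableOn (fun x : ℝ => Real.exp (-p * (x - 1)) * (x - 1) ^ j) (Ioi 1) := by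
  refine Integrable.mono' ((int_exp_rpow hp j).const_mul (Real.exp p)) ?_ ?_
  · apply Continuous.aestronglyMeasurable; fun_prop
  · filter_upwards [ae_restrict_mem measurableSet_Ioi] with x hx
    have hx' : (1:ℝ) < x := hx
    have e : Real.exp (-p * (x - 1)) = Real.exp p * Real.exp (-p * x) := by
      rw [← Real.exp_add]; ring_nf
    rw [Real.norm_of_nonneg (mul_nonneg (Real.exp_pos _).le (pow_nonneg (by linarith) _)), e,
      Real.rpow_natCast, mul_assoc]
    gcongr
    linarith

lemma Mj {p : ℝ} (hp : 0 < p) (j : ℕ) :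
    ∫ x in Ioi (1:ℝ), Real.exp (-p * (x - 1)) * (x - 1) ^ j = j.factorial / p ^ (j+1) := by
  have he : ∀ x : ℝ, HasDerivAt (fun x : ℝ => Real.exp (-p * (x - 1))) (Real.exp (-p * (x-1)) * (-p)) x := by
    intro x
    have := ((hasDerivAt_id x).sub_const 1).const_mul (-p)
    simpa using this.exp
  have ht : ∀ j : ℕ, Tendsto (fun x : ℝ => Real.exp (-p * (x - 1)) * (x - 1) ^ j) atTop (𝓝 0) := by
    intro j
    have h := (tendsto_rpow_mul_exp_neg_mul_atTop_nhds_zero (j:ℝ) p hp)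
    have h2 := h.comp (tendsto_atTop_add_const_right atTop (-1) tendsto_id)
    refine h2.congr ?_
    intro x
    simp only [Function.comp, id, Real.rpow_natCast, ← sub_eq_add_neg]; ring
  induction j with
  | zero =>
    have := integral_Ioi_of_hasDerivAt_of_tendsto' (a := (1:ℝ)) (fun x _ => he x)
      ((Mj_int hp 0).mul_const (-p) |>.congr (by filter_upwards with x; simp)) (by simpa only [pow_zero, mul_one] using ht 0)
    rw [integral_mul_const] at this
    simp only [pow_zero, mul_one, Nat.factorial_zero, Nat.cast_one, zero_add, pow_one]
    rw [eq_div_iff hp.ne']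
    rw [sub_self, mul_zero, Real.exp_zero] at this
    linarith
  | succ j ih =>
    have hd : ∀ x ∈ Ici (1:ℝ), HasDerivAt (fun x : ℝ => Real.exp (-p * (x - 1)) * (x - 1) ^ (j+1))
      ((-p) * (Real.exp (-p * (x - 1)) * (x - 1) ^ (j+1)) + (j+1) * (Real.exp (-p * (x - 1)) * (x - 1) ^ j)) x := by
      intro x _
      have := (he x).mul (((hasDerivAt_id x).sub_const 1).pow (j+1))
      refine this.congr_deriv ?_
      simp
      ring
    have i1 := (Mj_int hp (j+1)).const_mul (-p)
    have i2 := (Mj_int hp j).const_mul (j+1:ℝ)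
    have := integral_Ioi_of_hasDerivAt_of_tendsto' hd (i1.add i2) (ht (j+1))
    rw [integral_add i1 i2, integral_const_mul, integral_const_mul, ih] at this
    simp only [sub_self, ne_eq, Nat.add_eq_zero_iff, one_ne_zero, and_false, not_false_eq_true, zero_pow, mul_zero] at this
    rw [Nat.factorial_succ]
    push_cast
    generalize (∫ x in Ioi (1:ℝ), Real.exp (-p * (x - 1)) * (x - 1) ^ (j+1)) = Iv at this ⊢
    have h4 : p * Iv = (j+1) * (j.factorial / p ^ (j+1)) := by linarith
    rw [eq_div_iff (by positivity), pow_succ]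
    field_simp at h4
    linear_combination h4

lemma Gk_bound {p : ℝ} (hp : 0 < p) {w : ℂ} (hw : w.re ≤ 1) (j : ℕ) :
    ‖Gk p w (2*j)‖ ≤ j.factorial / p ^ (j+1) / 4 ^ j := by
  rw [← Mj hp, ← integral_div]
  apply norm_integral_le_of_norm_le ((Mj_int hp j).div_const _)
  filter_upwards [ae_restrict_mem measurableSet_Ioi] with x hx
  have hx' : (1:ℝ) < x := hx
  rw [ph_norm p w _ hx'.le, mul_div_assoc]
  have h1 : x ^ (w.re - 1) ≤ 1 := Real.rpow_le_one_of_one_le_of_nonpos hx'.le (by linarith)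
  have h0 : 0 ≤ x ^ (w.re - 1) := Real.rpow_nonneg (by linarith) _
  have h2 : (1 - x⁻¹) ^ (2*j) ≤ (x-1)^j / 4^j := by
    rw [pow_mul, ← div_pow]
    apply pow_le_pow_left₀ (by positivity)
    have : (1 - x⁻¹)^2 = (x-1)^2/x^2 := by field_simp
    rw [this, div_le_div_iff₀ (by positivity) (by norm_num)]
    nlinarith [mul_nonneg (by linarith : 0 ≤ x - 1) (sq_nonneg (x-2))]
  have h3 : 0 ≤ (1 - x⁻¹) ^ (2*j) := by rw [pow_mul]; positivity
  have hE := Real.exp_pos (-p * (x-1))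
  calc _ = Real.exp (-p * (x-1)) * (x ^ (w.re - 1) * (1 - x⁻¹) ^ (2*j)) := by ring
    _ ≤ Real.exp (-p * (x-1)) * (1 * ((x-1)^j / 4^j)) := by gcongr
    _ = _ := by ring

end G2
open Complex
namespace G2
open MeasureTheory Set Filter Topology

lemma W_bounds2 {x : ℝ} (hx : 1 ≤ x) :
    2 * Real.exp (-Real.pi * x) + 2 * Real.exp (-(4 * Real.pi) * x) ≤ W x ∧
    W x ≤ 2 * Real.exp (-Real.pi * x) + 2 * Real.exp (-(4 * Real.pi) * x)
      + 4 * Real.exp (-(9 * Real.pi) * x) := by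
  have h := W_hasSum (by linarith : (0:ℝ) < x)
  have h1 := (hasSum_nat_add_iff' 2).mpr h
  simp only [Finset.sum_range_succ, Finset.range_zero, Finset.sum_empty, Nat.cast_add, Nat.cast_one, Nat.cast_zero, Nat.cast_ofNat] at h1
  have e0 : (2:ℝ) * Real.exp (-Real.pi * (0 + 1) ^ 2 * x) = 2 * Real.exp (-Real.pi * x) := by
    norm_num
  have e1 : (2:ℝ) * Real.exp (-Real.pi * (1 + 1) ^ 2 * x) = 2 * Real.exp (-(4 * Real.pi) * x) := by
    ring_nf
  rw [e0, e1] at h1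
  have hpi := Real.pi_gt_three
  constructor
  · have := h1.nonneg (fun n => by positivity)
    linarith
  · have hq : Real.exp (-(7 * Real.pi * x)) ≤ 1 / 2 := by
      have : (2:ℝ) ≤ Real.exp (7 * Real.pi * x) := by
        have := Real.add_one_le_exp (7 * Real.pi * x)
        nlinarith
      rw [Real.exp_neg, one_div]
      exact inv_anti₀ (by norm_num) this
    have hg := (hasSum_geometric_of_lt_one (Real.exp_pos _).le
      (lt_of_le_of_lt hq (by norm_num))).mul_left (2 * Real.exp (-(9 * Real.pi) * x))
    have hle := hasSum_le (fun n => ?_) h1 hg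
    · have : (1 - Real.exp (-(7 * Real.pi * x)))⁻¹ ≤ 2 := by
        rw [inv_le_comm₀ (by linarith) (by norm_num)]; linarith
      have h4 := Real.exp_pos (-(9 * Real.pi) * x)
      nlinarith
    · rw [← Real.exp_nat_mul, mul_assoc (2:ℝ) (Real.exp _) (Real.exp _), ← Real.exp_add]
      gcongr
      have : (0:ℝ) ≤ (n:ℝ)^2 - n := by
        rcases Nat.eq_zero_or_pos n with h | h
        · simp [h]
        · have : (1:ℝ) ≤ n := by exact_mod_cast h
          nlinarith
      nlinarith [mul_nonneg (mul_nonneg Real.pi_pos.le (by linarith : (0:ℝ) ≤ x)) this]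

lemma exp_diff {x ε p p' : ℝ} (hx : 0 ≤ x) (h1 : p ≤ p') (h2 : p' ≤ p + ε) :
    0 ≤ Real.exp (-p * x) - Real.exp (-p' * x) ∧
    Real.exp (-p * x) - Real.exp (-p' * x) ≤ ε * x * Real.exp (-p * x) := by
  have e : Real.exp (-p' * x) = Real.exp (-p * x) * Real.exp (-(p' - p) * x) := by
    rw [← Real.exp_add]; ring_nf
  have a1 := Real.add_one_le_exp (-(p' - p) * x)
  have a2 : Real.exp (-(p' - p) * x) ≤ 1 := Real.exp_le_one_iff.mpr (by nlinarith)
  have a0 := Real.exp_pos (-p * x)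
  rw [e]
  constructor
  · nlinarith
  · have : (1 - Real.exp (-(p' - p) * x)) ≤ ε * x := by nlinarith
    nlinarith

lemma q_bounds : 0.04321390670 < Real.exp (-(355/113)) ∧ Real.exp (-(355/113)) < 0.04321390676 := by
  have e : Real.exp (-(355/113)) ^ 113 * Real.exp 1 ^ 355 = 1 := by
    rw [← Real.exp_nat_mul, ← Real.exp_nat_mul, ← Real.exp_add]
    norm_num
  have l := Real.exp_one_gt_d9
  have u := Real.exp_one_lt_d9
  have q0 := Real.exp_pos (-(355/113))
  have e0 := Real.exp_pos 1
  constructor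
  · by_contra! h
    have a := pow_le_pow_left₀ q0.le h 113
    have b := pow_le_pow_left₀ e0.le u.le 355
    have c := mul_le_mul a b (by positivity) (by positivity)
    rw [e, show (355:ℕ) = 71 * 5 from rfl, pow_mul] at c
    norm_num at c
  · by_contra! h
    have a := pow_le_pow_left₀ (by norm_num) h 113
    have b := pow_le_pow_left₀ (by norm_num) l.le 355
    have c := mul_le_mul a b (by positivity) (by positivity)
    rw [e, show (355:ℕ) = 71 * 5 from rfl, pow_mul] at c
    norm_num at c

lemma D_bound {x : ℝ} (hx : 1 ≤ x) :
    |W x / 2 - Real.exp (-(355/113) * x) - Real.exp (-(1420/113) * x)| ≤ 1.2e-8 * (x * Real.exp (-3 * (x - 1))) := by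
  obtain ⟨l, u⟩ := W_bounds2 hx
  have p1 := Real.pi_gt_d20
  have p2 := Real.pi_lt_d20
  have d1 := exp_diff (x := x) (ε := 2.7e-7) (p := Real.pi) (p' := 355/113) (by linarith) (by norm_num at *; linarith) (by norm_num at *; linarith)
  have d2 := exp_diff (x := x) (ε := 10.8e-7) (p := 4*Real.pi) (p' := 1420/113) (by linarith) (by norm_num at *; linarith) (by norm_num at *; linarith)
  set E := Real.exp (-3 * (x - 1))
  have hE : 0 < E := Real.exp_pos _
  have key : ∀ p : ℝ, 3 ≤ p → Real.exp (-p * x) ≤ Real.exp (-p) * E := by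
    intro p hp
    rw [← Real.exp_add]
    apply Real.exp_le_exp.mpr; nlinarith
  have q := q_bounds.2
  have q1 : Real.exp (-Real.pi) ≤ 0.0433 := by
    have : Real.exp (-Real.pi) - Real.exp (-(355/113)) ≤ 2.7e-7 * Real.exp (-Real.pi) := by
      have := (exp_diff (x := 1) (ε := 2.7e-7) (p := Real.pi) (p' := 355/113) (by norm_num) (by norm_num at *; linarith) (by norm_num at *; linarith)).2
      simpa using this
    linarith
  have q0 := Real.exp_pos (-Real.pi)
  have q4 : Real.exp (-(4*Real.pi)) ≤ 1e-5 := by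
    have : Real.exp (-(4*Real.pi)) = Real.exp (-Real.pi) ^ 4 := by
      rw [← Real.exp_nat_mul]; ring_nf
    rw [this]
    calc _ ≤ (0.0433:ℝ)^4 := pow_le_pow_left₀ q0.le q1 4
      _ ≤ _ := by norm_num
  have q9 : Real.exp (-(9*Real.pi)) ≤ 1e-12 := by
    have : Real.exp (-(9*Real.pi)) = Real.exp (-Real.pi) ^ 9 := by
      rw [← Real.exp_nat_mul]; ring_nf
    rw [this]
    calc _ ≤ (0.0433:ℝ)^9 := pow_le_pow_left₀ q0.le q1 9
      _ ≤ _ := by norm_num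
  have k1 := key Real.pi (by linarith)
  have k4 := key (4*Real.pi) (by linarith)
  have k9 := key (9*Real.pi) (by linarith)
  have m1 : Real.exp (-Real.pi * x) ≤ 0.0433 * E := k1.trans (by gcongr)
  have m4 : Real.exp (-(4*Real.pi) * x) ≤ 1e-5 * E := k4.trans (by gcongr)
  have m9 : Real.exp (-(9*Real.pi) * x) ≤ 1e-12 * E := k9.trans (by gcongr)
  have t1 : 2.7e-7 * x * Real.exp (-Real.pi * x) ≤ 2.7e-7 * x * (0.0433 * E) := by gcongr
  have t4 : 10.8e-7 * x * Real.exp (-(4*Real.pi) * x) ≤ 10.8e-7 * x * (1e-5 * E) := by gcongr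
  have xE : E ≤ x * E := by nlinarith
  rw [abs_le]
  have : 0 < x * E := by positivity
  constructor
  · linarith [d1.1, d2.1]
  · linarith [d1.2, d2.2]

lemma Gk0_eq (p : ℝ) (z : ℂ) : (Real.exp (-p) : ℂ) * Gk p z 0 =
    ∫ x in Ioi (1:ℝ), (x:ℂ) ^ (z - 1) * (Real.exp (-p * x) : ℂ) := by
  unfold Gk
  rw [← integral_const_mul]
  congr 1; ext x
  unfold ph
  have : Real.exp (-p * x) = Real.exp (-p) * Real.exp (-p * (x-1)) := by
    rw [← Real.exp_add]; ring_nf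
  rw [this]; push_cast; ring

lemma mellin_approx {z : ℂ} (hz : z.re ≤ 1) :
    ‖mellin A z / 2 - ((Real.exp (-(355/113)) : ℂ) * Gk (355/113) z 0
      + (Real.exp (-(1420/113)) : ℂ) * Gk (1420/113) z 0)‖ ≤ 5.4e-9 := by
  rw [Gk0_eq, Gk0_eq, mellin_A, ← integral_div]
  have i0 := (int_W (z-1)).div_const 2
  have i1 := int_exp_cpow (by norm_num : (0:ℝ) < 355/113) (z-1)
  have i2 := int_exp_cpow (by norm_num : (0:ℝ) < 1420/113) (z-1)
  have i12 : IntegrableOn (fun x : ℝ => (x:ℂ) ^ (z - 1) * (Real.exp (-(355/113) * x) : ℂ) +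
    (x:ℂ) ^ (z - 1) * (Real.exp (-(1420/113) * x) : ℂ)) (Ioi 1) := i1.add i2
  rw [← integral_add i1 i2, ← integral_sub i0 i12]
  have j1 : IntegrableOn (fun x : ℝ => 1.2e-8 * (x * Real.exp (-3 * (x-1)))) (Ioi 1) := by
    refine (((Mj_int (by norm_num : (0:ℝ)<3) 0).add (Mj_int (by norm_num : (0:ℝ)<3) 1)).const_mul 1.2e-8).congr ?_
    filter_upwards with x
    simp only [pow_zero, mul_one, pow_one, Pi.add_apply]; ring
  have e1 : ∫ x in Ioi (1:ℝ), 1.2e-8 * (x * Real.exp (-3 * (x-1))) ≤ 5.4e-9 := by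
    have : ∫ x in Ioi (1:ℝ), x * Real.exp (-3 * (x-1)) = 4/9 := by
      have := integral_add (Mj_int (by norm_num : (0:ℝ)<3) 0) (Mj_int (by norm_num : (0:ℝ)<3) 1)
      rw [Mj (by norm_num), Mj (by norm_num)] at this
      norm_num at this
      rw [← this]
      congr 1; ext x; ring_nf
    rw [integral_const_mul, this]; norm_num
  refine (norm_integral_le_of_norm_le j1 ?_).trans e1
  filter_upwards [ae_restrict_mem measurableSet_Ioi] with x hx
  have hx' : (1:ℝ) < x := hx
  have : (x:ℂ) ^ (z - 1) * (W x : ℂ) / 2 - ((x:ℂ) ^ (z - 1) * (Real.exp (-(355/113) * x) : ℂ) +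
    (x:ℂ) ^ (z - 1) * (Real.exp (-(1420/113) * x) : ℂ)) = (x:ℂ) ^ (z - 1) *
     ((W x / 2 - Real.exp (-(355/113) * x) - Real.exp (-(1420/113) * x) : ℝ) : ℂ) := by
    push_cast; ring
  rw [this, norm_mul, norm_cpow' hx, norm_real, Real.norm_eq_abs]
  have h1 : x ^ ((z-1).re) ≤ 1 := Real.rpow_le_one_of_one_le_of_nonpos hx'.le (by simp; linarith)
  exact (mul_le_of_le_one_left (abs_nonneg _) h1).trans (D_bound hx'.le)

lemma Gk0_norm {p : ℝ} (hp : 0 < p) {w : ℂ} (hw : w.re ≤ 1) : ‖Gk p w 0‖ ≤ 1 / p := by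
  simpa using Gk_bound hp hw 0

lemma xi0_approx {s : ℂ} (h1 : s.re ≤ 2) (h2 : -1 ≤ s.re) {j1 j1' j2 j2' : ℂ}
    (a1 : ‖Gk (355/113) (s/2) 0 - j1‖ ≤ 2e-8) (a2 : ‖Gk (355/113) ((1-s)/2) 0 - j1'‖ ≤ 2e-8)
    (b1 : ‖Gk (1420/113) (s/2) 0 - j2‖ ≤ 2e-4) (b2 : ‖Gk (1420/113) ((1-s)/2) 0 - j2'‖ ≤ 2e-4) :
    ‖completedRiemannZeta₀ s - (0.04321390673 * (j1 + j1') + 0.00000348735 * (j2 + j2'))‖ ≤ 2e-8 := by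
  have r1 : (s/2).re ≤ 1 := by simp; linarith
  have r2 : ((1-s)/2).re ≤ 1 := by simp; linarith
  rw [xi0_eq]
  have m1 := mellin_approx r1
  have m2 := mellin_approx r2
  have g1 := Gk0_norm (by norm_num : (0:ℝ) < 355/113) r1
  have g2 := Gk0_norm (by norm_num : (0:ℝ) < 355/113) r2
  have g3 := Gk0_norm (by norm_num : (0:ℝ) < 1420/113) r1
  have g4 := Gk0_norm (by norm_num : (0:ℝ) < 1420/113) r2
  obtain ⟨ql, qu⟩ := q_bounds
  have q4 : Real.exp (-(1420/113)) = Real.exp (-(355/113)) ^ 4 := by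
    rw [← Real.exp_nat_mul]; ring_nf
  have Ql : 0.0000034873 < Real.exp (-(1420/113)) := by
    rw [q4]; refine lt_of_lt_of_le ?_ (pow_le_pow_left₀ (by norm_num) ql.le 4); norm_num
  have Qu : Real.exp (-(1420/113)) < 0.0000034874 := by
    rw [q4]; refine lt_of_le_of_lt (pow_le_pow_left₀ (Real.exp_pos _).le qu.le 4) ?_; norm_num
  have step : ∀ {q q' d d' : ℝ} {G j : ℂ}, |q - q'| ≤ d → ‖G‖ ≤ d' → 0 ≤ d' →
      ‖(q:ℂ) * G - q' * j‖ ≤ d * d' + |q'| * ‖G - j‖ := by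
    intro q q' d d' G j hd hG hd'
    have : (q:ℂ) * G - q' * j = ((q - q' : ℝ) : ℂ) * G + (q':ℂ) * (G - j) := by push_cast; ring
    rw [this]
    refine (norm_add_le _ _).trans ?_
    rw [norm_mul, norm_mul, norm_real, norm_real, Real.norm_eq_abs, Real.norm_eq_abs]
    gcongr
    exact (abs_nonneg _).trans hd
  have dq : |Real.exp (-(355/113)) - 0.04321390673| ≤ 3e-11 := by
    rw [abs_le]; constructor <;> linarith
  have dQ : |Real.exp (-(1420/113)) - 0.00000348735| ≤ 5e-11 := by
    rw [abs_le]; constructor <;> linarith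
  have s1 := step (j := j1) dq g1 (by norm_num)
  have s2 := step (j := j1') dq g2 (by norm_num)
  have s3 := step (j := j2) dQ g3 (by norm_num)
  have s4 := step (j := j2') dQ g4 (by norm_num)
  rw [abs_of_pos (by norm_num)] at s1 s2 s3 s4
  push_cast at *
  generalize mellin A (s/2) = M1 at *
  generalize mellin A ((1-s)/2) = M2 at *
  generalize Gk (355/113) (s/2) 0 = G1 at *
  generalize Gk (355/113) ((1-s)/2) 0 = G2 at *
  generalize Gk (1420/113) (s/2) 0 = G3 at *
  generalize Gk (1420/113) ((1-s)/2) 0 = G4 at *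
  generalize cexp (-(355/113)) = q at *
  generalize cexp (-(1420/113)) = Q at *
  have e : (M1 + M2) / 2 - (0.04321390673 * (j1 + j1') + 0.00000348735 * (j2 + j2'))
    = (M1/2 - (q * G1 + Q * G3)) + (M2/2 - (q * G2 + Q * G4)) + (q * G1 - 0.04321390673 * j1)
      + (q * G2 - 0.04321390673 * j1') + (Q * G3 - 0.00000348735 * j2) + (Q * G4 - 0.00000348735 * j2') := by ring
  rw [e]
  have n1 := norm_add_le ((M1/2 - (q * G1 + Q * G3)) + (M2/2 - (q * G2 + Q * G4)) + (q * G1 - 0.04321390673 * j1)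
      + (q * G2 - 0.04321390673 * j1') + (Q * G3 - 0.00000348735 * j2)) (Q * G4 - 0.00000348735 * j2')
  have n2 := norm_add_le ((M1/2 - (q * G1 + Q * G3)) + (M2/2 - (q * G2 + Q * G4)) + (q * G1 - 0.04321390673 * j1)
      + (q * G2 - 0.04321390673 * j1')) (Q * G3 - 0.00000348735 * j2)
  have n3 := norm_add_le ((M1/2 - (q * G1 + Q * G3)) + (M2/2 - (q * G2 + Q * G4)) + (q * G1 - 0.04321390673 * j1))
      (q * G2 - 0.04321390673 * j1')
  have n4 := norm_add_le ((M1/2 - (q * G1 + Q * G3)) + (M2/2 - (q * G2 + Q * G4))) (q * G1 - 0.04321390673 * j1)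
  have n5 := norm_add_le (M1/2 - (q * G1 + Q * G3)) (M2/2 - (q * G2 + Q * G4))
  norm_num at *
  linarith

end G2
open Complex
namespace G2
open MeasureTheory Set Filter Topology

/-- Gaussian integers, bare -/
structure GI where
  re : ℤ
  im : ℤ

namespace GI
def add (a b : GI) : GI := ⟨a.re + b.re, a.im + b.im⟩
def sub (a b : GI) : GI := ⟨a.re - b.re, a.im - b.im⟩
def mul (a b : GI) : GI := ⟨a.re * b.re - a.im * b.im, a.re * b.im + a.im * b.re⟩
def smul (k : ℤ) (b : GI) : GI := ⟨k * b.re, k * b.im⟩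
def nsq (a : GI) : ℤ := a.re * a.re + a.im * a.im
noncomputable def C (a : GI) : ℂ := (a.re : ℂ) + (a.im : ℂ) * I
lemma C_add (a b : GI) : (a.add b).C = a.C + b.C := by simp [C, add]; ring
lemma C_sub (a b : GI) : (a.sub b).C = a.C - b.C := by simp [C, sub]; ring
lemma C_mul (a b : GI) : (a.mul b).C = a.C * b.C := by
  simp [C, mul]; ring_nf; simp; ring
lemma C_smul (k : ℤ) (b : GI) : (smul k b).C = k * b.C := by simp [C, smul]; ring
lemma C_nsq (a : GI) : ‖a.C‖ ^ 2 = a.nsq := by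
  rw [Complex.sq_norm, Complex.normSq_apply]
  simp [C, nsq]
end GI

structure CS where
  n1 : GI
  d1 : GI
  n0 : GI
  d0 : GI
  pi : GI

def cfi (P S wx wy : ℤ) : CS :=
  ⟨⟨-S, 0⟩, ⟨P + S - wx, -wy⟩, ⟨0, 0⟩, ⟨1, 0⟩, ⟨1, 0⟩⟩

def cfs (P S wx wy : ℤ) (k : ℤ) (c : CS) : CS :=
  ⟨((⟨P + S - wx + 2 * (k+1) * S, -wy⟩ : GI).mul c.n1).sub (GI.smul ((k+1) * S) ((⟨(k+1) * S - wx, -wy⟩ : GI).mul c.n0)),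
   ((⟨P + S - wx + 2 * (k+1) * S, -wy⟩ : GI).mul c.d1).sub (GI.smul ((k+1) * S) ((⟨(k+1) * S - wx, -wy⟩ : GI).mul c.d0)),
   c.n1, c.d1, c.pi.mul ⟨(k+1) * S - wx, -wy⟩⟩

def cf (P S wx wy : ℤ) : ℕ → CS
  | 0 => cfi P S wx wy
  | k+1 => cfs P S wx wy k (cf P S wx wy k)

/-- approximant, scaled by 10^9 -/
def jh (c : CS) : GI :=
  let g := c.n0.mul ⟨c.d0.re, - c.d0.im⟩
  ⟨-(1000000000 * g.re / c.d0.nsq), -(1000000000 * g.im / c.d0.nsq)⟩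

def jchk (P S : ℤ) (j : ℕ) (E : ℤ) (c : CS) : Bool :=
  let Bn : ℤ := j.factorial * S ^ (j+1)
  let Bd : ℤ := P ^ (j+1) * 4 ^ j
  decide (0 < c.d0.nsq) && decide (2 * ((GI.smul 1000000000 c.n0).add (c.d0.mul (jh c))).nsq * (Bd * Bd) +
    2 * (1000000000 * 1000000000) * (Bn * Bn) * c.pi.nsq ≤ E * E * c.d0.nsq * (Bd * Bd))

def jok (P wx wy : ℤ) (j : ℕ) (E : ℤ) : Bool := jchk P 226000 j E (cf P 226000 wx wy (2*j))


lemma cf_inv {P S wx wy : ℤ} (hP : 0 < P) (hS : 0 < S) (k : ℕ) :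
    let c := cf P S wx wy k
    let p : ℝ := P / S
    let w : ℂ := (wx + wy * I) / S
    c.n0.C + c.d0.C * Gk p w 0 = c.pi.C * Gk p w k ∧
    c.n1.C + c.d1.C * Gk p w 0 = c.pi.C * ((k+1) * S - (wx + wy * I)) * Gk p w (k+1) := by
  have hP' : (0:ℝ) < P := by exact_mod_cast hP
  have hS' : (0:ℝ) < S := by exact_mod_cast hS
  have hp : (0:ℝ) < P / S := by positivity
  have hSc : (S:ℂ) ≠ 0 := by exact_mod_cast hS.ne'
  induction k with
  | zero =>
    intro c p w
    have r := rec0 hp w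
    have hw : (wx + wy * I) = S * w := by simp only [w]; field_simp
    have hpc : ((P / S : ℝ) : ℂ) * S = P := by push_cast; field_simp
    refine ⟨by simp [c, cf, cfi, GI.C], ?_⟩
    rw [hw]
    have e1 : c.n1.C = -S := by simp [c, cf, cfi, GI.C]
    have e2 : c.d1.C = P + S - S * w := by
      rw [← hw]; simp [c, cf, cfi, GI.C]; ring
    have e3 : c.pi.C = 1 := by simp [c, cf, cfi, GI.C]
    rw [e1, e2, e3]
    simp only [p]
    push_cast
    push_cast at r hpc
    linear_combination (-(S:ℂ)) * r - Gk (P/S) w 0 * hpc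
  | succ k ih =>
    intro c p w
    obtain ⟨i0, i1⟩ := ih
    have r := recS hp w k
    have hw : (wx + wy * I) = S * w := by simp only [w]; field_simp
    have hpc : ((P / S : ℝ) : ℂ) * S = P := by push_cast; field_simp
    set c' := cf P S wx wy k with hc'
    have ec : c = cfs P S wx wy k c' := rfl
    have f1 : (⟨P + S - wx + 2 * (k+1) * S, -wy⟩ : GI).C = P + S - S * w + 2 * (k+1) * S := by
      rw [← hw]; simp [GI.C]; ring
    have f2 : (⟨(k+1) * S - wx, -wy⟩ : GI).C = (k+1) * S - S * w := by
      rw [← hw]; simp [GI.C]; ring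
    have e0 : c.n0 = c'.n1 := by rw [ec]; rfl
    have e0' : c.d0 = c'.d1 := by rw [ec]; rfl
    have e3 : c.pi.C = c'.pi.C * ((k+1) * S - S * w) := by
      rw [ec, ← f2, ← GI.C_mul]; rfl
    have e1 : c.n1.C = (P + S - S * w + 2 * (k+1) * S) * c'.n1.C - (k+1) * S * (((k+1) * S - S * w) * c'.n0.C) := by
      rw [ec, ← f2, ← f1]; simp only [cfs, GI.C_sub, GI.C_mul, GI.C_smul]; push_cast; ring
    have e2 : c.d1.C = (P + S - S * w + 2 * (k+1) * S) * c'.d1.C - (k+1) * S * (((k+1) * S - S * w) * c'.d0.C) := by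
      rw [ec, ← f2, ← f1]; simp only [cfs, GI.C_sub, GI.C_mul, GI.C_smul]; push_cast; ring
    have hw' : (S * w) / S = w := by field_simp
    rw [hw] at i1 ⊢
    try rw [hw'] at i1
    simp only [p]
    refine ⟨by rw [e0, e0', e3]; linear_combination i1, ?_⟩
    rw [e1, e2, e3]
    push_cast
    push_cast at r hpc i0 i1
    rw [show k + 1 + 1 = k + 2 from rfl]
    linear_combination (P + S - S * w + 2 * (k+1) * S) * i1 - (k+1) * S * ((k+1) * S - S * w) * i0
      - c'.pi.C * ((k+1) * S - S * w) * S * r - c'.pi.C * ((k+1) * S - S * w) * Gk (P/S) w (k+1) * hpc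

lemma jchk_sound {P wx wy : ℤ} (hP : 0 < P) {j : ℕ} {E : ℤ} (hE : 0 ≤ E)
    {w : ℂ} (hw : w = (wx + wy * I) / 226000) (hw1 : w.re ≤ 1) (h : jok P wx wy j E = true) :
    ‖Gk (P/226000) w 0 - (jh (cf P 226000 wx wy (2*j))).C / 1000000000‖ ≤ E / 1000000000 := by
  have i := (cf_inv (wx := wx) (wy := wy) hP (by norm_num : (0:ℤ) < 226000) (2*j)).1
  have hP' : (0:ℝ) < P := by exact_mod_cast hP
  have b := Gk_bound (by positivity : (0:ℝ) < P/226000) hw1 j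
  unfold jok jchk at h
  simp only [Bool.and_eq_true, decide_eq_true_eq] at h
  set c := cf P 226000 wx wy (2*j)
  push_cast at i
  rw [← hw] at i
  generalize (jh c) = y at *
  obtain ⟨h0, h1⟩ := h
  have h0' : (0:ℝ) < c.d0.nsq := by exact_mod_cast h0
  have h1' : (2:ℝ) * ((GI.smul 1000000000 c.n0).add (c.d0.mul y)).nsq * ((P ^ (j+1) * 4 ^ j) * (P ^ (j+1) * 4 ^ j)) +
    2 * (1000000000 * 1000000000) * ((j.factorial * 226000 ^ (j+1)) * (j.factorial * 226000 ^ (j+1))) * c.pi.nsq ≤ E * E * c.d0.nsq * ((P ^ (j+1) * 4 ^ j) * (P ^ (j+1) * 4 ^ j)) := by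
    exact_mod_cast h1
  rw [← GI.C_nsq] at h0'
  rw [← GI.C_nsq, ← GI.C_nsq, ← GI.C_nsq, GI.C_add, GI.C_mul, GI.C_smul] at h1'
  have hd : 0 < ‖c.d0.C‖ := by
    by_contra! hh
    have : ‖c.d0.C‖ = 0 := le_antisymm hh (norm_nonneg _)
    rw [this] at h0'; norm_num at h0'
  set G := Gk (P/226000) w 0
  set H := Gk (P/226000) w (2*j)
  have b2 : ‖H‖ * (P ^ (j+1) * 4 ^ j) ≤ j.factorial * 226000 ^ (j+1) := by
    rw [div_pow, div_div_eq_mul_div, div_div] at b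
    rwa [le_div_iff₀ (by positivity)] at b
  set Bn : ℝ := j.factorial * 226000 ^ (j+1)
  set Bd : ℝ := P ^ (j+1) * 4 ^ j
  have hBd : 0 < Bd := by positivity
  have hBn : 0 ≤ Bn := by positivity
  have key : c.d0.C * (G - y.C / 1000000000) * 1000000000 = 1000000000 * (c.pi.C * H) - (1000000000 * c.n0.C + c.d0.C * y.C) := by
    rw [← i]; ring
  have kn := congrArg norm key
  rw [norm_mul, norm_mul] at kn
  have kn2 : ‖1000000000 * (c.pi.C * H) - (1000000000 * c.n0.C + c.d0.C * y.C)‖ ≤ 1000000000 * (‖c.pi.C‖ * ‖H‖) + ‖1000000000 * c.n0.C + c.d0.C * y.C‖ := by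
    refine (norm_sub_le _ _).trans ?_
    rw [norm_mul, norm_mul]; simp
  simp only [Complex.norm_ofNat] at kn
  push_cast at h1'
  set N1 := ‖1000000000 * c.n0.C + c.d0.C * y.C‖
  have hE' : (0:ℝ) ≤ E := by exact_mod_cast hE
  have sq : (N1 * Bd + 1000000000 * Bn * ‖c.pi.C‖)^2 ≤ (E * ‖c.d0.C‖ * Bd)^2 := by
    nlinarith [sq_nonneg (N1 * Bd - 1000000000 * Bn * ‖c.pi.C‖)]
  have sq2 := abs_le_of_sq_le_sq' sq (by positivity)
  have s3 : ‖c.pi.C‖ * ‖H‖ * Bd ≤ ‖c.pi.C‖ * Bn := by rw [mul_assoc]; gcongr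
  have fin : ‖c.d0.C‖ * ‖G - y.C / 1000000000‖ * 1000000000 * Bd ≤ E * ‖c.d0.C‖ * Bd := by
    rw [kn]
    calc _ ≤ (1000000000 * (‖c.pi.C‖ * ‖H‖) + N1) * Bd := by gcongr
      _ ≤ _ := by nlinarith [sq2.2]
  rw [le_div_iff₀ (by norm_num)]
  have f2 := le_of_mul_le_mul_right fin hBd
  have f3 : ‖c.d0.C‖ * (‖G - y.C / 1000000000‖ * 1000000000) ≤ ‖c.d0.C‖ * E := by linarith
  exact le_of_mul_le_mul_left f3 hd

end G2
open Complex
namespace G2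
open MeasureTheory Set Filter Topology

def xih (wx T : ℤ) : GI :=
  (GI.smul 4321390673 ((jh (cf 710000 226000 wx (113*T) (2*14))).add (jh (cf 710000 226000 (113000-wx) (-113*T) (2*14))))).add
  (GI.smul 348735 ((jh (cf 2840000 226000 wx (113*T) (2*4))).add (jh (cf 2840000 226000 (113000-wx) (-113*T) (2*4)))))

def xok (wx T : ℤ) : Bool :=
  jok 710000 wx (113*T) 14 20 && jok 710000 (113000-wx) (-113*T) 14 20 &&
  jok 2840000 wx (113*T) 4 200000 && jok 2840000 (113000-wx) (-113*T) 4 200000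

lemma xi_sound {wx T : ℤ} {s : ℂ} (hs : s = (wx + 113 * T * I) / 113000) (h1 : s.re ≤ 2) (h2 : -1 ≤ s.re)
    (h : xok wx T = true) : ‖completedRiemannZeta₀ s - (xih wx T).C / 10^20‖ ≤ 2e-8 := by
  unfold xok at h
  simp only [Bool.and_eq_true] at h
  obtain ⟨⟨⟨a1, a2⟩, a3⟩, a4⟩ := h
  have r1 : (s/2).re ≤ 1 := by simp; linarith
  have r2 : ((1-s)/2).re ≤ 1 := by simp; linarith
  have w1 : s/2 = ((wx:ℤ) + ((113*T : ℤ):ℂ) * I) / 226000 := by rw [hs]; push_cast; ring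
  have w2 : (1-s)/2 = ((113000-wx : ℤ) + ((-113*T : ℤ):ℂ) * I) / 226000 := by rw [hs]; push_cast; ring
  have b1 := jchk_sound (by norm_num) (by norm_num) w1 r1 a1
  have b2 := jchk_sound (by norm_num) (by norm_num) w2 r2 a2
  have b3 := jchk_sound (by norm_num) (by norm_num) w1 r1 a3
  have b4 := jchk_sound (by norm_num) (by norm_num) w2 r2 a4
  rw [show ((710000:ℤ):ℝ)/226000 = 355/113 by norm_num, show (((20:ℤ):ℝ)/1000000000) = 2e-8 by norm_num] at b1 b2
  rw [show ((2840000:ℤ):ℝ)/226000 = 1420/113 by norm_num, show (((200000:ℤ):ℝ)/1000000000) = 2e-4 by norm_num] at b3 b4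
  have := xi0_approx h1 h2 b1 b2 b3 b4
  convert this using 3
  simp only [xih, GI.C_add, GI.C_smul]
  push_cast
  ring

def hchk (T hx hy e : ℤ) : Bool :=
  let x : GI := (⟨10^26, 0⟩ : GI).add (GI.smul (-(T*T+250000)) (xih 56500 T))
  let y : GI := (⟨10^26, 0⟩ : GI).add ((⟨750000 - T*T, 2000*T⟩ : GI).mul (xih 169500 T))
  let a : GI := (GI.smul (10^6) x).sub ((⟨hx, hy⟩ : GI).mul y)
  let b : ℤ := (T*T+1250000)*(404*10^16)
  xok 56500 T && xok 169500 T && decide (hx*hx+hy*hy ≤ 10^12) && decide (0 ≤ e ∧ e ≤ 20000) &&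
  decide (10100 * a.nsq + 101 * (b*b) ≤ 100*(e*e)*y.nsq)

lemma hchk_sound {T hx hy e : ℤ} (h : hchk T hx hy e = true) :
    ‖hl (T/1000) - (hx + hy * I) / 10^6‖ ≤ e / 10^6 := by
  unfold hchk at h
  simp only [Bool.and_eq_true, decide_eq_true_eq] at h
  obtain ⟨⟨⟨⟨c1, c2⟩, c3⟩, c4, c5⟩, c6⟩ := h
  set s : ℂ := 1/2 + ((T/1000 : ℝ) : ℂ) * I with hs
  have q1 := xi_sound (s := s) (wx := 56500) (T := T) (by rw [hs]; push_cast; ring) (by simp [hs]; norm_num) (by simp [hs]; norm_num) c1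
  have q2 := xi_sound (s := s+1) (wx := 169500) (T := T) (by rw [hs]; push_cast; ring) (by simp [hs]; norm_num) (by simp [hs]; norm_num) c2
  have hY : X (s+1) ≠ 0 := X_ne_zero (by simp [hs])
  have eh : hl (T/1000) = X s / X (s+1) := rfl
  rw [eh]
  generalize xih 56500 T = u at *
  generalize xih 169500 T = v at *
  set x : GI := (⟨10^26, 0⟩ : GI).add (GI.smul (-(T*T+250000)) u)
  set y : GI := (⟨10^26, 0⟩ : GI).add ((⟨750000 - T*T, 2000*T⟩ : GI).mul v)
  have ex : x.C / 10^26 = 1 + s * (s-1) * (u.C / 10^20) := by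
    simp only [x, GI.C_add, GI.C_smul, hs]; simp only [GI.C]; push_cast; ring_nf; simp; ring
  have ey : y.C / 10^26 = 1 + (s+1) * (s+1-1) * (v.C / 10^20) := by
    simp only [y, GI.C_add, GI.C_mul, hs]; simp only [GI.C]; push_cast; ring_nf; simp; ring
  set δ : ℝ := (T^2/10^6 + 5/4) * 2e-8
  have n1 : ‖s * (s-1)‖ ≤ T^2/10^6 + 5/4 := by
    have : s * (s-1) = ((-(T^2/10^6 + 1/4) : ℝ) : ℂ) := by rw [hs]; push_cast; ring_nf; simp; ring
    rw [this, norm_real, Real.norm_eq_abs, abs_neg, abs_of_nonneg (by positivity)]; linarith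
  have n2 : ‖(s+1) * (s+1-1)‖ ≤ T^2/10^6 + 5/4 := by
    apply abs_le_of_sq_le_sq' _ (by positivity) |>.2
    rw [Complex.sq_norm, Complex.normSq_apply]
    simp [hs]
    ring_nf
    norm_num
  have dx : ‖X s - x.C / 10^26‖ ≤ δ := by
    rw [ex, X, show ∀ a b c : ℂ, 1 + a * b - (1 + a * c) = a * (b - c) by intros; ring, norm_mul]
    exact mul_le_mul n1 q1 (norm_nonneg _) (by positivity)
  have dy : ‖X (s+1) - y.C / 10^26‖ ≤ δ := by
    rw [ey, X, show ∀ a b c : ℂ, 1 + a * b - (1 + a * c) = a * (b - c) by intros; ring, norm_mul]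
    exact mul_le_mul n2 q2 (norm_nonneg _) (by positivity)
  set ĥ : ℂ := (hx + hy * I) / 10^6 with hh
  have nh : ‖ĥ‖ ≤ 1 := by
    apply abs_le_of_sq_le_sq' _ (by norm_num) |>.2
    have : (hx:ℝ)*hx+hy*hy ≤ 10^12 := by exact_mod_cast c3
    rw [Complex.sq_norm, Complex.normSq_apply]
    have e1 : ĥ.re = hx/10^6 := by rw [hh, show (10:ℂ)^6 = ((10^6 : ℝ):ℂ) by norm_num, div_ofReal_re]; simp
    have e2 : ĥ.im = hy/10^6 := by rw [hh, show (10:ℂ)^6 = ((10^6 : ℝ):ℂ) by norm_num, div_ofReal_im]; simp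
    rw [e1, e2]; linarith
  have c6' : (10100:ℝ) * ((GI.smul (10^6) x).sub ((⟨hx, hy⟩ : GI).mul y)).nsq + 101 * (((T*T+1250000)*(404*10^16))*((T*T+1250000)*(404*10^16))) ≤ 100*(e*e)*y.nsq := by
    exact_mod_cast c6
  rw [← GI.C_nsq, ← GI.C_nsq] at c6'
  have ea : ((GI.smul (10^6) x).sub ((⟨hx, hy⟩ : GI).mul y)).C = 10^32 * (x.C/10^26 - ĥ * (y.C / 10^26)) := by
    simp only [GI.C_sub, GI.C_smul, GI.C_mul, hh]; simp only [GI.C]; push_cast; ring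
  rw [ea, norm_mul, show ‖(10:ℂ)^32‖ = 10^32 by simp] at c6'
  have ey2 : ‖y.C‖ = 10^26 * ‖y.C/10^26‖ := by
    rw [norm_div, show ‖(10:ℂ)^26‖ = 10^26 by simp]; ring
  rw [ey2] at c6'
  generalize x.C / 10^26 = xx at *
  generalize y.C / 10^26 = yy at *
  have c4' : (0:ℝ) ≤ e := by exact_mod_cast c4
  have c5' : (e:ℝ) ≤ 20000 := by exact_mod_cast c5
  set ε : ℝ := e / 10^6 with hε
  have hδ : 0 ≤ δ := by positivity
  have c7 : 101 * ‖xx - ĥ * yy‖^2 + 1.01 * (2.02 * δ)^2 ≤ (ε * ‖yy‖)^2 := by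
    have : (e:ℝ) = 10^6 * ε := by rw [hε]; ring
    have h8 : ((T*T+1250000)*(404*10^16) : ℝ) = 10^32 * (2.02 * δ) := by simp only [δ]; ring
    rw [h8, this] at c6'
    clear_value δ ε
    have h9 : (0:ℝ) < 10^66 := by positivity
    refine le_of_mul_le_mul_left ?_ h9
    refine le_trans (le_of_eq ?_) (c6'.trans (le_of_eq ?_))
    · ring
    · ring
  have c8 : ‖xx - ĥ * yy‖ + 2.02 * δ ≤ ε * ‖yy‖ := by
    apply abs_le_of_sq_le_sq' _ (by positivity) |>.2
    have h9 := sq_nonneg (10 * ‖xx - ĥ * yy‖ - 0.1 * (2.02 * δ))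
    clear_value δ ε
    linarith only [c7, h9]
  have hε2 : ε ≤ 0.02 := by rw [hε]; linarith
  have hε0 : 0 ≤ ε := by positivity
  have c9 : ‖yy‖ ≤ ‖X (s+1)‖ + δ := by
    have := norm_sub_norm_le yy (X (s+1)); rw [norm_sub_rev] at this; linarith
  have c10 : ‖X s - ĥ * X (s+1)‖ ≤ ε * ‖X (s+1)‖ := by
    have : X s - ĥ * X (s+1) = (X s - xx) + (xx - ĥ * yy) - ĥ * (X (s+1) - yy) := by ring
    have h1 := norm_sub_le ((X s - xx) + (xx - ĥ * yy)) (ĥ * (X (s+1) - yy))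
    have h2 := norm_add_le (X s - xx) (xx - ĥ * yy)
    have h3 : ‖ĥ * (X (s+1) - yy)‖ ≤ 1 * δ := by rw [norm_mul]; exact mul_le_mul nh dy (norm_nonneg _) (by norm_num)
    rw [this]
    have h4 : ε * ‖yy‖ ≤ ε * (‖X (s+1)‖ + δ) := by gcongr
    have h5 : ε * δ ≤ 0.02 * δ := by gcongr
    linarith
  have : X s / X (s+1) - ĥ = (X s - ĥ * X (s+1)) / X (s+1) := by field_simp
  rw [this, norm_div, div_le_iff₀ (by positivity)]
  exact c10

end G2
open Complex
namespace G2
open MeasureTheory Set Filter Topology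

noncomputable def aa : ℝ := Real.pi / 3 - 1

noncomputable def Et (t : ℝ) : ℂ :=
  (1 - aa / 2 + aa * t * I) * (1/4 - 3 * t^2 - 2 * t * I) - 2 * hl t * (3/4 - t^2 - 2 * t * I)
    + hl t * hl (3 * t) * (t^2 + 9/4)

noncomputable def Nt (t : ℝ) : ℂ :=
  (1 - 0.04719755 / 2 + 0.04719755 * t * I) * (12 - t^2 - 5/2 * t * I)

lemma hl_le (t : ℝ) : ‖hl t‖ ≤ 1 := hh_le (by simp)

lemma aa_bd : |aa - 0.04719755| ≤ 1e-8 := by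
  have p1 := Real.pi_gt_d20
  have p2 := Real.pi_lt_d20
  rw [aa, abs_le]; norm_num at *; constructor <;> linarith

lemma hspec {T hx hy e : ℤ} (h : hchk T hx hy e = true) {t r m M d : ℝ} (hr : |t - T/1000| ≤ r)
    (hm : 0 ≤ m) (hm2 : (m + e/10^6)^2 ≤ ((hx:ℝ)^2+hy^2)/10^12)
    (hM2 : ((hx:ℝ)^2+hy^2)/10^12 ≤ (M - e/10^6)^2) (he : (e:ℝ)/10^6 ≤ M) (hM : M < 1) (hrM : r * M < 1)
    (hd : r * (1 - m^2) ≤ (d - e/10^6) * (1 - r * M)) :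
    ‖hl t - (((hx/10^6:ℝ):ℂ) + ((hy/10^6:ℝ):ℂ) * I)‖ ≤ d := by
  have s := hchk_sound h
  have e1 : ((hx:ℂ) + hy * I) / 10^6 = (((hx/10^6:ℝ):ℂ) + ((hy/10^6:ℝ):ℂ) * I) := by push_cast; ring
  rw [e1] at s
  set H : ℂ := (((hx/10^6:ℝ):ℂ) + ((hy/10^6:ℝ):ℂ) * I) with hH
  have nH : ‖H‖^2 = ((hx:ℝ)^2+hy^2)/10^12 := by
    rw [Complex.sq_norm, Complex.normSq_apply, hH, add_re, add_im, re_ofReal_mul, im_ofReal_mul, ofReal_re, ofReal_im, I_re, I_im]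
    ring
  have he0 : 0 ≤ (e:ℝ)/10^6 := (norm_nonneg _).trans s
  have g1 : m + e/10^6 ≤ ‖H‖ := by
    refine (abs_le_of_sq_le_sq' ?_ (norm_nonneg _)).2
    rw [nH]; exact hm2
  have g2 : ‖H‖ ≤ M - e/10^6 := by
    refine (abs_le_of_sq_le_sq' ?_ (by linarith)).2
    rw [nH]; exact hM2
  have g3 := abs_norm_sub_norm_le (hl (T/1000)) H
  have g4 := abs_le.mp (g3.trans s)
  have sp := SP (t := t) (t0 := T/1000) hr hm (by linarith [g4.1]) (M := M) (by linarith [g4.2]) hM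
  have : ‖hl t - hl (T/1000)‖ ≤ d - e/10^6 := by
    have := sp.trans hd
    exact le_of_mul_le_mul_right this (by linarith)
  calc ‖hl t - H‖ ≤ ‖hl t - hl (T/1000)‖ + ‖hl (T/1000) - H‖ := norm_sub_le_norm_sub_add_norm_sub _ _ _
    _ ≤ _ := by linarith

lemma Q3_norm (t : ℝ) : ‖(3/4 - t^2 - 2 * t * I : ℂ)‖ ≤ t^2 + 5/4 := by
  apply abs_le_of_sq_le_sq' _ (by positivity) |>.2
  have : (3/4 - t^2 - 2 * t * I : ℂ) = ((3/4 - t^2 : ℝ) : ℂ) + ((-2*t : ℝ) : ℂ) * I := by push_cast; ring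
  rw [this, Complex.sq_norm, Complex.normSq_add_mul_I]
  nlinarith
lemma Q1_norm (t : ℝ) : ‖(1/4 - 3 * t^2 - 2 * t * I : ℂ)‖ ≤ 3 * (t^2 + 1/4) := by
  apply abs_le_of_sq_le_sq' _ (by positivity) |>.2
  have : (1/4 - 3*t^2 - 2 * t * I : ℂ) = ((1/4 - 3*t^2 : ℝ) : ℂ) + ((-2*t : ℝ) : ℂ) * I := by push_cast; ring
  rw [this, Complex.sq_norm, Complex.normSq_add_mul_I]
  nlinarith [sq_nonneg (t^2)]

lemma K_norm (t : ℝ) : ‖((t:ℂ)^2 + 9/4 : ℂ)‖ = t^2 + 9/4 := by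
  have : ((t:ℂ)^2 + 9/4 : ℂ) = ((t^2+9/4 : ℝ) : ℂ) := by push_cast; ring
  rw [this, norm_real, Real.norm_of_nonneg (by positivity)]

lemma g_err {t : ℝ} (ht : 0 ≤ t) :
  ‖(1 - aa / 2 + aa * t * I : ℂ) - (1 - 0.04719755 / 2 + 0.04719755 * t * I)‖ ≤ 1e-8 * (t + 1/2) := by
  have e : (1 - aa / 2 + aa * t * I : ℂ) - (1 - 0.04719755 / 2 + 0.04719755 * t * I) =
    ((aa - 0.04719755 : ℝ) : ℂ) * (((-1/2 : ℝ):ℂ) + ((t : ℝ) : ℂ) * I) := by push_cast; ring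
  rw [e, norm_mul, norm_real, Real.norm_eq_abs]
  have : ‖(((-1/2 : ℝ):ℂ) + ((t : ℝ) : ℂ) * I)‖ ≤ t + 1/2 := by
    apply abs_le_of_sq_le_sq' _ (by positivity) |>.2
    rw [Complex.sq_norm, Complex.normSq_add_mul_I]; nlinarith
  exact mul_le_mul aa_bd this (norm_nonneg _) (by norm_num)

lemma ivl {t x1 y1 x3 y3 d1 d3 η b : ℝ} (h1 : ‖hl t - ((x1:ℂ) + (y1:ℂ) * I)‖ ≤ d1)
    (h3 : ‖hl (3*t) - ((x3:ℂ) + (y3:ℂ) * I)‖ ≤ d3) (hη0 : 0 ≤ η) (hη : x3^2 + y3^2 ≤ η^2) (hb0 : 0 ≤ b)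
    (ht : 0 ≤ t) (ht2 : t ≤ 11)
    (hb : ((1 - 0.04719755/2)^2 + (0.04719755 * t)^2) * ((12 - t^2)^2 + (5/2*t)^2) ≤ b^2)
    (hP : b * (d1 * (2 * (t^2+5/4) + η * (t^2+9/4)) + (d3 + 1e-6) * (t^2+9/4)) + 1/1000 ≤
      ((1 - 0.04719755/2) * (1/4 - 3*t^2) + 2 * (0.04719755 * t) * t - 2 * (x1 * (3/4 - t^2) + 2 * y1 * t)
        + (x1 * x3 - y1 * y3) * (t^2+9/4)) * ((1 - 0.04719755/2) * (12 - t^2) + (0.04719755 * t) * (5/2*t))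
      + ((0.04719755 * t) * (1/4 - 3*t^2) - 2 * (1 - 0.04719755/2) * t - 2 * (y1 * (3/4 - t^2) - 2 * x1 * t)
        + (x1 * y3 + y1 * x3) * (t^2+9/4)) * (-(1 - 0.04719755/2) * (5/2*t) + (0.04719755 * t) * (12 - t^2))) :
    1/1000 ≤ (Et t * (starRingEnd ℂ) (Nt t)).re := by
  set H1 : ℂ := (x1:ℂ) + (y1:ℂ) * I with hH1
  set H3 : ℂ := (x3:ℂ) + (y3:ℂ) * I with hH3
  set Eh : ℂ := (1 - 0.04719755 / 2 + 0.04719755 * t * I) * (1/4 - 3 * t^2 - 2 * t * I) - 2 * H1 * (3/4 - t^2 - 2 * t * I)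
    + H1 * H3 * (t^2 + 9/4) with hEh
  have nH3 : ‖H3‖ ≤ η := by
    apply abs_le_of_sq_le_sq' _ hη0 |>.2
    rw [Complex.sq_norm, hH3, Complex.normSq_add_mul_I]; exact hη
  have nN : ‖Nt t‖ ≤ b := by
    apply abs_le_of_sq_le_sq' _ hb0 |>.2
    have e : Nt t = (((1 - 0.04719755/2 : ℝ):ℂ) + ((0.04719755 * t : ℝ):ℂ) * I) * (((12 - t^2 : ℝ):ℂ) + ((-(5/2*t) : ℝ):ℂ) * I) := by
      unfold Nt; push_cast; ring
    rw [Complex.sq_norm, e, Complex.normSq_mul, Complex.normSq_add_mul_I, Complex.normSq_add_mul_I, neg_sq]; exact hb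
  have diff : Et t - Eh = ((1 - aa / 2 + aa * t * I : ℂ) - (1 - 0.04719755 / 2 + 0.04719755 * t * I)) * (1/4 - 3 * t^2 - 2 * t * I)
    - 2 * (hl t - H1) * (3/4 - t^2 - 2 * t * I) + (hl t * (hl (3*t) - H3) + H3 * (hl t - H1)) * (t^2+9/4) := by
    rw [hEh]; unfold Et; ring
  have nd : ‖Et t - Eh‖ ≤ d1 * (2 * (t^2+5/4) + η * (t^2+9/4)) + (d3 + 1e-6) * (t^2+9/4) := by
    rw [diff]
    refine (norm_add_le _ _).trans ?_
    have a1 := norm_sub_le (((1 - aa / 2 + aa * t * I : ℂ) - (1 - 0.04719755 / 2 + 0.04719755 * t * I)) * (1/4 - 3 * t^2 - 2 * t * I)) (2 * (hl t - H1) * (3/4 - t^2 - 2 * t * I))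
    have a2 : ‖((1 - aa / 2 + aa * t * I : ℂ) - (1 - 0.04719755 / 2 + 0.04719755 * t * I)) * (1/4 - 3 * t^2 - 2 * t * I)‖ ≤ 1e-6 * (t^2+9/4) := by
      rw [norm_mul]
      refine (mul_le_mul (g_err ht) (Q1_norm t) (norm_nonneg _) (by positivity)).trans ?_
      norm_num; nlinarith [sq_nonneg t]
    have a3 : ‖2 * (hl t - H1) * (3/4 - t^2 - 2 * t * I)‖ ≤ 2 * d1 * (t^2+5/4) := by
      rw [norm_mul, norm_mul, Complex.norm_ofNat]
      have := (norm_nonneg _).trans h1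
      exact mul_le_mul (by linarith) (Q3_norm t) (norm_nonneg _) (by positivity)
    have a4 : ‖(hl t * (hl (3*t) - H3) + H3 * (hl t - H1)) * ((t:ℂ)^2+9/4)‖ ≤ (d3 + η * d1) * (t^2+9/4) := by
      rw [norm_mul, K_norm]
      refine mul_le_mul_of_nonneg_right ?_ (by positivity)
      refine (norm_add_le _ _).trans ?_
      rw [norm_mul, norm_mul]
      have b1 : ‖hl t‖ * ‖hl (3*t) - H3‖ ≤ 1 * d3 := mul_le_mul (hl_le t) h3 (norm_nonneg _) (by norm_num)
      have b2 : ‖H3‖ * ‖hl t - H1‖ ≤ η * d1 := mul_le_mul nH3 h1 (norm_nonneg _) hη0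
      linarith
    linarith
  have eP : (Eh * (starRingEnd ℂ) (Nt t)).re = ((1 - 0.04719755/2) * (1/4 - 3*t^2) + 2 * (0.04719755 * t) * t - 2 * (x1 * (3/4 - t^2) + 2 * y1 * t)
        + (x1 * x3 - y1 * y3) * (t^2+9/4)) * ((1 - 0.04719755/2) * (12 - t^2) + (0.04719755 * t) * (5/2*t))
      + ((0.04719755 * t) * (1/4 - 3*t^2) - 2 * (1 - 0.04719755/2) * t - 2 * (y1 * (3/4 - t^2) - 2 * x1 * t)
        + (x1 * y3 + y1 * x3) * (t^2+9/4)) * (-(1 - 0.04719755/2) * (5/2*t) + (0.04719755 * t) * (12 - t^2)) := by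
    have eE : Eh = (((1 - 0.04719755/2) * (1/4 - 3*t^2) + 2 * (0.04719755 * t) * t - 2 * (x1 * (3/4 - t^2) + 2 * y1 * t)
        + (x1 * x3 - y1 * y3) * (t^2+9/4) : ℝ) : ℂ) + (((0.04719755 * t) * (1/4 - 3*t^2) - 2 * (1 - 0.04719755/2) * t - 2 * (y1 * (3/4 - t^2) - 2 * x1 * t)
        + (x1 * y3 + y1 * x3) * (t^2+9/4) : ℝ) : ℂ) * I := by
      rw [hEh, hH1, hH3]; push_cast; ring_nf; simp only [I_sq]; ring
    have eN : Nt t = (((1 - 0.04719755/2) * (12 - t^2) + (0.04719755 * t) * (5/2*t) : ℝ) : ℂ) + ((-(1 - 0.04719755/2) * (5/2*t) + (0.04719755 * t) * (12 - t^2) : ℝ) : ℂ) * I := by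
      unfold Nt; push_cast; ring_nf; simp only [I_sq]; ring
    rw [mul_re, conj_re, conj_im, eE, eN]
    simp only [add_re, add_im, re_ofReal_mul, im_ofReal_mul, ofReal_re, ofReal_im, I_re, I_im]
    ring
  have fin : (Et t * (starRingEnd ℂ) (Nt t)).re = (Eh * (starRingEnd ℂ) (Nt t)).re + ((Et t - Eh) * (starRingEnd ℂ) (Nt t)).re := by
    rw [← add_re]; congr 1; ring
  have f2 : |((Et t - Eh) * (starRingEnd ℂ) (Nt t)).re| ≤ ‖Et t - Eh‖ * ‖Nt t‖ := by
    refine (abs_re_le_norm _).trans ?_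
    rw [norm_mul, RCLike.norm_conj]
  have f3 : ‖Et t - Eh‖ * ‖Nt t‖ ≤ (d1 * (2 * (t^2+5/4) + η * (t^2+9/4)) + (d3 + 1e-6) * (t^2+9/4)) * b :=
    mul_le_mul nd nN (norm_nonneg _) ((norm_nonneg _).trans nd)
  have f4 := (abs_le.mp (f2.trans f3)).1
  rw [fin, eP]
  linarith

end G2
open Complex
namespace G2
open MeasureTheory Set Filter Topology

lemma bn {lo hi t : ℝ} (h1 : lo ≤ t) (h2 : t ≤ hi) (i j : ℕ) : 0 ≤ (t - lo)^i * (hi - t)^j :=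
  mul_nonneg (pow_nonneg (by linarith) _) (pow_nonneg (by linarith) _)

set_option maxRecDepth 100000 in
lemma hk0a : hchk 290 977081 (-13075) 20 = true := by decide +kernel
set_option maxRecDepth 100000 in
lemma hk0b : hchk 870 976307 (-39256) 20 = true := by decide +kernel
lemma iv0 {t : ℝ} (l : 0 ≤ t) (h : t ≤ (29/50)) : 1/1000 ≤ (Et t * (starRingEnd ℂ) (Nt t)).re := by
  have H1 := hspec hk0a (t := t) (r := (29/100)) (m := (48857/50000)) (M := (97719/100000)) (d := (23/1250)) (by rw [abs_le]; push_cast; constructor <;> linarith) (by norm_num) (by norm_num) (by norm_num) (by norm_num) (by norm_num) (by norm_num) (by norm_num)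
  have H3 := hspec hk0b (t := 3*t) (r := (87/100)) (m := (97707/100000)) (M := (6107/6250)) (d := (329/1250)) (by rw [abs_le]; push_cast; constructor <;> linarith) (by norm_num) (by norm_num) (by norm_num) (by norm_num) (by norm_num) (by norm_num) (by norm_num)
  refine ivl (b := (293/25) + (-3/1000) * t + (-349/500) * t^2) (η := (9771/10000)) H1 H3 (by norm_num) (by norm_num) ?_ (by linarith) (by linarith) ?_ ?_
  · linarith only [bn l h 0 2, bn l h 1 1, bn l h 2 0]
  · linarith only [bn l h 0 6, bn l h 1 5, bn l h 2 4, bn l h 3 3, bn l h 4 2, bn l h 5 1, bn l h 6 0]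
  · push_cast; linarith only [bn l h 0 6, bn l h 1 5, bn l h 2 4, bn l h 3 3, bn l h 4 2, bn l h 5 1, bn l h 6 0]

set_option maxRecDepth 100000 in
lemma hk1a : hchk 850 976346 (-38352) 20 = true := by decide +kernel
set_option maxRecDepth 100000 in
lemma hk1b : hchk 2550 969550 (-115821) 20 = true := by decide +kernel
lemma iv1 {t : ℝ} (l : (29/50) ≤ t) (h : t ≤ (28/25)) : 1/1000 ≤ (Et t * (starRingEnd ℂ) (Nt t)).re := by
  have H1 := hspec hk1a (t := t) (r := (27/100)) (m := (97707/100000)) (M := (6107/6250)) (d := (167/10000)) (by rw [abs_le]; push_cast; constructor <;> linarith) (by norm_num) (by norm_num) (by norm_num) (by norm_num) (by norm_num) (by norm_num) (by norm_num)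
  have H3 := hspec hk1b (t := 3*t) (r := (81/100)) (m := (48821/50000)) (M := (97647/100000)) (d := (903/5000)) (by rw [abs_le]; push_cast; constructor <;> linarith) (by norm_num) (by norm_num) (by norm_num) (by norm_num) (by norm_num) (by norm_num) (by norm_num)
  refine ivl (b := (11749/1000) + (-49/500) * t + (-31/50) * t^2) (η := (1953/2000)) H1 H3 (by norm_num) (by norm_num) ?_ (by linarith) (by linarith) ?_ ?_
  · linarith only [bn l h 0 2, bn l h 1 1, bn l h 2 0]
  · linarith only [bn l h 0 6, bn l h 1 5, bn l h 2 4, bn l h 3 3, bn l h 4 2, bn l h 5 1, bn l h 6 0]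
  · push_cast; linarith only [bn l h 0 6, bn l h 1 5, bn l h 2 4, bn l h 3 3, bn l h 4 2, bn l h 5 1, bn l h 6 0]

set_option maxRecDepth 100000 in
lemma hk2a : hchk 1370 975010 (-61895) 20 = true := by decide +kernel
set_option maxRecDepth 100000 in
lemma hk2b : hchk 4110 956636 (-189013) 20 = true := by decide +kernel
lemma iv2 {t : ℝ} (l : (28/25) ≤ t) (h : t ≤ (81/50)) : 1/1000 ≤ (Et t * (starRingEnd ℂ) (Nt t)).re := by
  have H1 := hspec hk2a (t := t) (r := (1/4)) (m := (19539/20000)) (M := (977/1000)) (d := (151/10000)) (by rw [abs_le]; push_cast; constructor <;> linarith) (by norm_num) (by norm_num) (by norm_num) (by norm_num) (by norm_num) (by norm_num) (by norm_num)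
  have H3 := hspec hk2b (t := 3*t) (r := (3/4)) (m := (9751/10000)) (M := (19503/20000)) (d := (687/5000)) (by rw [abs_le]; push_cast; constructor <;> linarith) (by norm_num) (by norm_num) (by norm_num) (by norm_num) (by norm_num) (by norm_num) (by norm_num)
  refine ivl (b := (1499/125) + (-523/1000) * t + (-217/500) * t^2) (η := (1219/1250)) H1 H3 (by norm_num) (by norm_num) ?_ (by linarith) (by linarith) ?_ ?_
  · linarith only [bn l h 0 2, bn l h 1 1, bn l h 2 0]
  · linarith only [bn l h 0 6, bn l h 1 5, bn l h 2 4, bn l h 3 3, bn l h 4 2, bn l h 5 1, bn l h 6 0]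
  · push_cast; linarith only [bn l h 0 6, bn l h 1 5, bn l h 2 4, bn l h 3 3, bn l h 4 2, bn l h 5 1, bn l h 6 0]

set_option maxRecDepth 100000 in
lemma hk3a : hchk 1870 973117 (-84641) 20 = true := by decide +kernel
set_option maxRecDepth 100000 in
lemma hk3b : hchk 5610 936738 (-262873) 20 = true := by decide +kernel
lemma iv3 {t : ℝ} (l : (81/50) ≤ t) (h : t ≤ (53/25)) : 1/1000 ≤ (Et t * (starRingEnd ℂ) (Nt t)).re := by
  have H1 := hspec hk3a (t := t) (r := (1/4)) (m := (97677/100000)) (M := (48841/50000)) (d := (153/10000)) (by rw [abs_le]; push_cast; constructor <;> linarith) (by norm_num) (by norm_num) (by norm_num) (by norm_num) (by norm_num) (by norm_num) (by norm_num)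
  have H3 := hspec hk3b (t := 3*t) (r := (3/4)) (m := (9729/10000)) (M := (19459/20000)) (d := (371/2500)) (by rw [abs_le]; push_cast; constructor <;> linarith) (by norm_num) (by norm_num) (by norm_num) (by norm_num) (by norm_num) (by norm_num) (by norm_num)
  refine ivl (b := (13047/1000) + (-361/200) * t + (-11/250) * t^2) (η := (973/1000)) H1 H3 (by norm_num) (by norm_num) ?_ (by linarith) (by linarith) ?_ ?_
  · linarith only [bn l h 0 2, bn l h 1 1, bn l h 2 0]
  · linarith only [bn l h 0 6, bn l h 1 5, bn l h 2 4, bn l h 3 3, bn l h 4 2, bn l h 5 1, bn l h 6 0]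
  · push_cast; linarith only [bn l h 0 6, bn l h 1 5, bn l h 2 4, bn l h 3 3, bn l h 4 2, bn l h 5 1, bn l h 6 0]

set_option maxRecDepth 100000 in
lemma hk4a : hchk 2350 970721 (-106615) 20 = true := by decide +kernel
set_option maxRecDepth 100000 in
lemma hk4b : hchk 7050 908139 (-338979) 20 = true := by decide +kernel
lemma iv4 {t : ℝ} (l : (53/25) ≤ t) (h : t ≤ (129/50)) : 1/1000 ≤ (Et t * (starRingEnd ℂ) (Nt t)).re := by
  have H1 := hspec hk4a (t := t) (r := (23/100)) (m := (97653/100000)) (M := (48829/50000)) (d := (69/5000)) (by rw [abs_le]; push_cast; constructor <;> linarith) (by norm_num) (by norm_num) (by norm_num) (by norm_num) (by norm_num) (by norm_num) (by norm_num)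
  have H3 := hspec hk4b (t := 3*t) (r := (69/100)) (m := (24233/25000)) (M := (96937/100000)) (d := (63/500)) (by rw [abs_le]; push_cast; constructor <;> linarith) (by norm_num) (by norm_num) (by norm_num) (by norm_num) (by norm_num) (by norm_num) (by norm_num)
  refine ivl (b := (3277/200) + (-4937/1000) * t + (691/1000) * t^2) (η := (4847/5000)) H1 H3 (by norm_num) (by norm_num) ?_ (by linarith) (by linarith) ?_ ?_
  · linarith only [bn l h 0 2, bn l h 1 1, bn l h 2 0]
  · linarith only [bn l h 0 6, bn l h 1 5, bn l h 2 4, bn l h 3 3, bn l h 4 2, bn l h 5 1, bn l h 6 0]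
  · push_cast; linarith only [bn l h 0 6, bn l h 1 5, bn l h 2 4, bn l h 3 3, bn l h 4 2, bn l h 5 1, bn l h 6 0]

set_option maxRecDepth 100000 in
lemma hk5a : hchk 2780 968075 (-126448) 20 = true := by decide +kernel
set_option maxRecDepth 100000 in
lemma hk5b : hchk 8340 870455 (-413878) 20 = true := by decide +kernel
lemma iv5 {t : ℝ} (l : (129/50) ≤ t) (h : t ≤ (149/50)) : 1/1000 ≤ (Et t * (starRingEnd ℂ) (Nt t)).re := by
  have H1 := hspec hk5a (t := t) (r := (1/5)) (m := (97627/100000)) (M := (3051/3125)) (d := (117/10000)) (by rw [abs_le]; push_cast; constructor <;> linarith) (by norm_num) (by norm_num) (by norm_num) (by norm_num) (by norm_num) (by norm_num) (by norm_num)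
  have H3 := hspec hk5b (t := 3*t) (r := (3/5)) (m := (96381/100000)) (M := (48193/50000)) (d := (253/2500)) (by rw [abs_le]; push_cast; constructor <;> linarith) (by norm_num) (by norm_num) (by norm_num) (by norm_num) (by norm_num) (by norm_num) (by norm_num)
  refine ivl (b := (11521/500) + (-2021/200) * t + (847/500) * t^2) (η := (9639/10000)) H1 H3 (by norm_num) (by norm_num) ?_ (by linarith) (by linarith) ?_ ?_
  · linarith only [bn l h 0 2, bn l h 1 1, bn l h 2 0]
  · linarith only [bn l h 0 6, bn l h 1 5, bn l h 2 4, bn l h 3 3, bn l h 4 2, bn l h 5 1, bn l h 6 0]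
  · push_cast; linarith only [bn l h 0 6, bn l h 1 5, bn l h 2 4, bn l h 3 3, bn l h 4 2, bn l h 5 1, bn l h 6 0]

set_option maxRecDepth 100000 in
lemma hk6a : hchk 3230 964775 (-147386) 20 = true := by decide +kernel
set_option maxRecDepth 100000 in
lemma hk6b : hchk 9690 809597 (-502721) 41 = true := by decide +kernel
lemma iv6 {t : ℝ} (l : (149/50) ≤ t) (h : t ≤ (87/25)) : 1/1000 ≤ (Et t * (starRingEnd ℂ) (Nt t)).re := by
  have H1 := hspec hk6a (t := t) (r := (1/4)) (m := (48797/50000)) (M := (97599/100000)) (d := (79/5000)) (by rw [abs_le]; push_cast; constructor <;> linarith) (by norm_num) (by norm_num) (by norm_num) (by norm_num) (by norm_num) (by norm_num) (by norm_num)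
  have H3 := hspec hk6b (t := 3*t) (r := (3/4)) (m := (47647/50000)) (M := (95303/100000)) (d := (1209/5000)) (by rw [abs_le]; push_cast; constructor <;> linarith) (by norm_num) (by norm_num) (by norm_num) (by norm_num) (by norm_num) (by norm_num) (by norm_num)
  refine ivl (b := (31047/1000) + (-7741/500) * t + (2597/1000) * t^2) (η := (953/1000)) H1 H3 (by norm_num) (by norm_num) ?_ (by linarith) (by linarith) ?_ ?_
  · linarith only [bn l h 0 2, bn l h 1 1, bn l h 2 0]
  · linarith only [bn l h 0 6, bn l h 1 5, bn l h 2 4, bn l h 3 3, bn l h 4 2, bn l h 5 1, bn l h 6 0]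
  · push_cast; linarith only [bn l h 0 6, bn l h 1 5, bn l h 2 4, bn l h 3 3, bn l h 4 2, bn l h 5 1, bn l h 6 0]

set_option maxRecDepth 100000 in
lemma hk7a : hchk 3760 960153 (-172335) 20 = true := by decide +kernel
set_option maxRecDepth 100000 in
lemma hk7b : hchk 11280 673491 (-626432) 150 = true := by decide +kernel
lemma iv7 {t : ℝ} (l : (87/25) ≤ t) (h : t ≤ (101/25)) : 1/1000 ≤ (Et t * (starRingEnd ℂ) (Nt t)).re := by
  have H1 := hspec hk7a (t := t) (r := (7/25)) (m := (97547/100000)) (M := (6097/6250)) (d := (187/10000)) (by rw [abs_le]; push_cast; constructor <;> linarith) (by norm_num) (by norm_num) (by norm_num) (by norm_num) (by norm_num) (by norm_num) (by norm_num)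
  have H3 := hspec hk7b (t := 3*t) (r := (21/25)) (m := (91963/100000)) (M := (45997/50000)) (d := (1141/2000)) (by rw [abs_le]; push_cast; constructor <;> linarith) (by norm_num) (by norm_num) (by norm_num) (by norm_num) (by norm_num) (by norm_num) (by norm_num)
  refine ivl (b := (6207/200) + (-1944/125) * t + (1309/500) * t^2) (η := (4599/5000)) H1 H3 (by norm_num) (by norm_num) ?_ (by linarith) (by linarith) ?_ ?_
  · linarith only [bn l h 0 2, bn l h 1 1, bn l h 2 0]
  · linarith only [bn l h 0 6, bn l h 1 5, bn l h 2 4, bn l h 3 3, bn l h 4 2, bn l h 5 1, bn l h 6 0]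
  · push_cast; linarith only [bn l h 0 6, bn l h 1 5, bn l h 2 4, bn l h 3 3, bn l h 4 2, bn l h 5 1, bn l h 6 0]

set_option maxRecDepth 100000 in
lemma hk8a : hchk 4330 954224 (-199589) 20 = true := by decide +kernel
set_option maxRecDepth 100000 in
lemma hk8b : hchk 12990 248355 (-687665) 857 = true := by decide +kernel
lemma iv8 {t : ℝ} (l : (101/25) ≤ t) (h : t ≤ (231/50)) : 1/1000 ≤ (Et t * (starRingEnd ℂ) (Nt t)).re := by
  have H1 := hspec hk8a (t := t) (r := (29/100)) (m := (19497/20000)) (M := (9749/10000)) (d := (101/5000)) (by rw [abs_le]; push_cast; constructor <;> linarith) (by norm_num) (by norm_num) (by norm_num) (by norm_num) (by norm_num) (by norm_num) (by norm_num)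
  have H3 := hspec hk8b (t := 3*t) (r := (87/100)) (m := (18257/25000)) (M := (183/250)) (d := (11189/10000)) (by rw [abs_le]; push_cast; constructor <;> linarith) (by norm_num) (by norm_num) (by norm_num) (by norm_num) (by norm_num) (by norm_num) (by norm_num)
  refine ivl (b := (21453/1000) + (-10813/1000) * t + (254/125) * t^2) (η := (457/625)) H1 H3 (by norm_num) (by norm_num) ?_ (by linarith) (by linarith) ?_ ?_
  · linarith only [bn l h 0 2, bn l h 1 1, bn l h 2 0]
  · linarith only [bn l h 0 6, bn l h 1 5, bn l h 2 4, bn l h 3 3, bn l h 4 2, bn l h 5 1, bn l h 6 0]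
  · push_cast; linarith only [bn l h 0 6, bn l h 1 5, bn l h 2 4, bn l h 3 3, bn l h 4 2, bn l h 5 1, bn l h 6 0]

set_option maxRecDepth 100000 in
lemma hk9a : hchk 4810 948391 (-222944) 20 = true := by decide +kernel
set_option maxRecDepth 100000 in
lemma hk9b : hchk 14430 211646 173030 3390 = true := by decide +kernel
lemma iv9 {t : ℝ} (l : (231/50) ≤ t) (h : t ≤ 5) : 1/1000 ≤ (Et t * (starRingEnd ℂ) (Nt t)).re := by
  have H1 := hspec hk9a (t := t) (r := (19/100)) (m := (48711/50000)) (M := (97427/100000)) (d := (119/10000)) (by rw [abs_le]; push_cast; constructor <;> linarith) (by norm_num) (by norm_num) (by norm_num) (by norm_num) (by norm_num) (by norm_num) (by norm_num)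
  have H3 := hspec hk9b (t := 3*t) (r := (57/100)) (m := (13499/50000)) (M := (27677/100000)) (d := (6309/10000)) (by rw [abs_le]; push_cast; constructor <;> linarith) (by norm_num) (by norm_num) (by norm_num) (by norm_num) (by norm_num) (by norm_num) (by norm_num)
  refine ivl (b := (2771/200) + (-1873/250) * t + (1669/1000) * t^2) (η := (1367/5000)) H1 H3 (by norm_num) (by norm_num) ?_ (by linarith) (by linarith) ?_ ?_
  · linarith only [bn l h 0 2, bn l h 1 1, bn l h 2 0]
  · linarith only [bn l h 0 6, bn l h 1 5, bn l h 2 4, bn l h 3 3, bn l h 4 2, bn l h 5 1, bn l h 6 0]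
  · push_cast; linarith only [bn l h 0 6, bn l h 1 5, bn l h 2 4, bn l h 3 3, bn l h 4 2, bn l h 5 1, bn l h 6 0]

set_option maxRecDepth 100000 in
lemma hk10a : hchk 5270 942006 (-245734) 20 = true := by decide +kernel
set_option maxRecDepth 100000 in
lemma hk10b : hchk 15810 810069 (-137036) 5297 = true := by decide +kernel
lemma iv10 {t : ℝ} (l : 5 ≤ t) (h : t ≤ (277/50)) : 1/1000 ≤ (Et t * (starRingEnd ℂ) (Nt t)).re := by
  have H1 := hspec hk10a (t := t) (r := (27/100)) (m := (1947/2000)) (M := (19471/20000)) (d := (12/625)) (by rw [abs_le]; push_cast; constructor <;> linarith) (by norm_num) (by norm_num) (by norm_num) (by norm_num) (by norm_num) (by norm_num) (by norm_num)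
  have H3 := hspec hk10b (t := 3*t) (r := (81/100)) (m := (20407/25000)) (M := (2584/3125)) (d := (4119/5000)) (by rw [abs_le]; push_cast; constructor <;> linarith) (by norm_num) (by norm_num) (by norm_num) (by norm_num) (by norm_num) (by norm_num) (by norm_num)
  refine ivl (b := (231/25) + (-1411/250) * t + (371/250) * t^2) (η := (1027/1250)) H1 H3 (by norm_num) (by norm_num) ?_ (by linarith) (by linarith) ?_ ?_
  · linarith only [bn l h 0 2, bn l h 1 1, bn l h 2 0]
  · linarith only [bn l h 0 6, bn l h 1 5, bn l h 2 4, bn l h 3 3, bn l h 4 2, bn l h 5 1, bn l h 6 0]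
  · push_cast; linarith only [bn l h 0 6, bn l h 1 5, bn l h 2 4, bn l h 3 3, bn l h 4 2, bn l h 5 1, bn l h 6 0]

set_option maxRecDepth 100000 in
lemma hk11a : hchk 6230 925784 (-294872) 20 = true := by decide +kernel
lemma iv11 {t : ℝ} (l : (277/50) ≤ t) (h : t ≤ (173/25)) : 1/1000 ≤ (Et t * (starRingEnd ℂ) (Nt t)).re := by
  have H1 := hspec hk11a (t := t) (r := (69/100)) (m := (48579/50000)) (M := (97163/100000)) (d := (587/5000)) (by rw [abs_le]; push_cast; constructor <;> linarith) (by norm_num) (by norm_num) (by norm_num) (by norm_num) (by norm_num) (by norm_num) (by norm_num)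
  have H3 : ‖hl (3*t) - (((0:ℝ):ℂ) + ((0:ℝ):ℂ) * I)‖ ≤ 1 := by simpa using hl_le (3*t)
  refine ivl (b := (2653/500) + (-1059/250) * t + (679/500) * t^2) (η := 0) H1 H3 (by norm_num) (by norm_num) ?_ (by linarith) (by linarith) ?_ ?_
  · linarith only [bn l h 0 2, bn l h 1 1, bn l h 2 0]
  · linarith only [bn l h 0 6, bn l h 1 5, bn l h 2 4, bn l h 3 3, bn l h 4 2, bn l h 5 1, bn l h 6 0]
  · push_cast; linarith only [bn l h 0 6, bn l h 1 5, bn l h 2 4, bn l h 3 3, bn l h 4 2, bn l h 5 1, bn l h 6 0]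

set_option maxRecDepth 100000 in
lemma hk12a : hchk 7750 889496 (-378646) 20 = true := by decide +kernel
lemma iv12 {t : ℝ} (l : (173/25) ≤ t) (h : t ≤ (429/50)) : 1/1000 ≤ (Et t * (starRingEnd ℂ) (Nt t)).re := by
  have H1 := hspec hk12a (t := t) (r := (83/100)) (m := (96671/100000)) (M := (24169/25000)) (d := (2751/10000)) (by rw [abs_le]; push_cast; constructor <;> linarith) (by norm_num) (by norm_num) (by norm_num) (by norm_num) (by norm_num) (by norm_num) (by norm_num)
  have H3 : ‖hl (3*t) - (((0:ℝ):ℂ) + ((0:ℝ):ℂ) * I)‖ ≤ 1 := by simpa using hl_le (3*t)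
  refine ivl (b := (7223/1000) + (-4747/1000) * t + (174/125) * t^2) (η := 0) H1 H3 (by norm_num) (by norm_num) ?_ (by linarith) (by linarith) ?_ ?_
  · linarith only [bn l h 0 2, bn l h 1 1, bn l h 2 0]
  · linarith only [bn l h 0 6, bn l h 1 5, bn l h 2 4, bn l h 3 3, bn l h 4 2, bn l h 5 1, bn l h 6 0]
  · push_cast; linarith only [bn l h 0 6, bn l h 1 5, bn l h 2 4, bn l h 3 3, bn l h 4 2, bn l h 5 1, bn l h 6 0]

set_option maxRecDepth 100000 in
lemma hk13a : hchk 9310 829872 (-476362) 31 = true := by decide +kernel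
lemma iv13 {t : ℝ} (l : (429/50) ≤ t) (h : t ≤ (251/25)) : 1/1000 ≤ (Et t * (starRingEnd ℂ) (Nt t)).re := by
  have H1 := hspec hk13a (t := t) (r := (73/100)) (m := (23921/25000)) (M := (95691/100000)) (d := (1023/5000)) (by rw [abs_le]; push_cast; constructor <;> linarith) (by norm_num) (by norm_num) (by norm_num) (by norm_num) (by norm_num) (by norm_num) (by norm_num)
  have H3 : ‖hl (3*t) - (((0:ℝ):ℂ) + ((0:ℝ):ℂ) * I)‖ ≤ 1 := by simpa using hl_le (3*t)
  refine ivl (b := (8203/500) + (-6889/1000) * t + (1517/1000) * t^2) (η := 0) H1 H3 (by norm_num) (by norm_num) ?_ (by linarith) (by linarith) ?_ ?_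
  · linarith only [bn l h 0 2, bn l h 1 1, bn l h 2 0]
  · linarith only [bn l h 0 6, bn l h 1 5, bn l h 2 4, bn l h 3 3, bn l h 4 2, bn l h 5 1, bn l h 6 0]
  · push_cast; linarith only [bn l h 0 6, bn l h 1 5, bn l h 2 4, bn l h 3 3, bn l h 4 2, bn l h 5 1, bn l h 6 0]

end G2
open Complex
namespace G2
open MeasureTheory Set Filter Topology

lemma big {t : ℝ} (ht : 10 ≤ t) : 1e-10 * (1 + t^2)^3 ≤ (Et t * (starRingEnd ℂ) (Nt t)).re := by
  set g0 : ℂ := (1 - 0.04719755 / 2 + 0.04719755 * t * I) with hg0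
  set g : ℂ := (1 - aa / 2 + aa * t * I) with hg
  set n : ℂ := (12 - t^2 - 5/2 * t * I) with hn
  set Q1 : ℂ := (1/4 - 3 * t^2 - 2 * t * I) with hQ1
  set R : ℂ := - 2 * hl t * (3/4 - t^2 - 2 * t * I) + hl t * hl (3 * t) * (t^2 + 9/4) with hR
  have hE : Et t = g0 * Q1 + ((g - g0) * Q1 + R) := by unfold Et; rw [hR]; ring
  have hN : Nt t = g0 * n := rfl
  have u1 : 100 ≤ t^2 := by nlinarith
  have G2 : ‖g0‖^2 = (1 - 0.04719755 / 2)^2 + (0.04719755 * t)^2 := by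
    have : g0 = (((1 - 0.04719755/2 : ℝ):ℂ) + ((0.04719755 * t : ℝ):ℂ) * I) := by rw [hg0]; push_cast; ring
    rw [this, Complex.sq_norm, Complex.normSq_add_mul_I]
  have Ga : 1.08 ≤ ‖g0‖ := by
    apply abs_le_of_sq_le_sq' _ (norm_nonneg _) |>.2
    rw [G2]; norm_num; nlinarith
  have Gb : 0.047 * t ≤ ‖g0‖ := by
    apply abs_le_of_sq_le_sq' _ (norm_nonneg _) |>.2
    rw [G2]; norm_num; nlinarith
  have nn : ‖n‖ ≤ t^2 - 8.4 := by
    apply abs_le_of_sq_le_sq' _ (by linarith) |>.2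
    have : n = (((12 - t^2 : ℝ):ℂ) + ((-(5/2*t) : ℝ):ℂ) * I) := by rw [hn]; push_cast; ring
    rw [this, Complex.sq_norm, Complex.normSq_add_mul_I]
    norm_num; nlinarith
  have nR : ‖R‖ ≤ 3 * t^2 + 4.75 := by
    rw [hR]
    refine (norm_add_le _ _).trans ?_
    rw [norm_mul, norm_mul, norm_mul, norm_mul, K_norm, norm_neg, Complex.norm_ofNat]
    have q := Q3_norm t
    have a1 : 2 * ‖hl t‖ * ‖(3/4 - t^2 - 2 * t * I : ℂ)‖ ≤ 2 * 1 * (t^2 + 5/4) := by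
      gcongr; exact hl_le t
    have a2 : ‖hl t‖ * ‖hl (3*t)‖ * (t^2+9/4) ≤ 1 * 1 * (t^2 + 9/4) := by
      gcongr; exact hl_le t; exact hl_le _
    norm_num at *; linarith
  have nd : ‖(g - g0) * Q1‖ ≤ 1e-6 * (t^2+1) * ‖g0‖ := by
    rw [norm_mul]
    refine (mul_le_mul (g_err (by linarith)) (Q1_norm t) (norm_nonneg _) (by positivity)).trans ?_
    have : t + 1/2 ≤ 25 * ‖g0‖ := by linarith
    calc (1e-8 * (t+1/2)) * (3 * (t^2+1/4)) ≤ (1e-8 * (25 * ‖g0‖)) * (3 * (t^2+1/4)) := by gcongr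
      _ ≤ _ := by
        norm_num
        have := norm_nonneg g0
        have := mul_nonneg this (sq_nonneg t)
        nlinarith
  have A : (Q1 * (starRingEnd ℂ) n).re = 3 * (t^2)^2 - 31.25 * t^2 + 3 := by
    have e1 : n = (((12 - t^2 : ℝ):ℂ) + ((-(5/2*t) : ℝ):ℂ) * I) := by rw [hn]; push_cast; ring
    have e2 : Q1 = (((1/4-3* t^2 : ℝ):ℂ) + ((-(2*t) : ℝ):ℂ) * I) := by rw [hQ1]; push_cast; ring
    rw [mul_re, conj_re, conj_im, e1, e2]
    simp only [add_re, add_im, re_ofReal_mul, im_ofReal_mul, ofReal_re, ofReal_im, I_re, I_im]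
    norm_num; ring
  have m : (Et t * (starRingEnd ℂ) (Nt t)).re = ‖g0‖^2 * (Q1 * (starRingEnd ℂ) n).re + (((g - g0) * Q1 + R) * (starRingEnd ℂ) (g0 * n)).re := by
    rw [hE, hN, ← re_ofReal_mul, ← add_re]
    congr 1
    rw [Complex.ofReal_pow, ← Complex.mul_conj']
    simp only [map_mul]; ring
  have b1 : ‖((g - g0) * Q1 + R) * (starRingEnd ℂ) (g0 * n)‖ ≤ (1e-6 * (t^2+1) * ‖g0‖ + (3*t^2+4.75)) * (‖g0‖ * (t^2-8.4)) := by
    rw [norm_mul, RCLike.norm_conj, norm_mul]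
    refine mul_le_mul ((norm_add_le _ _).trans (add_le_add nd nR)) (mul_le_mul_of_nonneg_left nn (norm_nonneg _)) (by positivity) (by positivity)
  have b2 := (abs_le.mp ((abs_re_le_norm _).trans b1)).1
  rw [m, A]
  have b3 : (1e-6 * (t^2+1) * ‖g0‖ + (3*t^2+4.75)) * (‖g0‖ * (t^2-8.4)) ≤ ‖g0‖^2 * ((1e-6 * (t^2+1) + (3*t^2+4.75)/1.08) * (t^2-8.4)) := by
    have : (3*t^2+4.75) ≤ (3*t^2+4.75)/1.08 * ‖g0‖ := by
      rw [div_mul_eq_mul_div, le_div_iff₀ (by norm_num)]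
      exact mul_le_mul_of_nonneg_left Ga (by positivity)
    calc (1e-6 * (t^2+1) * ‖g0‖ + (3*t^2+4.75)) * (‖g0‖ * (t^2-8.4)) ≤ (1e-6 * (t^2+1) * ‖g0‖ + (3*t^2+4.75)/1.08 * ‖g0‖) * (‖g0‖ * (t^2-8.4)) := by
          refine mul_le_mul_of_nonneg_right (by linarith) (mul_nonneg (norm_nonneg _) (by linarith))
      _ = _ := by ring
  clear_value g0 g n Q1 R
  have b4 : 0.05 * (t^2)^2 ≤ 3 * (t^2)^2 - 31.25 * t^2 + 3 - ((1e-6 * (t^2+1) + (3*t^2+4.75)/1.08) * (t^2-8.4)) := by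
    generalize t^2 = u at *
    norm_num; nlinarith only [u1]
  have b5 : 0.002 * t^2 ≤ ‖g0‖^2 := by rw [G2]; norm_num; nlinarith only [u1]
  have b6 := mul_le_mul_of_nonneg_left b4 (sq_nonneg ‖g0‖)
  have b7 : 0.002 * t^2 * (0.05 * (t^2)^2) ≤ ‖g0‖^2 * (0.05 * (t^2)^2) := mul_le_mul_of_nonneg_right b5 (by positivity)
  have b8 : 1e-10 * (1 + t^2)^3 ≤ 0.002 * t^2 * (0.05 * (t^2)^2) := by
    have : (1+t^2)^3 ≤ (2*t^2)^3 := by gcongr; linarith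
    generalize t^2 = u at *
    have : 0 ≤ u^3 := by positivity
    norm_num at *; nlinarith only [this, u1, ‹(1+u)^3 ≤ (2*u)^3›]
  linarith only [b2, b3, b6, b7, b8]

lemma hl_neg (t : ℝ) : hl (-t) = (starRingEnd ℂ) (hl t) := by
  unfold hl hh
  rw [map_div₀, ← X_conj, ← X_conj]
  simp [map_ofNat]

lemma line_pos {t : ℝ} (ht : 0 ≤ t) : 1e-10 * (1 + t^2)^3 ≤ (Et t * (starRingEnd ℂ) (Nt t)).re := by
  rcases le_total 10 t with h | h
  · exact big h
  have : 1e-10 * (1 + t^2)^3 ≤ 1/1000 := by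
    have : (1+t^2)^3 ≤ (1+10^2)^3 := by gcongr
    norm_num at *; linarith
  refine this.trans ?_
  by_cases h0 : t ≤ 29/50
  · exact iv0 ht h0
  by_cases h1 : t ≤ 28/25
  · exact iv1 (le_of_not_ge h0) h1
  by_cases h2 : t ≤ 81/50
  · exact iv2 (le_of_not_ge h1) h2
  by_cases h3 : t ≤ 53/25
  · exact iv3 (le_of_not_ge h2) h3
  by_cases h4 : t ≤ 129/50
  · exact iv4 (le_of_not_ge h3) h4
  by_cases h5 : t ≤ 149/50
  · exact iv5 (le_of_not_ge h4) h5
  by_cases h6 : t ≤ 87/25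
  · exact iv6 (le_of_not_ge h5) h6
  by_cases h7 : t ≤ 101/25
  · exact iv7 (le_of_not_ge h6) h7
  by_cases h8 : t ≤ 231/50
  · exact iv8 (le_of_not_ge h7) h8
  by_cases h9 : t ≤ 5
  · exact iv9 (le_of_not_ge h8) h9
  by_cases h10 : t ≤ 277/50
  · exact iv10 (le_of_not_ge h9) h10
  by_cases h11 : t ≤ 173/25
  · exact iv11 (le_of_not_ge h10) h11
  by_cases h12 : t ≤ 429/50
  · exact iv12 (le_of_not_ge h11) h12
  · exact iv13 (le_of_not_ge h12) (by linarith)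

lemma line (t : ℝ) : 1e-10 * (1 + t^2)^3 ≤ (Et t * (starRingEnd ℂ) (Nt t)).re := by
  rcases le_total 0 t with h | h
  · exact line_pos h
  have := line_pos (t := -t) (by linarith)
  have e1 : Et (-t) = (starRingEnd ℂ) (Et t) := by
    unfold Et
    rw [hl_neg, show 3 * -t = -(3*t) by ring, hl_neg]
    simp only [map_add, map_sub, map_mul, map_div₀, map_pow, map_one, map_ofNat, conj_ofReal, conj_I, ofReal_neg]; ring
  have e2 : Nt (-t) = (starRingEnd ℂ) (Nt t) := by
    unfold Nt
    rw [show (0.04719755:ℂ) = 4719755/100000000 by norm_num]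
    simp only [map_add, map_sub, map_mul, map_div₀, map_pow, map_one, map_ofNat, conj_ofReal, conj_I, ofReal_neg]; ring
  rw [e1, e2, ← map_mul, conj_re, neg_sq] at this
  exact this

end G2
open Complex
namespace G2
open MeasureTheory Set Filter Topology Asymptotics

noncomputable def lr : Filter ℂ := Bornology.cobounded ℂ ⊓ 𝓟 {z | 0 ≤ z.re}

lemma lr_cob : lr ≤ Bornology.cobounded ℂ := inf_le_left
lemma lr_re : ∀ᶠ z in lr, 0 ≤ z.re := by
  have : {z : ℂ | 0 ≤ z.re} ∈ lr := mem_inf_of_right (mem_principal_self _)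
  exact this
lemma lr_norm (R : ℝ) : ∀ᶠ z in lr, R ≤ ‖z‖ :=
  lr_cob (tendsto_norm_cobounded_atTop.eventually_ge_atTop R)
lemma lr_ne : ∀ᶠ z in lr, z ≠ 0 := by
  filter_upwards [lr_norm 1] with z hz h
  rw [h] at hz; norm_num at hz

lemma lr_get {P : ℂ → Prop} (h : ∀ᶠ z in lr, P z) : ∃ R : ℝ, 1 ≤ R ∧ ∀ z : ℂ, 0 ≤ z.re → R ≤ ‖z‖ → P z := by
  rw [lr, eventually_inf_principal, ← comap_norm_atTop, eventually_comap] at h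
  obtain ⟨R, hR⟩ := eventually_atTop.mp h
  exact ⟨max R 1, le_max_right _ _, fun z hz hn => hR ‖z‖ ((le_max_left _ _).trans hn) z rfl hz⟩

lemma cst (c : ℂ) : (fun _ : ℂ => c) =o[lr] (fun z => z) := by
  refine (isLittleO_const_left.mpr (Or.inr ?_))
  exact tendsto_norm_cobounded_atTop.mono_left lr_cob

lemma lin (a : ℂ) : (fun z : ℂ => z - a) =Θ[lr] (fun z => z) := by
  have : (fun z : ℂ => z + -a) =Θ[lr] (fun z => z) := (isTheta_refl (fun z : ℂ => z) lr).add_isLittleO (cst (-a))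
  simpa only [sub_eq_add_neg] using this
lemma lin' (a : ℂ) : (fun z : ℂ => z + a) =Θ[lr] (fun z => z) :=
  (isTheta_refl (fun z : ℂ => z) lr).add_isLittleO (cst a)
lemma linc {c : ℂ} (hc : c ≠ 0) (a : ℂ) : (fun z : ℂ => a + c * z) =Θ[lr] (fun z => z) := by
  have : (fun z : ℂ => c * z + a) =Θ[lr] (fun z => z) :=
    (((isTheta_const_mul_left hc).mpr (isTheta_refl (fun z : ℂ => z) lr))).add_isLittleO (cst a)
  simpa only [add_comm] using this

lemma bdd_of {k : ℂ → ℂ} (hd : ∀ z : ℂ, 0 ≤ z.re → ContinuousAt k z) {R C : ℝ}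
    (hb : ∀ z : ℂ, 0 ≤ z.re → R ≤ ‖z‖ → ‖k z‖ ≤ C) : ∃ B, ∀ z : ℂ, 0 ≤ z.re → ‖k z‖ ≤ B := by
  have hK : IsCompact (Metric.closedBall (0:ℂ) R ∩ {z : ℂ | 0 ≤ z.re}) :=
    (isCompact_closedBall _ _).inter_right (isClosed_le continuous_const continuous_re)
  obtain ⟨B, hB⟩ := hK.exists_bound_of_continuousOn (f := k) (fun z hz => (hd z hz.2).continuousWithinAt)
  refine ⟨max B C, fun z hz => ?_⟩
  rcases le_total ‖z‖ R with h | h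
  · exact (hB z ⟨by simpa using h, hz⟩).trans (le_max_left _ _)
  · exact (hb z hz h).trans (le_max_right _ _)

lemma dcc {k : ℂ → ℂ} (hd : ∀ z : ℂ, 0 ≤ z.re → DifferentiableAt ℂ k z) : DiffContOnCl ℂ k {z | 0 < z.re} := by
  apply DifferentiableOn.diffContOnCl
  intro z hz
  refine (hd z ?_).differentiableWithinAt
  have : closure {z : ℂ | 0 < z.re} ⊆ {z : ℂ | 0 ≤ z.re} :=
    closure_minimal (fun z (hz : 0 < z.re) => (le_of_lt hz : 0 ≤ z.re)) (isClosed_le continuous_const continuous_re)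
  exact this hz

lemma contraA {k : ℂ → ℂ} (hd : ∀ z : ℂ, 0 ≤ z.re → DifferentiableAt ℂ k z)
    (hb : k =O[lr] fun z => 1 / z^2) {r : ℝ} (hr : 0 < r) (hl : ∀ t : ℝ, r / (1+t^2) ≤ (k (t * I)).re) : False := by
  obtain ⟨C, hC⟩ := hb.bound
  obtain ⟨R, hR1, hR⟩ := lr_get hC
  have ne : ∀ z : ℂ, 0 ≤ z.re → z + 1 ≠ 0 := by
    intro z hz h
    have := congrArg re h
    simp at this; linarith
  have hd0 : ∀ z : ℂ, 0 ≤ z.re → DifferentiableAt ℂ (fun z => k z - r / (z+1)) z := fun z hz =>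
    (hd z hz).sub ((differentiableAt_const _).div (by fun_prop) (ne z hz))
  have hC0 : 0 ≤ C := by
    have := hR (R:ℂ) (by simp; linarith) (by simp; linarith [le_abs_self R])
    have h2 := (norm_nonneg _).trans this
    refine nonneg_of_mul_nonneg_left h2 ?_
    have : (R:ℂ) ≠ 0 := by exact_mod_cast (by linarith : R ≠ 0)
    rw [norm_pos_iff]; simp [this]; try linarith
  obtain ⟨B, hB⟩ := bdd_of (fun z hz => (hd0 z hz).continuousAt) (R := R) (C := C + r) (by
    intro z hz hn
    refine (norm_sub_le _ _).trans (add_le_add ((hR z hz hn).trans ?_) ?_)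
    · rw [norm_div, norm_pow, norm_one]
      have : 1 / ‖z‖^2 ≤ 1 := by
        rw [div_le_one (by nlinarith)]; nlinarith
      nlinarith
    · rw [norm_div, norm_real, Real.norm_of_nonneg hr.le]
      refine div_le_self hr.le ?_
      have := abs_re_le_norm (z+1)
      have := le_abs_self (z+1).re
      simp at *; linarith)
  have key : ∀ z : ℂ, 0 ≤ z.re → 0 ≤ (k z - r / (z+1)).re := fun z hz => re_nonneg_of_line (dcc hd0) hB (by
    intro t
    have := hl t
    have e : ((r:ℂ) / ((t:ℂ) * I + 1)).re = r / (1+t^2) := by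
      rw [show (t:ℂ) * I + 1 = ((1:ℝ):ℂ) + (t:ℂ) * I by simp; ring, div_eq_mul_inv, re_ofReal_mul, inv_re, normSq_add_mul_I]
      simp; ring
    rw [sub_re, e]; linarith) hz
  obtain ⟨x, hx⟩ : ∃ x : ℝ, R ≤ x ∧ 2 * C / r < x := ⟨max R (2 * C / r + 1), le_max_left _ _, (by linarith : 2*C/r < 2*C/r+1).trans_le (le_max_right _ _)⟩
  have k1 := key x (by simp; linarith)
  have k2 := hR x (by simp; linarith) (by simp; linarith [le_abs_self x])
  have e : ((r:ℂ) / ((x:ℂ) + 1)).re = r / (x+1) := by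
    rw [show (r:ℂ) / ((x:ℂ) + 1) = ((r/(x+1) : ℝ) : ℂ) by push_cast; ring, ofReal_re]
  have e2 : ‖(1:ℂ) / (x:ℂ)^2‖ = 1 / x^2 := by
    rw [norm_div, norm_pow, norm_one, norm_real, Real.norm_of_nonneg (by linarith)]
  rw [sub_re, e] at k1
  rw [e2] at k2
  have k3 := (le_abs_self _).trans ((abs_re_le_norm (k x)).trans k2)
  have x0 : 0 < x := by linarith
  have k4 : r / (x+1) ≤ C * (1/x^2) := by linarith
  rw [mul_one_div, div_le_div_iff₀ (by linarith) (by positivity)] at k4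
  have k5 := hx.2
  rw [div_lt_iff₀ hr] at k5
  nlinarith

lemma contraB {G : ℂ → ℂ} (hd : ∀ z : ℂ, 0 ≤ z.re → DifferentiableAt ℂ G z)
    (hn : ∀ᶠ z in 𝓝 0, DifferentiableAt ℂ G z)
    (hb : G =O[lr] fun z => 1 / z) {r : ℝ} (hr : 0 < r) (hG : G 0 = -r)
    (hl : ∀ t : ℝ, t ≠ 0 → 0 ≤ (- G (t * I) / (t * I)).re) : False := by
  obtain ⟨C, hC⟩ := hb.bound
  obtain ⟨R, hR1, hR⟩ := lr_get hC
  have form : ∀ z : ℂ, z ≠ 0 → - dslope G 0 z = - G z / z - r / z := by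
    intro z hz
    rw [dslope_of_ne _ hz, slope_def_field, hG]; field_simp; ring
  have hC0 : 0 ≤ C := by
    have := hR (R:ℂ) (by simp; linarith) (by simp; linarith [le_abs_self R])
    have h2 := (norm_nonneg _).trans this
    refine nonneg_of_mul_nonneg_left h2 ?_
    have : (R:ℂ) ≠ 0 := by exact_mod_cast (by linarith : R ≠ 0)
    rw [norm_pos_iff]; simp [this]; try linarith
  have hd0 : ∀ z : ℂ, 0 ≤ z.re → DifferentiableAt ℂ (fun z => - dslope G 0 z) z := by
    intro z hz
    by_cases h : z = 0
    · subst h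
      obtain ⟨U, hU, hU2⟩ := eventually_iff_exists_mem.mp hn
      exact (((differentiableOn_dslope hU).mpr fun w hw => (hU2 w hw).differentiableWithinAt).differentiableAt hU).neg
    · exact ((differentiableAt_dslope_of_ne h).mpr (hd z hz)).neg
  obtain ⟨B, hB⟩ := bdd_of (fun z hz => (hd0 z hz).continuousAt) (R := R) (C := C + r) (by
    intro z hz hn
    have z0 : z ≠ 0 := by intro h; rw [h] at hn; simp at hn; linarith
    have z1 : 1 ≤ ‖z‖ := hR1.trans hn
    rw [form z z0]
    have i1 : 1 / ‖z‖ ≤ 1 := by rw [div_le_one (by linarith)]; exact z1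
    refine (norm_sub_le _ _).trans (add_le_add ?_ ?_)
    · rw [norm_div, norm_neg]
      refine (div_le_self (norm_nonneg _) z1).trans ((hR z hz hn).trans ?_)
      rw [norm_div, norm_one]
      nlinarith
    · rw [norm_div, norm_real, Real.norm_of_nonneg hr.le]
      exact div_le_self hr.le z1)
  have hline : ∀ t : ℝ, t ≠ 0 → 0 ≤ (- dslope G 0 (t * I)).re := by
    intro t ht
    have h1 : (t * I : ℂ) ≠ 0 := by simp [ht]
    rw [form _ h1, sub_re]
    have : ((r:ℂ) / (t * I)).re = 0 := by
      rw [show (r:ℂ) / (t * I) = ((-(r/t) : ℝ) : ℂ) * I by push_cast; rw [div_eq_mul_inv, mul_inv, Complex.inv_I]; ring]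
      simp
    rw [this]; linarith [hl t ht]
  have key : ∀ z : ℂ, 0 ≤ z.re → 0 ≤ (- dslope G 0 z).re := fun z hz => re_nonneg_of_line (dcc hd0) hB (by
    intro t
    by_cases ht : t ≠ 0
    · exact hline t ht
    · rw [not_not] at ht; subst ht
      have c1 : ContinuousAt (fun t : ℝ => (- dslope G 0 (t * I)).re) 0 := by
        have := (hd0 ((0:ℝ) * I) (by simp)).continuousAt
        have c2 : ContinuousAt (fun t : ℝ => (t * I : ℂ)) 0 := by fun_prop
        exact continuous_re.continuousAt.comp (ContinuousAt.comp (f := fun t : ℝ => (t * I : ℂ)) this c2)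
      have c3 : Tendsto (fun t : ℝ => (- dslope G 0 (t * I)).re) (𝓝[≠] 0) (𝓝 _) := c1.continuousWithinAt
      refine ge_of_tendsto c3 ?_
      filter_upwards [self_mem_nhdsWithin] with t ht
      exact hline t ht) hz
  obtain ⟨x, hx⟩ : ∃ x : ℝ, R ≤ x ∧ C / r < x := ⟨max R (C / r + 1), le_max_left _ _, (by linarith : C/r < C/r+1).trans_le (le_max_right _ _)⟩
  have x0 : 0 < x := by linarith
  have k1 := key x (by simp; linarith)
  have k2 := hR x (by simp; linarith) (by simp; linarith [le_abs_self x])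
  rw [form x (by exact_mod_cast x0.ne'), sub_re, ← ofReal_div, ofReal_re, div_ofReal_re] at k1
  have e2 : ‖(1:ℂ) / (x:ℂ)‖ = 1 / x := by
    rw [norm_div, norm_one, norm_real, Real.norm_of_nonneg (by linarith)]
  rw [e2] at k2
  have k3 := (neg_le_abs _).trans ((abs_re_le_norm (G x)).trans k2)
  rw [← sub_div, div_nonneg_iff] at k1
  rcases k1 with k1 | k1
  · have k4 : r ≤ C * (1/x) := by have := k1.1; rw [neg_re] at this; linarith
    rw [mul_one_div, le_div_iff₀ x0] at k4
    have k5 := hx.2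
    rw [div_lt_iff₀ hr] at k5
    nlinarith
  · linarith [k1.2]

end G2
open Complex
namespace G2
open MeasureTheory Set Filter Topology Asymptotics

noncomputable def Dz (z : ℂ) : ℂ :=
  X (z+3/2) * X (3*z+3/2) * ((1 - aa/2 + aa * z) * ((z - 1/2) * (3*z - 1/2)))
  - X (z+1/2) * X (3*z+1/2) * ((z+3/2)*(z-3/2)) - 2 * X (z+1/2) * X (3*z+3/2) * ((z-1/2)*(z-3/2))
noncomputable def Mz (z : ℂ) : ℂ := X (z+3/2) * X (3*z+3/2)
noncomputable def fz (z : ℂ) : ℂ :=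
  (1 - aa/2 + aa * z) * ((z - 1/2) * (3*z - 1/2))
  - (hh (z+1/2) * hh (3*z+1/2) * ((z+3/2)*(z-3/2)) + 2 * hh (z+1/2) * ((z-1/2)*(z-3/2)))

lemma Dz_diff : Differentiable ℂ Dz := by
  have := X_diff
  have h : ∀ a b : ℂ, Differentiable ℂ (fun z => X (a*z+b)) := fun a b => X_diff.comp (by fun_prop)
  have h1 := h 3 (3/2)
  have h2 := h 3 (1/2)
  have h3 : Differentiable ℂ (fun z => X (z+3/2)) := by simpa using h 1 (3/2)
  have h4 : Differentiable ℂ (fun z => X (z+1/2)) := by simpa using h 1 (1/2)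
  unfold Dz; fun_prop
lemma Mz_diff : Differentiable ℂ Mz := by
  have h : ∀ a b : ℂ, Differentiable ℂ (fun z => X (a*z+b)) := fun a b => X_diff.comp (by fun_prop)
  have h1 := h 3 (3/2)
  have h3 : Differentiable ℂ (fun z => X (z+3/2)) := by simpa using h 1 (3/2)
  unfold Mz; fun_prop

lemma Mz_ne {z : ℂ} (hz : 0 ≤ z.re) : Mz z ≠ 0 :=
  mul_ne_zero (X_ne_zero (by norm_num; linarith)) (X_ne_zero (by norm_num; linarith))

lemma Dz_eq {z : ℂ} (hz : 0 ≤ z.re) : Dz z = Mz z * fz z := by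
  have h1 : X (z+3/2) ≠ 0 := X_ne_zero (by norm_num; linarith)
  have h2 : X (3*z+3/2) ≠ 0 := X_ne_zero (by norm_num; linarith)
  unfold Dz Mz fz hh
  rw [show z + 1/2 + 1 = z + 3/2 by ring, show 3*z + 1/2 + 1 = 3*z + 3/2 by ring]
  generalize X (z+3/2) = A at *
  generalize X (3*z+3/2) = B at *
  generalize X (z+1/2) = C
  generalize X (3*z+1/2) = E
  field_simp
  ring

lemma fz_line (t : ℝ) : fz (t * I) = Et t := by
  unfold fz Et hl
  rw [show (t:ℂ) * I + 1/2 = 1/2 + t * I by ring, show 3 * ((t:ℂ) * I) + 1/2 = 1/2 + (3 * t : ℝ) * I by push_cast; ring]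
  ring_nf; simp only [I_sq, I_pow_three]; ring

lemma aa_ne : (aa:ℂ) ≠ 0 := by
  have := abs_le.mp aa_bd
  have : aa ≠ 0 := by intro h; rw [h] at this; norm_num at this
  exact_mod_cast this

lemma sc {k u : ℂ → ℂ} (h : k =Θ[lr] u) {c : ℂ} (hc : c ≠ 0) : (fun z => c * k z) =Θ[lr] u := (isTheta_const_mul_left hc).mpr h

lemma hhO : (fun z => hh (z+1/2)) =O[lr] (fun _ => (1:ℂ)) := by
  refine IsBigO.of_bound 1 ?_
  filter_upwards [lr_re] with z hz
  rw [norm_one, mul_one]; exact hh_le (by simp; linarith)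
lemma hhO3 : (fun z => hh (3*z+1/2)) =O[lr] (fun _ => (1:ℂ)) := by
  refine IsBigO.of_bound 1 ?_
  filter_upwards [lr_re] with z hz
  rw [norm_one, mul_one]; exact hh_le (by simp; linarith)

lemma z23 : (fun z : ℂ => z * z) =o[lr] (fun z => z * (z * z)) := by
  have := (cst 1).mul_isBigO (isBigO_refl (fun z : ℂ => z * z) lr)
  simpa only [one_mul] using this

lemma fz_theta : fz =Θ[lr] (fun z => z * (z * z)) := by
  have m : (fun z : ℂ => (1 - aa/2 + aa * z) * ((z - 1/2) * (3*z - 1/2))) =Θ[lr] (fun z => z * (z * z)) := by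
    refine (linc aa_ne _).mul ((lin (1/2)).mul ?_)
    have := linc (c := 3) (by norm_num) (-(1/2))
    have e : (fun z : ℂ => 3*z - 1/2) = (fun z => -(1/2) + 3 * z) := by funext z; ring
    rw [e]; exact this
  have r : (fun z : ℂ => (hh (z+1/2) * hh (3*z+1/2) * ((z+3/2)*(z-3/2)) + 2 * hh (z+1/2) * ((z-1/2)*(z-3/2)))) =O[lr] (fun z => z * z) := by
    have r1 := (hhO.mul hhO3).mul ((lin' (3/2)).1.mul (lin (3/2)).1)
    have r2 := (hhO.const_mul_left 2).mul ((lin (1/2)).1.mul (lin (3/2)).1)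
    simp only [one_mul] at r1 r2
    exact r1.add r2
  have := m.add_isLittleO (r.trans_isLittleO z23).neg_left
  have e : fz = (fun z : ℂ => (1 - aa/2 + aa * z) * ((z - 1/2) * (3*z - 1/2))) + (fun z : ℂ => -(hh (z+1/2) * hh (3*z+1/2) * ((z+3/2)*(z-3/2)) + 2 * hh (z+1/2) * ((z-1/2)*(z-3/2)))) := by
    funext z; unfold fz; simp only [Pi.add_apply]; ring
  rw [e]; exact this

lemma fac {F : ℂ → ℂ} (hF : Differentiable ℂ F) {a : ℂ} (ha : F a = 0) :
    ∃ F1, Differentiable ℂ F1 ∧ ∀ z, F z = (z - a) * F1 z := by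
  refine ⟨dslope F a, ?_, fun z => ?_⟩
  · have := (differentiableOn_dslope (c := a) (f := F) (s := univ) univ_mem).mpr hF.differentiableOn
    rwa [differentiableOn_univ] at this
  · have := sub_smul_dslope F a z
    rw [ha, sub_zero, smul_eq_mul] at this; exact this.symm

lemma Et_ne (t : ℝ) : Et t ≠ 0 := by
  intro h
  have := line t
  rw [h] at this
  simp at this
  have h2 : 0 < (1+t^2)^3 := by positivity
  norm_num at this
  linarith

lemma Dz_line (t : ℝ) : Dz (t * I) ≠ 0 := by
  rw [Dz_eq (by simp), fz_line]
  exact mul_ne_zero (Mz_ne (by simp)) (Et_ne t)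

lemma Dz_re {a : ℂ} (h : Dz a = 0) (h0 : 0 ≤ a.re) : 0 < a.re := by
  rcases h0.lt_or_eq with h1 | h1
  · exact h1
  · exfalso
    have e : a = (a.im : ℂ) * I := by apply Complex.ext <;> simp [← h1]
    rw [e] at h
    exact Dz_line _ h

lemma npos {a z : ℂ} (ha : 0 < a.re) (hz : 0 ≤ z.re) : z + (starRingEnd ℂ) a ≠ 0 := by
  intro h
  have := congrArg re h
  simp at this; linarith

lemma nsq_le (a : ℂ) (t : ℝ) : normSq (t * I - a) ≤ 2 * (1 + normSq a) * (1 + t^2) := by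
  rw [normSq_apply, normSq_apply]
  simp
  nlinarith [sq_nonneg (t + a.im), mul_nonneg (sq_nonneg t) (sq_nonneg a.re), mul_nonneg (sq_nonneg t) (sq_nonneg a.im), sq_nonneg a.re]

lemma no3 {a b c : ℂ} {v : ℂ → ℂ} (hv : Differentiable ℂ v) (ha : 0 < a.re) (hb : 0 < b.re) (hc : 0 < c.re)
    (h : ∀ z, Dz z = (z - a) * ((z - b) * ((z - c) * v z))) : False := by
  set g0 : ℂ → ℂ := fun z => (1 - 0.04719755/2) + 0.04719755 * z with hg0
  set qs : ℂ → ℂ := fun z => (z + (starRingEnd ℂ) a) * ((z + (starRingEnd ℂ) b) * (z + (starRingEnd ℂ) c)) with hqs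
  set ns : ℂ → ℂ := fun z => 12 + 5/2 * z + z * z with hns
  have g0ne : ∀ z : ℂ, 0 ≤ z.re → g0 z ≠ 0 := by
    intro z hz h
    have := congrArg re h
    rw [hg0] at this
    simp only [] at this
    rw [show (1 - 0.04719755/2 : ℂ) + 0.04719755 * z = ((1 - 0.04719755/2 : ℝ) : ℂ) + ((0.04719755 : ℝ) : ℂ) * z by push_cast; ring,
      add_re, re_ofReal_mul, ofReal_re, zero_re] at this
    norm_num at this; linarith
  have qsne : ∀ z : ℂ, 0 ≤ z.re → qs z ≠ 0 := fun z hz =>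
    mul_ne_zero (npos ha hz) (mul_ne_zero (npos hb hz) (npos hc hz))
  refine contraA (k := fun z => - (v z * ns z) / (Mz z * g0 z * qs z)) (r := 1e-10 / (8 * (1 + normSq a) * (1 + normSq b) * (1 + normSq c))) ?_ ?_ ?_ ?_
  · intro z hz
    have := Mz_diff
    refine DifferentiableAt.div (by fun_prop) (by fun_prop) (mul_ne_zero (mul_ne_zero (Mz_ne hz) (g0ne z hz)) (qsne z hz))
  · have t1 : g0 =Θ[lr] fun z => z := linc (by norm_num) _
    have t2 : qs =Θ[lr] fun z => z * (z * z) := (lin' _).mul ((lin' _).mul (lin' _))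
    have t3 : ns =O[lr] fun z => z * z := by
      have q := ((linc (c := 5/2) (by norm_num) 12).1.mul (cst 1).isBigO)
      have := q.add (isBigO_refl (fun z : ℂ => z * z) lr)
      simpa only [mul_one] using this
    have t4 : (fun z : ℂ => (z - a) * ((z - b) * (z - c))) =Θ[lr] fun z => z * (z * z) := (lin _).mul ((lin _).mul (lin _))
    have t5 := ((fz_theta.div t4).1.mul (t3.neg_left)).mul (t1.mul t2).inv.1
    refine (t5.congr' ?_ ?_)
    · filter_upwards [lr_re, lr_norm (‖a‖+‖b‖+‖c‖+1)] with z hz hn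
      have z1 : z - a ≠ 0 := by
        rw [sub_ne_zero]; rintro rfl; linarith [norm_nonneg b, norm_nonneg c]
      have z2 : z - b ≠ 0 := by
        rw [sub_ne_zero]; rintro rfl; linarith [norm_nonneg a, norm_nonneg c]
      have z3 : z - c ≠ 0 := by
        rw [sub_ne_zero]; rintro rfl; linarith [norm_nonneg a, norm_nonneg b]
      have e := h z
      rw [Dz_eq hz] at e
      have m0 := Mz_ne hz
      have m1 := g0ne z hz
      have m2 := qsne z hz
      have e' : fz z = (z - a) * ((z - b) * ((z - c) * v z)) / Mz z := by rw [← e]; field_simp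
      rw [e']
      field_simp
    · filter_upwards [lr_ne] with z hz
      field_simp
  · have := normSq_nonneg a
    have := normSq_nonneg b
    have := normSq_nonneg c
    positivity
  · intro t
    have hz : 0 ≤ ((t:ℂ) * I).re := by simp
    have e := h (t * I)
    rw [Dz_eq hz, fz_line] at e
    have m0 := Mz_ne hz
    have m1 := g0ne _ hz
    have m2 := qsne _ hz
    have za : (t * I - a : ℂ) ≠ 0 := by
      intro h; have := congrArg re h; simp at this; linarith
    have zb : (t * I - b : ℂ) ≠ 0 := by
      intro h; have := congrArg re h; simp at this; linarith
    have zc : (t * I - c : ℂ) ≠ 0 := by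
      intro h; have := congrArg re h; simp at this; linarith
    have cj : ∀ a : ℂ, (starRingEnd ℂ) (t * I - a) = - (t * I + (starRingEnd ℂ) a) := by
      intro a; simp; ring
    have eN : (starRingEnd ℂ) (Nt t) = (starRingEnd ℂ) (g0 (t * I)) * ns (t * I) := by
      have : Nt t = g0 (t * I) * (starRingEnd ℂ) (ns (t * I)) := by
        rw [hg0, hns]; unfold Nt
        simp only [map_add, map_mul, map_div₀, map_ofNat, conj_ofReal, conj_I]
        ring_nf; simp only [I_sq]; ring_nf; try simp only [I_sq, I_pow_three]; ring
      rw [this, map_mul, conj_conj]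
    have q0 : - (v (t*I) * ns (t*I)) / (Mz (t*I) * g0 (t*I) * qs (t*I)) =
        (((normSq (g0 (t*I)) * (normSq (t*I-a) * (normSq (t*I-b) * normSq (t*I-c))))⁻¹ : ℝ) : ℂ) * (Et t * (starRingEnd ℂ) (Nt t)) := by
      rw [eN]
      push_cast
      rw [← mul_conj, ← mul_conj, ← mul_conj, ← mul_conj, cj, cj, cj]
      have m3 : (starRingEnd ℂ) (g0 (t*I)) ≠ 0 := by simpa using m1
      have m4 := npos ha hz
      have m5 := npos hb hz
      have m6 := npos hc hz
      have e' : Et t = (t*I - a) * ((t*I - b) * ((t*I - c) * v (t*I))) / Mz (t*I) := by rw [← e]; field_simp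
      rw [e', hqs]
      simp only []
      field_simp
    rw [q0, re_ofReal_mul]
    have l := line t
    have ng : normSq (g0 (t*I)) ≤ 1 + t^2 := by
      have : g0 (t * I) = (((1 - 0.04719755/2 : ℝ):ℂ) + ((0.04719755 * t : ℝ):ℂ) * I) := by rw [hg0]; push_cast; ring
      rw [this, normSq_add_mul_I]; norm_num; nlinarith [sq_nonneg t]
    have p1 : normSq (g0 (t*I)) * (normSq (t*I-a) * (normSq (t*I-b) * normSq (t*I-c))) ≤
      (1+t^2) * ((2 * (1 + normSq a) * (1 + t^2)) * ((2 * (1 + normSq b) * (1 + t^2)) * (2 * (1 + normSq c) * (1 + t^2)))) := by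
      have := normSq_nonneg a
      have := normSq_nonneg b
      have := normSq_nonneg c
      have na := nsq_le a t
      have nb := nsq_le b t
      have nc := nsq_le c t
      exact mul_le_mul ng (mul_le_mul na (mul_le_mul nb nc (normSq_nonneg _) (by positivity)) (mul_nonneg (normSq_nonneg _) (normSq_nonneg _)) (by positivity)) (mul_nonneg (normSq_nonneg _) (mul_nonneg (normSq_nonneg _) (normSq_nonneg _))) (by positivity)
    have p0 : 0 < normSq (g0 (t*I)) * (normSq (t*I-a) * (normSq (t*I-b) * normSq (t*I-c))) :=
      mul_pos (normSq_pos.mpr m1) (mul_pos (normSq_pos.mpr za) (mul_pos (normSq_pos.mpr zb) (normSq_pos.mpr zc)))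
    have := normSq_nonneg a
    have := normSq_nonneg b
    have := normSq_nonneg c
    rw [inv_mul_eq_div, div_div, div_le_div_iff₀ (by positivity) p0]
    refine (mul_le_mul_of_nonneg_left p1 (by norm_num)).trans ?_
    refine le_trans (le_of_eq ?_) (mul_le_mul_of_nonneg_right l (by positivity))
    ring

lemma stepA : ∃ a b : ℂ, ∃ v : ℂ → ℂ, (∀ z : ℂ, -1 < z.re → DifferentiableAt ℂ v z) ∧
    (∀ z : ℂ, 0 ≤ z.re → v z ≠ 0) ∧ ∀ z : ℂ, -1 < z.re → Dz z = (z - a) * ((z - b) * v z) := by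
  have ne : ∀ z : ℂ, -1 < z.re → z + 1 ≠ 0 := by
    intro z hz h
    have := congrArg re h
    simp at this; linarith
  by_cases h1 : ∃ a : ℂ, 0 ≤ a.re ∧ Dz a = 0
  swap
  · push Not at h1
    refine ⟨-1, -1, fun z => Dz z / (z+1)^2, fun z hz => ?_, fun z hz => ?_, fun z hz => ?_⟩
    · exact (Dz_diff z).div (by fun_prop) (pow_ne_zero _ (ne z hz))
    · exact div_ne_zero (h1 z hz) (pow_ne_zero _ (ne z (by linarith)))
    · have := ne z hz
      rw [sub_neg_eq_add]; field_simp
  obtain ⟨a, ha, hDa⟩ := h1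
  have ha' := Dz_re hDa ha
  obtain ⟨D1, d1, e1⟩ := fac Dz_diff hDa
  by_cases h2 : ∃ a : ℂ, 0 ≤ a.re ∧ D1 a = 0
  swap
  · push Not at h2
    refine ⟨a, -1, fun z => D1 z / (z+1), fun z hz => ?_, fun z hz => ?_, fun z hz => ?_⟩
    · exact (d1 z).div (by fun_prop) (ne z hz)
    · exact div_ne_zero (h2 z hz) (ne z (by linarith))
    · have := ne z hz
      rw [sub_neg_eq_add, e1]; field_simp
  obtain ⟨b, hb, hDb⟩ := h2
  have hb' := Dz_re (by rw [e1, hDb, mul_zero]) hb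
  obtain ⟨D2, d2, e2⟩ := fac d1 hDb
  refine ⟨a, b, D2, fun z _ => d2 z, fun c hc hDc => ?_, fun z _ => by rw [e1, e2]⟩
  have hc' := Dz_re (by rw [e1, e2, hDc, mul_zero, mul_zero]) hc
  obtain ⟨D3, d3, e3⟩ := fac d2 hDc
  exact no3 d3 ha' hb' hc' (fun z => by rw [e1, e2, e3])

end G2
open Complex
namespace G2
open MeasureTheory Set Filter Topology Asymptotics

lemma xr_conv : ConvexOn ℝ univ xr := by
  refine ⟨convex_univ, fun p _ q _ a b ha hb hab => ?_⟩
  rw [smul_eq_mul, smul_eq_mul, smul_eq_mul, smul_eq_mul, xr_eq_cosh, xr_eq_cosh p, xr_eq_cosh q,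
    ← integral_const_mul, ← integral_const_mul, ← integral_add ((int_cosh p).const_mul a) ((int_cosh q).const_mul b)]
  apply setIntegral_mono_on (int_cosh _) (((int_cosh p).const_mul a).add ((int_cosh q).const_mul b)) measurableSet_Ioi
  intro x hx
  have hx' : (1:ℝ) < x := hx
  have hx0 : (0:ℝ) < x := by linarith
  have w : 0 ≤ x ^ (-3/4:ℝ) * W x := mul_nonneg (Real.rpow_nonneg hx0.le _) (W_nonneg hx'.le)
  have c : Real.cosh ((a * p + b * q - 1/2) / 2 * Real.log x) ≤
      a * Real.cosh ((p - 1/2) / 2 * Real.log x) + b * Real.cosh ((q - 1/2) / 2 * Real.log x) := by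
    set u := (p - 1/2) / 2 * Real.log x with hu
    set v := (q - 1/2) / 2 * Real.log x with hv
    have e : (a * p + b * q - 1/2) / 2 * Real.log x = a * u + b * v := by
      rw [hu, hv]
      have : b = 1 - a := by linarith
      rw [this]; ring
    rw [e, Real.cosh_eq, Real.cosh_eq, Real.cosh_eq]
    have c1 := convexOn_exp.2 (mem_univ u) (mem_univ v) ha hb hab
    have c2 := convexOn_exp.2 (mem_univ (-u)) (mem_univ (-v)) ha hb hab
    simp only [smul_eq_mul] at c1 c2
    rw [show -(a*u+b*v) = a * -u + b * -v by ring]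
    linarith
  have := mul_le_mul_of_nonneg_left c w
  simp only [Pi.add_apply]
  linarith

lemma xi0_hd (s : ℂ) : HasDerivAt completedRiemannZeta₀ (deriv completedRiemannZeta₀ s) s :=
  (differentiable_completedZeta₀ s).hasDerivAt

lemma xi0_dreal (p : ℝ) : ∃ d : ℝ, deriv completedRiemannZeta₀ p = d ∧ HasDerivAt xr d p := by
  have h := xi0_hd p
  have h1 := h.real_of_complex
  have e : (fun x : ℝ => (completedRiemannZeta₀ x).re) = xr := by
    funext x; rw [xi0_real, ofReal_re]
  rw [e] at h1
  refine ⟨_, ?_, h1⟩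
  have h2 := h1.ofReal_comp
  have h3 := h.comp_ofReal
  have e2 : (fun x : ℝ => completedRiemannZeta₀ x) = (fun x : ℝ => (xr x : ℂ)) := by
    funext x; rw [xi0_real]
  rw [e2] at h3
  exact h3.unique h2

lemma X_hd (s : ℂ) : HasDerivAt X ((2*s-1) * completedRiemannZeta₀ s + s * (s-1) * deriv completedRiemannZeta₀ s) s := by
  have := (((hasDerivAt_id s).mul ((hasDerivAt_id s).sub_const 1)).mul (xi0_hd s)).const_add 1
  refine (this.congr_deriv ?_)
  simp only [Pi.mul_apply, id]; ring

lemma X_half : HasDerivAt X 0 (1/2) := by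
  have h := (X_diff (1/2)).hasDerivAt
  have h2 : HasDerivAt (fun s => X (1 - s)) (deriv X (1/2) * (-1)) (1/2) := by
    refine HasDerivAt.comp (h₂ := X) (1/2 : ℂ) (h := fun s => 1 - s) ?_ ?_
    · norm_num; simpa using h
    · simpa using (hasDerivAt_id (1/2:ℂ)).const_sub 1
  have e : (fun s => X (1 - s)) = X := by funext s; rw [X_one_sub]
  rw [e] at h2
  have := h.unique h2
  have : deriv X (1/2) = 0 := by linear_combination this / 2
  rwa [this] at h

lemma X_cmp {b d : ℂ} (h : HasDerivAt X d b) (k : ℂ) : HasDerivAt (fun z => X (k * z + b)) (d * k) 0 := by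
  refine HasDerivAt.comp (h₂ := X) (0 : ℂ) (h := fun s => k * s + b) ?_ ?_
  · simpa using h
  · simpa using ((hasDerivAt_id (0:ℂ)).const_mul k).add_const b

noncomputable def Vz (z : ℂ) : ℂ := (z - 1/2) * (X (2*z+1) * Dz z)

lemma Vz_hd {x Y Yd : ℂ} (hx : X (1/2) = x) (hY : X (3/2) = Y) (hYd : HasDerivAt X Yd (3/2)) :
    Dz 0 = Y^2 * (1 - aa/2)/4 + 9/4 * x^2 - 3/2 * x * Y ∧
    HasDerivAt Vz ((Y^2 * (1 - aa/2)/4 + 9/4 * x^2 - 3/2 * x * Y) * (1 - completedRiemannZeta₀ 1)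
      - (Y * Yd * (1 - aa/2) - Y^2 * (2 - 5*aa/4) - 9/2 * x * Yd + 4 * x * Y) / 2) 0 := by
  have d0 : Dz 0 = Y^2 * (1 - aa/2)/4 + 9/4 * x^2 - 3/2 * x * Y := by
    unfold Dz; simp only [mul_zero, zero_add, hx, hY]; ring
  refine ⟨d0, ?_⟩
  have h1 : HasDerivAt (fun z => X (z+3/2)) Yd 0 := by simpa using X_cmp hYd 1
  have h2 := X_cmp hYd 3
  have h3 : HasDerivAt (fun z => X (z+1/2)) 0 0 := by simpa using X_cmp X_half 1
  have h4 := X_cmp X_half 3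
  have h5 : HasDerivAt (fun z => X (2*z+1)) (completedRiemannZeta₀ 1 * 2) 0 := by
    refine X_cmp ((X_hd 1).congr_deriv ?_) 2
    ring
  have i := hasDerivAt_id (0:ℂ)
  have p1 : HasDerivAt (fun z : ℂ => (1 - aa/2 + aa * z) * ((z - 1/2) * (3*z - 1/2))) (-2 + 5*aa/4) 0 := by
    refine (((i.const_mul (aa:ℂ)).const_add (1 - aa/2 : ℂ)).mul ((i.sub_const (1/2)).mul ((i.const_mul 3).sub_const (1/2)))).congr_deriv ?_
    simp; ring
  have p2 : HasDerivAt (fun z : ℂ => (z+3/2)*(z-3/2)) 0 0 := by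
    refine ((i.add_const (3/2)).mul (i.sub_const (3/2))).congr_deriv ?_
    simp
  have p3 : HasDerivAt (fun z : ℂ => (z-1/2)*(z-3/2)) (-2) 0 := by
    refine ((i.sub_const (1/2)).mul (i.sub_const (3/2))).congr_deriv ?_
    simp; ring
  have hD : HasDerivAt Dz (Y * Yd * (1 - aa/2) - Y^2 * (2 - 5*aa/4) - 9/2 * x * Yd + 4 * x * Y) 0 := by
    refine ((((h1.mul h2).mul p1).sub ((h3.mul h4).mul p2)).sub (((h3.const_mul 2).mul h2).mul p3)).congr_deriv ?_
    simp only [Pi.mul_apply, mul_zero, zero_add, hx, hY]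
    ring
  refine ((i.sub_const (1/2)).mul (h5.mul hD)).congr_deriv ?_
  have X1 : X 1 = 1 := by simp [X]
  simp only [Pi.mul_apply, mul_zero, zero_add, id, d0, X1]
  ring

lemma xr_bd {wx : ℤ} {p v : ℝ} (hp : p = wx/113000) (h1 : p ≤ 2) (h2 : -1 ≤ p) (h : xok wx 0 = true)
    {m : ℤ} (hm : (xih wx 0).re = m) (hv : v = m / 10^20) : |xr p - v| ≤ 2e-8 := by
  have := xi_sound (s := (p:ℂ)) (wx := wx) (T := 0) (by rw [hp]; push_cast; ring) (by simpa using h1) (by simpa using h2) h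
  refine le_trans ?_ ((abs_re_le_norm _).trans this)
  rw [xi0_real, GI.C, hm]
  refine le_of_eq (congrArg abs ?_)
  rw [sub_re, ofReal_re, hv, show (10:ℂ)^20 = ((10^20 : ℝ) : ℂ) by push_cast; rfl, div_ofReal_re]
  simp

set_option maxRecDepth 100000 in
lemma xb1 : |xr (1/2) - 0.0230337667| ≤ 3e-8 := by
  have := xr_bd (wx := 56500) (p := 1/2) (by norm_num) (by norm_num) (by norm_num) (by decide +kernel) (m := 2303376670364963626) (by decide +kernel) rfl
  rw [abs_le] at *; norm_num at *; constructor <;> linarith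
set_option maxRecDepth 100000 in
lemma xb2 : |xr 1 - 0.0230957012| ≤ 3e-8 := by
  have := xr_bd (wx := 113000) (p := 1) (by norm_num) (by norm_num) (by norm_num) (by decide +kernel) (m := 2309570115897265710) (by decide +kernel) rfl
  rw [abs_le] at *; norm_num at *; constructor <;> linarith
set_option maxRecDepth 100000 in
lemma xb3 : |xr (3/2) - 0.0232827621| ≤ 3e-8 := by
  have := xr_bd (wx := 169500) (p := 3/2) (by norm_num) (by norm_num) (by norm_num) (by decide +kernel) (m := 2328276205007743077) (by decide +kernel) rfl
  rw [abs_le] at *; norm_num at *; constructor <;> linarith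

lemma Vnum {x Y Yd c a : ℝ} (x1 : 0.994241 ≤ x) (x2 : x ≤ 0.994242) (Y1 : 1.017462 ≤ Y) (Y2 : Y ≤ 1.0174623)
    (d1 : 0.0468459 ≤ Yd) (c1 : 0.0230956 ≤ c) (c2 : c ≤ 0.0230958) (a1 : 0.0471975 ≤ a) (a2 : a ≤ 0.0471976) :
    0 < Y^2 * (1 - a/2)/4 + 9/4 * x^2 - 3/2 * x * Y ∧
    0 < (Y^2 * (1 - a/2)/4 + 9/4 * x^2 - 3/2 * x * Y) * (1 - c)
      - (Y * Yd * (1 - a/2) - Y^2 * (2 - 5*a/4) - 9/2 * x * Yd + 4 * x * Y) / 2 := by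
  have x3 : 0.988515 ≤ x^2 := by nlinarith
  have y3 : 1.035228 ≤ Y^2 := by nlinarith
  have xy : x * Y ≤ 1.011604 := by nlinarith
  have p1 : 1.035228 * 0.976401 ≤ Y^2 * (1 - a/2) := mul_le_mul y3 (by linarith) (by norm_num) (by positivity)
  have D : 0.959 ≤ Y^2 * (1 - a/2)/4 + 9/4 * x^2 - 3/2 * x * Y := by norm_num at *; linarith
  have p2 : Y * (1 - a/2) ≤ 1.0174623 * 0.9764013 := mul_le_mul Y2 (by linarith) (by linarith) (by norm_num)
  have p3 : 0.0468459 * (9/2 * 0.994241 - 1.0174623 * 0.9764013) ≤ Yd * (9/2 * x - Y * (1-a/2)) :=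
    mul_le_mul d1 (by linarith) (by norm_num) (by linarith)
  have p4 : 1.035228 * (2 - 5*0.0471976/4) ≤ Y^2 * (2 - 5*a/4) := mul_le_mul y3 (by linarith) (by norm_num) (by positivity)
  refine ⟨by linarith, ?_⟩
  have p5 : (1.035228 * 0.976401/4 + 9/4 * 0.988515 - 3/2 * 1.011604) * (1 - 0.0230958) ≤ (Y^2 * (1 - a/2)/4 + 9/4 * x^2 - 3/2 * x * Y) * (1 - c) :=
    mul_le_mul (by linarith) (by linarith) (by norm_num) (by linarith)
  norm_num at *
  linarith

lemma V0 : ∃ w D0 : ℝ, 0 < w ∧ 0 < D0 ∧ Dz 0 = D0 ∧ HasDerivAt Vz (w:ℂ) 0 := by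
  obtain ⟨d, hd, hd2⟩ := xi0_dreal (3/2)
  have cv := xr_conv.slope_le_of_hasDerivAt (mem_univ 1) (mem_univ (3/2)) (by norm_num) hd2
  rw [slope_def_field, show (3/2:ℝ) - 1 = 1/2 by norm_num, div_le_iff₀ (by norm_num)] at cv
  have b1 := abs_le.mp xb1
  have b2 := abs_le.mp xb2
  have b3 := abs_le.mp xb3
  have aab := abs_le.mp aa_bd
  have hx : X (1/2) = ((1 - xr (1/2) / 4 : ℝ) : ℂ) := by
    have := X_real (1/2); push_cast at this; rw [this]; unfold Xr; push_cast; ring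
  have hY : X (3/2) = ((1 + 3/4 * xr (3/2) : ℝ) : ℂ) := by
    have := X_real (3/2); push_cast at this; rw [this]; unfold Xr; push_cast; ring
  have hYd : HasDerivAt X ((2 * xr (3/2) + 3/4 * d : ℝ) : ℂ) (3/2) := by
    refine (X_hd (3/2)).congr_deriv ?_
    have := xi0_real (3/2)
    push_cast at this hd
    rw [this, hd]; push_cast; ring
  have c1 : completedRiemannZeta₀ 1 = (xr 1 : ℂ) := by have := xi0_real 1; push_cast at this; exact this
  obtain ⟨h1, h2⟩ := Vz_hd hx hY hYd
  obtain ⟨n1, n2⟩ := Vnum (x := 1 - xr (1/2) / 4) (Y := 1 + 3/4 * xr (3/2)) (Yd := 2 * xr (3/2) + 3/4 * d) (c := xr 1) (a := aa)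
    (by linarith only [b1.1, b1.2, b2.1, b2.2, b3.1, b3.2, aab.1, aab.2, cv]) (by linarith only [b1.1, b1.2, b2.1, b2.2, b3.1, b3.2, aab.1, aab.2, cv]) (by linarith only [b1.1, b1.2, b2.1, b2.2, b3.1, b3.2, aab.1, aab.2, cv]) (by linarith only [b1.1, b1.2, b2.1, b2.2, b3.1, b3.2, aab.1, aab.2, cv])
    (by linarith only [b1.1, b1.2, b2.1, b2.2, b3.1, b3.2, aab.1, aab.2, cv]) (by linarith only [b1.1, b1.2, b2.1, b2.2, b3.1, b3.2, aab.1, aab.2, cv]) (by linarith only [b1.1, b1.2, b2.1, b2.2, b3.1, b3.2, aab.1, aab.2, cv]) (by linarith only [b1.1, b1.2, b2.1, b2.2, b3.1, b3.2, aab.1, aab.2, cv]) (by linarith only [b1.1, b1.2, b2.1, b2.2, b3.1, b3.2, aab.1, aab.2, cv])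
  refine ⟨_, _, n2, n1, ?_, ?_⟩
  · rw [h1]; push_cast; ring
  · refine h2.congr_deriv ?_
    rw [c1]; push_cast; ring

end G2
open Complex
namespace G2
open MeasureTheory Set Filter Topology Asymptotics

noncomputable def Fz (z : ℂ) : ℂ := Vz z - Vz (-z)

lemma X2_diff : Differentiable ℂ (fun z => X (2*z+1)) := X_diff.comp (by fun_prop)
lemma Vz_diff : Differentiable ℂ Vz := by
  have := X2_diff
  have := Dz_diff
  unfold Vz; fun_prop
lemma Fz_diff : Differentiable ℂ Fz := by
  have := Vz_diff
  have h2 : Differentiable ℂ (fun z => Vz (-z)) := Vz_diff.comp (by fun_prop)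
  unfold Fz; fun_prop

lemma X_one : X 1 = 1 := by simp [X]
lemma X_zero : X 0 = 1 := by simp [X]
lemma X_two : X 2 = 1 + aa := by
  rw [X_eq (by norm_num) (by norm_num)]
  have h := riemannZeta_def_of_ne_zero (s := 2) (by norm_num)
  have hp : (Real.pi : ℂ) ≠ 0 := by exact_mod_cast Real.pi_ne_zero
  have g : Gammaℝ 2 = (Real.pi : ℂ)⁻¹ := by
    rw [Gammaℝ_def]
    norm_num [Complex.cpow_neg_one]
  rw [riemannZeta_two, g] at h
  have h' : completedRiemannZeta 2 = Real.pi / 6 := by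
    field_simp at h
    linear_combination -h / 6
  rw [h', aa]
  push_cast
  ring

lemma F_half : Fz (1/2) = 0 := by
  have e1 : X (-1) = 1 + aa := by rw [← X_two, ← X_one_sub]; norm_num
  unfold Fz Vz Dz
  norm_num [X_one, X_zero, e1]
  ring

lemma F_sixth : Fz (1/6) = 0 := by
  have e2 : X (1/3) = X (2/3) := by rw [← X_one_sub]; norm_num
  unfold Fz Vz Dz
  norm_num [X_one, X_zero, X_two]
  norm_num at e2
  rw [e2]
  ring

lemma Vz_conj (z : ℂ) : Vz ((starRingEnd ℂ) z) = (starRingEnd ℂ) (Vz z) := by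
  unfold Vz Dz
  simp only [map_add, map_sub, map_mul, map_div₀, map_one, map_ofNat, conj_ofReal, ← X_conj]

lemma FO : (fun z => Fz z / (Mz z * X (2*z+1))) =O[lr] (fun z => z * (z * (z * z))) := by
  have one : ∀ {u w : ℂ → ℂ}, (∀ z : ℂ, 0 ≤ z.re → ‖u z‖ ≤ ‖w z‖) → (fun z => u z / w z) =O[lr] (fun _ => (1:ℂ)) := by
    intro u w h
    refine IsBigO.of_bound 1 ?_
    filter_upwards [lr_re] with z hz
    rw [norm_one, mul_one, norm_div]
    exact div_le_one_of_le₀ (h z hz) (norm_nonneg _)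
  have o1 : (fun z => X (z-1/2) / X (z+3/2)) =O[lr] (fun _ => (1:ℂ)) := one fun z hz => by
    have := schur_c (c := 2) (by norm_num) (w := z - 1/2) (by norm_num; linarith)
    convert this using 3; push_cast; ring
  have o2 : (fun z => X (3*z-1/2) / X (3*z+3/2)) =O[lr] (fun _ => (1:ℂ)) := one fun z hz => by
    have := schur_c (c := 2) (by norm_num) (w := 3*z - 1/2) (by norm_num; linarith)
    convert this using 3; push_cast; ring
  have o3 : (fun z => X (z+1/2) / X (z+3/2)) =O[lr] (fun _ => (1:ℂ)) := one fun z hz => by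
    have := schur1 (w := z + 1/2) (by norm_num; linarith)
    convert this using 3; ring
  have o4 : (fun z => X (3*z+1/2) / X (3*z+3/2)) =O[lr] (fun _ => (1:ℂ)) := one fun z hz => by
    have := schur1 (w := 3*z + 1/2) (by norm_num; linarith)
    convert this using 3; ring
  have o5 : (fun z => X (2*z) / X (2*z+1)) =O[lr] (fun _ => (1:ℂ)) := one fun z hz => by
    exact schur1 (w := 2*z) (by norm_num; linarith)
  have l1 : (fun z : ℂ => (1 - aa/2 + -(aa:ℂ) * z) * ((z + 1/2) * (1/2 + 3*z))) =O[lr] (fun z => z * (z * z)) :=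
    ((linc (neg_ne_zero.mpr aa_ne) _).mul ((lin' (1/2)).mul (linc (by norm_num) _))).1
  have l2 : (fun z : ℂ => (z-3/2)*(z+3/2)) =O[lr] (fun z => z * (z * z)) := by
    exact ((lin (3/2)).1.mul (lin' (3/2)).1).trans z23.isBigO
  have l3 : (fun z : ℂ => (z+1/2)*(z+3/2)) =O[lr] (fun z => z * (z * z)) := by
    exact ((lin' (1/2)).1.mul (lin' (3/2)).1).trans z23.isBigO
  have A := (o1.mul o2).mul l1
  have B := (o3.mul o4).mul l2
  have C := ((o3.const_mul_left 2).mul o2).mul l3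
  have E := (lin' (1/2)).1.mul (o5.mul ((A.sub B).sub C))
  have H := (lin (1/2)).1.mul fz_theta.1
  simp only [one_mul] at E
  refine (H.add E).congr' ?_ (by rfl)
  filter_upwards [lr_re] with z hz
  have e : Vz (-z) = -((z + 1/2) * (X (2*z) * (X (z-1/2) * X (3*z-1/2) * ((1 - aa/2 + -(aa:ℂ) * z) * ((z + 1/2) * (1/2 + 3*z)))
    - X (z+1/2) * X (3*z+1/2) * ((z-3/2)*(z+3/2)) - 2 * X (z+1/2) * X (3*z-1/2) * ((z+1/2)*(z+3/2))))) := by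
    unfold Vz Dz
    rw [show 2 * -z + 1 = 1 - 2*z by ring, show -z + 3/2 = 1 - (z - 1/2) by ring, show 3 * -z + 3/2 = 1 - (3*z - 1/2) by ring,
      show -z + 1/2 = 1 - (z+1/2) by ring, show 3 * -z + 1/2 = 1 - (3*z+1/2) by ring, X_one_sub, X_one_sub, X_one_sub, X_one_sub, X_one_sub]
    ring
  have h1 : X (z+3/2) ≠ 0 := X_ne_zero (by norm_num; linarith)
  have h2 : X (3*z+3/2) ≠ 0 := X_ne_zero (by norm_num; linarith)
  have h3 : X (2*z+1) ≠ 0 := X_ne_zero (by norm_num; linarith)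
  unfold Fz
  rw [e, Vz, Dz_eq hz, Mz]
  generalize X (z+3/2) = a1 at *
  generalize X (3*z+3/2) = a2 at *
  generalize X (2*z+1) = a3 at *
  generalize X (z-1/2) = a4
  generalize X (3*z-1/2) = a5
  generalize X (z+1/2) = a6
  generalize X (3*z+1/2) = a7
  generalize X (2*z) = a8
  generalize fz z = a9
  field_simp
  ring

lemma stepB {s0 : ℂ} (h0 : 0 < s0.re) (hF : Fz s0 = 0) : s0 = 1/2 ∨ s0 = 1/6 := by
  by_contra hne
  push Not at hne
  obtain ⟨w, D0, hw, hD0, hDz, hV⟩ := V0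
  obtain ⟨a, b, v, vd, vne, hv⟩ := stepA
  have F0 : Fz 0 = 0 := by simp [Fz]
  have s00 : s0 ≠ 0 := by rintro rfl; simp at h0
  obtain ⟨F1, d1, e1⟩ := fac Fz_diff F0
  obtain ⟨F2, d2, e2⟩ := fac d1 (a := 1/2) (by have := e1 (1/2); rw [F_half] at this; simpa using this.symm)
  obtain ⟨F3, d3, e3⟩ := fac d2 (a := 1/6) (by have := e1 (1/6); rw [F_sixth, e2] at this; norm_num at this; simpa using this)
  obtain ⟨χ, d4, e4⟩ := fac d3 (a := s0) (by
    have := e1 s0; rw [hF, e2, e3] at this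
    have := this.symm
    simp only [mul_eq_zero, sub_eq_zero, s00, hne.1, hne.2, false_or] at this
    exact this)
  have eF : ∀ z, Fz z = z * ((z - 1/2) * ((z - 1/6) * ((z - s0) * χ z))) := by
    intro z; rw [e1, e2, e3, e4, sub_zero]
  have a0 : a ≠ 0 := by
    rintro rfl
    have := hv 0 (by simp)
    rw [hDz] at this; simp at this; linarith
  have b0 : b ≠ 0 := by
    rintro rfl
    have := hv 0 (by simp)
    rw [hDz] at this; simp at this; linarith
  have x2 : ∀ z : ℂ, 0 ≤ z.re → X (2*z+1) ≠ 0 := fun z hz => X_ne_zero (by norm_num; linarith)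
  have sx : ∀ z : ℂ, 0 ≤ z.re → z + 1/6 ≠ 0 := by
    intro z hz h; have := congrArg re h; norm_num at this; linarith
  set den : ℂ → ℂ := fun z => v z * X (2*z+1) * ((z + 1/6) * (z + (starRingEnd ℂ) s0)) with hden
  have denne : ∀ z : ℂ, 0 ≤ z.re → den z ≠ 0 := fun z hz =>
    mul_ne_zero (mul_ne_zero (vne z hz) (x2 z hz)) (mul_ne_zero (sx z hz) (npos h0 hz))
  have dend : ∀ z : ℂ, -1 < z.re → DifferentiableAt ℂ den z := by
    intro z hz
    have := vd z hz
    have := X2_diff z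
    fun_prop
  set num : ℂ → ℂ := fun z => χ z * ((z + (starRingEnd ℂ) a) * (z + (starRingEnd ℂ) b)) with hnum
  have numd : Differentiable ℂ num := by fun_prop
  refine contraB (G := fun z => num z / den z) (r := 144 * w * (normSq a * normSq b) / (D0 * normSq s0)) ?_ ?_ ?_ ?_ ?_ ?_
  · intro z hz
    exact (numd z).div (dend z (by linarith)) (denne z hz)
  · have c1 : ∀ᶠ z in 𝓝 (0:ℂ), den z ≠ 0 := (dend 0 (by simp)).continuousAt.eventually_ne (denne 0 (by simp))
    have c2 : ∀ᶠ z in 𝓝 (0:ℂ), -1 < z.re := continuous_re.continuousAt.eventually_const_lt (by simp)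
    filter_upwards [c1, c2] with z h1 h2
    exact (numd z).div (dend z h2) h1
  · have t1 : (fun z : ℂ => z * ((z - 1/2) * ((z - 1/6) * (z - s0)))) =Θ[lr] fun z => z * (z * (z * z)) :=
      (isTheta_refl _ _).mul ((lin _).mul ((lin _).mul (lin _)))
    have t2 : (fun z : ℂ => (z + (starRingEnd ℂ) a) * (z + (starRingEnd ℂ) b)) =Θ[lr] fun z => z * z := (lin' _).mul (lin' _)
    have t3 : (fun z : ℂ => (z - a) * (z - b)) =Θ[lr] fun z => z * z := (lin _).mul (lin _)
    have t4 : (fun z : ℂ => (z + 1/6) * (z + (starRingEnd ℂ) s0)) =Θ[lr] fun z => z * z := (lin' _).mul (lin' _)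
    have t5 := ((FO.mul t1.inv.1).mul (t2.mul t3).1).mul (fz_theta.mul t4).inv.1
    refine t5.congr' ?_ ?_
    · filter_upwards [lr_re, lr_norm (‖a‖+‖b‖+‖s0‖+1), (lin (1/2)).eq_zero_iff, (lin (1/6)).eq_zero_iff, lr_ne] with z hz hn i1 i2 z0
      have z1 : z - a ≠ 0 := by
        rw [sub_ne_zero]; rintro rfl; linarith [norm_nonneg b, norm_nonneg s0]
      have z2 : z - b ≠ 0 := by
        rw [sub_ne_zero]; rintro rfl; linarith [norm_nonneg a, norm_nonneg s0]
      have z3 : z - s0 ≠ 0 := by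
        rw [sub_ne_zero]; rintro rfl; linarith [norm_nonneg a, norm_nonneg b]
      have z4 : z - 1/2 ≠ 0 := by rw [Ne, i1]; exact z0
      have z5 : z - 1/6 ≠ 0 := by rw [Ne, i2]; exact z0
      have m0 := Mz_ne hz
      have m1 := x2 z hz
      have m2 := sx z hz
      have m3 := npos h0 hz
      have m4 := vne z hz
      have e := hv z (by linarith)
      rw [Dz_eq hz] at e
      have e' : fz z = (z - a) * ((z - b) * v z) / Mz z := by rw [← e]; field_simp
      rw [e', eF, hden, hnum]
      beta_reduce
      clear t1 t2 t3 t4 t5 i1 i2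
      generalize Mz z = A at *
      generalize X (2*z+1) = B at *
      generalize v z = E at *
      generalize (starRingEnd ℂ) s0 = S at *
      generalize (starRingEnd ℂ) a = a' at *
      generalize (starRingEnd ℂ) b = b' at *
      clear e e' e1 e2 e3 e4 hden hnum sx
      generalize z - 1/2 = u2 at *
      generalize z - 1/6 = u6 at *
      generalize z + 1/6 = u7 at *
      field_simp
    · filter_upwards [lr_ne] with z hz
      field_simp
  · have := normSq_pos.mpr a0
    have := normSq_pos.mpr b0
    have := normSq_pos.mpr s00
    positivity
  · have hv0 := hv 0 (by simp)
    rw [hDz] at hv0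
    have hFd : HasDerivAt Fz (2 * w : ℂ) 0 := by
      have h2 : HasDerivAt (fun z => Vz (-z)) (w * (-1) : ℂ) 0 := by
        refine HasDerivAt.comp (h₂ := Vz) (0 : ℂ) (h := fun s => -s) ?_ ?_
        · simpa using hV
        · exact (hasDerivAt_id (0:ℂ)).neg
      exact (hV.sub h2).congr_deriv (by ring)
    have hFd2 : HasDerivAt Fz (-(s0 * χ 0) / 12) 0 := by
      have k1 : DifferentiableAt ℂ (fun z => ((z - 1/2) * ((z - 1/6) * ((z - s0) * χ z)))) 0 := by fun_prop
      have k2 := (hasDerivAt_id (0:ℂ)).mul k1.hasDerivAt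
      have e : Fz = (id * fun z => ((z - 1/2) * ((z - 1/6) * ((z - s0) * χ z)))) := by funext z; rw [eF]; rfl
      rw [e]
      refine k2.congr_deriv ?_
      simp; ring
    have hχ := hFd.unique hFd2
    have v0 := vne 0 (by simp)
    have sc0 : (starRingEnd ℂ) s0 ≠ 0 := by simpa using s00
    have ac0 : (starRingEnd ℂ) a ≠ 0 := by simpa using a0
    have bc0 : (starRingEnd ℂ) b ≠ 0 := by simpa using b0
    have cx : χ 0 = -24 * w / s0 := by field_simp; linear_combination 12 * hχ
    have vx : (D0:ℂ) = a * b * v 0 := by rw [hv0]; ring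
    rw [hnum, hden]
    simp only [mul_zero, zero_add, X_one, cx]
    push_cast
    rw [← mul_conj, ← mul_conj, ← mul_conj, vx]
    field_simp
    ring
  · intro t ht
    have hz : 0 ≤ ((t:ℂ) * I).re := by simp
    set z : ℂ := t * I with hzd
    have z0 : z ≠ 0 := by simp [hzd, ht]
    have zh : ∀ c : ℂ, 0 < c.re → z - c ≠ 0 := by
      intro c hc h; have := congrArg re h; simp [hzd] at this; linarith
    have m0 := x2 z hz
    have m1 := sx z hz
    have m2 := npos h0 hz
    have m3 := vne z hz
    have m4 := zh (1/2) (by norm_num)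
    have m5 := zh (1/6) (by norm_num)
    have m6 := zh s0 h0
    have hD : Dz z ≠ 0 := Dz_line t
    have hvz := hv z (by linarith)
    have ma : z - a ≠ 0 := by intro h; rw [hvz, h, zero_mul] at hD; exact hD rfl
    have mb : z - b ≠ 0 := by intro h; rw [hvz, h, zero_mul, mul_zero] at hD; exact hD rfl
    have cj : ∀ a : ℂ, z + (starRingEnd ℂ) a = -(starRingEnd ℂ) (z - a) := by
      intro a; simp [hzd]; ring
    have V0 : Vz z ≠ 0 := mul_ne_zero m4 (mul_ne_zero m0 hD)
    have key : - (num z / den z) / z = ((normSq (z-a) * normSq (z-b) / (t^2 * (normSq (z-1/6) * normSq (z-s0))) : ℝ) : ℂ) * (Fz z / Vz z) := by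
      have zz : (t:ℂ)^2 = - z * z := by rw [hzd]; ring_nf; rw [I_sq]; ring
      have c6 : z + 1/6 = -(starRingEnd ℂ) (z - 1/6) := by
        rw [← cj]; simp [map_ofNat]
      push_cast
      rw [← mul_conj, ← mul_conj, ← mul_conj, ← mul_conj, zz, hnum, hden, eF, Vz, hvz]
      simp only []
      rw [c6] at m1 ⊢
      rw [cj] at m2
      rw [cj, cj, cj]
      generalize X (2*z+1) = B at *
      generalize v z = E at *
      generalize (starRingEnd ℂ) (z - s0) = S at *
      generalize (starRingEnd ℂ) (z - a) = a' at *
      generalize (starRingEnd ℂ) (z - b) = b' at *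
      generalize (starRingEnd ℂ) (z - 1/6) = c' at *
      have m1' : c' ≠ 0 := by simpa using m1
      have m2' : S ≠ 0 := by simpa using m2
      clear e1 e2 e3 e4 hv eF cj c6 hden hnum
      generalize z - 1/2 = u2 at *
      generalize z - 1/6 = u6 at *
      field_simp
    have key' : -(num z / den z) / z = _ := key
    rw [key', re_ofReal_mul]
    refine mul_nonneg ?_ ?_
    · have := normSq_nonneg (z-a)
      have := normSq_nonneg (z-b)
      have := normSq_nonneg (z-1/6)
      have := normSq_nonneg (z-s0)
      positivity
    · have c : Vz (-z) = (starRingEnd ℂ) (Vz z) := by rw [← Vz_conj]; simp [hzd]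
      rw [Fz, c, sub_div, div_self V0, sub_re, one_re]
      have : ‖(starRingEnd ℂ) (Vz z) / Vz z‖ = 1 := by
        rw [norm_div, RCLike.norm_conj, div_self (by simpa using V0)]
      have := (le_abs_self _).trans (abs_re_le_norm ((starRingEnd ℂ) (Vz z) / Vz z))
      linarith

end G2

namespace G2
open MeasureTheory Set Filter Topology Asymptotics
lemma Fz_neg (z : ℂ) : Fz (-z) = - Fz z := by unfold Fz; rw [neg_neg]; ring

lemma xi2 : completedRiemannZeta 2 = (1 + aa) / 2 := by
  have := X_two
  rw [X_eq (by norm_num) (by norm_num)] at this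
  linear_combination this / 2

lemma F_form (s : ℂ) : Fz (s - 1/2) =
    (s-1) * (X (2*s) * (X (s+1) * X (3*s) * ((1 + aa * (s-1)) * ((s-1)*(3*s-2))) - X s * X (3*s-1) * ((s+1)*(s-2))
      - 2 * X s * X (3*s) * ((s-1)*(s-2))))
    + s * (X (2*s-1) * (X (s-1) * X (3*s-2) * ((1 - aa * s) * (-s*(1-3*s))) - X s * X (3*s-1) * ((s+1)*(s-2))
      - 2 * X s * X (3*s-2) * (s*(s+1)))) := by
  unfold Fz Vz Dz
  rw [show 2*(-(s-1/2))+1 = 1 - (2*s-1) by ring, show -(s-1/2)+3/2 = 1-(s-1) by ring, show 3*(-(s-1/2))+3/2 = 1-(3*s-2) by ring,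
    show -(s-1/2)+1/2 = 1 - s by ring, show 3*(-(s-1/2))+1/2 = 1-(3*s-1) by ring]
  simp only [X_one_sub]
  rw [show 2*(s-1/2)+1 = 2*s by ring, show (s-1/2)+3/2 = s+1 by ring, show 3*(s-1/2)+3/2 = 3*s by ring,
    show (s-1/2)+1/2 = s by ring, show 3*(s-1/2)+1/2 = 3*s-1 by ring]
  ring

lemma F_zero {s : ℂ} (hs : s ∉ S1) (hzero : xiG2Plong s = 0) : Fz (s - 1/2) = 0 := by
  simp only [S1, mem_insert_iff, mem_singleton_iff, not_or] at hs
  obtain ⟨n1, n2, n3, n4, n5, n6, n7⟩ := hs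
  have a1 : s + 1 ≠ 0 := fun h => n1 (by linear_combination h)
  have a2 : s - 1 ≠ 0 := fun h => n6 (by linear_combination h)
  have a3 : 3 * s - 1 ≠ 0 := fun h => n3 (by linear_combination h / 3)
  have a4 : 2 * s - 1 ≠ 0 := fun h => n4 (by linear_combination h / 2)
  have a5 : 3 * s - 2 ≠ 0 := fun h => n5 (by linear_combination h / 3)
  have a6 : s - 2 ≠ 0 := fun h => n7 (by linear_combination h)
  rw [F_form,
    X_eq (s := 2*s) (fun h => n2 (by linear_combination h/2)) (fun h => n4 (by linear_combination h/2)),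
    X_eq (s := s+1) a1 (fun h => n2 (by linear_combination h)),
    X_eq (s := 3*s) (fun h => n2 (by linear_combination h/3)) (fun h => n3 (by linear_combination h/3)),
    X_eq (s := s) n2 n6,
    X_eq (s := 3*s-1) a3 (fun h => n5 (by linear_combination h/3)),
    X_eq (s := 2*s-1) a4 (fun h => n6 (by linear_combination h/2)),
    X_eq (s := s-1) a2 (fun h => n7 (by linear_combination h)),
    X_eq (s := 3*s-2) a5 (fun h => n6 (by linear_combination h/3))]
  rw [xiG2Plong, xi2, show 2*s-2 = 2*(s-1) by ring, show 3*s-3 = 3*(s-1) by ring] at hzero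
  generalize completedRiemannZeta (2*s) = x1 at *
  generalize completedRiemannZeta (s+1) = x2 at *
  generalize completedRiemannZeta (3*s) = x3 at *
  generalize completedRiemannZeta s = x4 at *
  generalize completedRiemannZeta (3*s-1) = x5 at *
  generalize completedRiemannZeta (2*s-1) = x6 at *
  generalize completedRiemannZeta (s-1) = x7 at *
  generalize completedRiemannZeta (3*s-2) = x8 at *
  have key : ∀ Z : ℂ, Z = 0 → 12 * (2*s-1) * s^3 * (s-1)^3 * (3*s-1) * (3*s-2) * (s+1) * (s-2) * Z = 0 := by
    rintro Z rfl; ring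
  rw [← key _ hzero]
  have a3' : s * 3 - 1 ≠ 0 := by rwa [mul_comm]
  have a5' : s * 3 - 2 ≠ 0 := by rwa [mul_comm]
  field_simp
  ring

end G2

theorem xiG2Plong_riemann_hypothesis (s : ℂ) (hs : s ∉ S1) (hzero : xiG2Plong s = 0) :
    s.re = 1 / 2 := by
  have h := G2.F_zero hs hzero
  simp only [S1, Set.mem_insert_iff, Set.mem_singleton_iff, not_or] at hs
  obtain ⟨n1, n2, n3, n4, n5, n6, n7⟩ := hs
  rcases lt_trichotomy s.re (1/2) with hl | hl | hl
  · exfalso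
    have h' : G2.Fz (1/2 - s) = 0 := by
      rw [show 1/2 - s = -(s - 1/2) by ring, G2.Fz_neg, h, neg_zero]
    rcases G2.stepB (by norm_num; linarith) h' with e | e
    · exact n2 (by linear_combination -e)
    · exact n3 (by linear_combination -e)
  · exact hl
  · exfalso
    rcases G2.stepB (by norm_num; linarith) h with e | e
    · exact n6 (by linear_combination e)
    · exact n5 (by linear_combination e)
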